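/- arXiv:2306.16249 — 3 statements merged into one kernel-verified Lean document; each statement's English description precedes it below -/
import Mathlib

section
/- Let k be a field and R a principal ideal domain containing k. If A is an 𝔸²-fibration over R which is also an 𝔸²-form over R with respect to k, then A is isomorphic as an R-algebra to a polynomial ring in two variables over R. -/
set_option synthInstance.maxHeartbeats 1000000
set_option maxHeartbeats 1000000

open TensorProduct

/-- The residue field `κ(p)` of a commutative ring at a prime ideal `p`. -/
noncomputable abbrev ResidueFieldAt {R : Type*} [CommRing R] (p : Ideal R) [p.IsPrime] :=
  IsLocalRing.ResidueField (Localization.AtPrime p)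

/-- `A` is an `𝔸²`-fibration over `R`: a finitely generated flat `R`-algebra all of whose
fibers `A ⊗_R κ(p)` are polynomial rings in two variables over `κ(p)`. -/
def IsA2Fibration (R A : Type*) [CommRing R] [CommRing A] [Algebra R A] : Prop :=
  Algebra.FiniteType R A ∧ Module.Flat R A ∧
  ∀ (p : Ideal R) [p.IsPrime],
    Nonempty ((ResidueFieldAt p ⊗[R] A) ≃ₐ[ResidueFieldAt p]
      MvPolynomial (Fin 2) (ResidueFieldAt p))

/-!
Over the fraction field `K` of `R`, the fibration `A` becomes a polynomial ring in two variables.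
Clearing denominators gives `x, y ∈ A` that are coordinates over `K`, and the Jacobian of `x` and
`y`, multiplied by a fixed denominator, is a nonzero constant of `R`. If `R[x, y] ≠ A`, then some
`π a ∈ R[x, y]` with `π` prime and `a ∈ A` does not lie in `π R[x, y]`, i.e. `x` and `y` become
algebraically dependent in the fibre of `A` over `π`. It suffices to replace `x, y` in this case by
such a pair whose Jacobian has one factor `π` less: as `R` is a principal ideal domain, this can
only be repeated finitely often.

This is where the form is used. Let `V` be a valuation ring of the algebraic closure of `K` that
dominates `R` at `π`. Since `V` is integrally closed, the trivialization of `A` over an integral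
extension of `R` induces one over `V`. So `x, y` are two polynomials over `V` which are coordinates
over its fraction field but whose reductions over the residue field `κ` are dependent. Their
coefficients lie in a finite extension of `K`, on which `V` induces a discrete valuation ring `O`
with a uniformizer `ϖ`, by the Krull–Akizuki theorem. The lattice `O[x, y]` is obtained from the
polynomial ring over `O` by finitely many steps that replace `O[a, b]` by `O[ϖ a, b]`, and the last
step shows that the reductions of `x` and `y` are `α(0, G)` and `β(0, G)` for an automorphism
`(α, β)` of the plane over `κ` and some polynomial `G`. By the theorem of Jung and van der Kulk,
subtracting multiples of powers of one from the other makes one of the two constant. The multiples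
are quotients of leading coefficients, hence defined over the residue field of `π`, and the steps
lift to `R`. Now `π` divides a translate of one coordinate in `A`, and dividing by it removes a
factor `π` from the Jacobian.
-/

namespace AffinePlane

open Polynomial Polynomial.Bivariate

section Evaluation

variable {S B B₂ : Type*} [CommRing S] [CommRing B] [Algebra S B] [CommRing B₂] [Algebra S B₂]

/-- Evaluation of a bivariate polynomial at a pair. This is `Polynomial.aevalAeval`, which is not
used directly because `simp` unfolds it. -/
noncomputable def ev (x y : B) : S[X][Y] →ₐ[S] B := aevalAeval x y

@[simp] theorem ev_C (x y : B) (p : S[X]) : ev x y (C p) = aeval x p := aevalAeval_C x y p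

@[simp] theorem ev_Y (x y : B) : ev x y (Y : S[X][Y]) = y := aevalAeval_Y x y

theorem ev_swap (x y : B) (H : S[X][Y]) : ev x y (Bivariate.swap H) = ev y x H :=
  Bivariate.aevalAeval_swap x y H

theorem eq_ev (φ : S[X][Y] →ₐ[S] B) : φ = ev (φ (C X)) (φ Y) := by
  ext <;> simp

theorem map_ev (φ : B →ₐ[S] B₂) (x y : B) (H : S[X][Y]) :
    φ (ev x y H) = ev (φ x) (φ y) H := by
  have h : φ.comp (ev x y) = ev (φ x) (φ y) := by ext <;> simp
  exact DFunLike.congr_fun h H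

theorem ev_self (H : S[X][Y]) : ev (C X : S[X][Y]) Y H = H := by
  simpa using (DFunLike.congr_fun (eq_ev (AlgHom.id S S[X][Y])) H).symm

theorem ev_ev (x y : B) (P Q H : S[X][Y]) :
    ev x y (ev P Q H) = ev (ev x y P) (ev x y Q) H := map_ev _ _ _ _

theorem ev_comp (x y : B) (H Q : S[X][Y]) : ev x y (H.comp Q) = ev x (ev x y Q) H := by
  have h : ((ev x y).toRingHom.comp (compRingHom Q)) = (ev x (ev x y Q)).toRingHom := by
    ext <;> simp
  exact DFunLike.congr_fun h H

theorem ev_mem {L : Subalgebra S B} {x y : B} (hx : x ∈ L) (hy : y ∈ L) (H : S[X][Y]) :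
    ev x y H ∈ L := by
  have h : ev x y H = L.val (ev (⟨x, hx⟩ : L) ⟨y, hy⟩ H) :=
    (map_ev L.val (⟨x, hx⟩ : L) ⟨y, hy⟩ H).symm
  rw [h]
  exact Subtype.property _

theorem subalgebra_eq_top_of_mem {L : Subalgebra S S[X][Y]} (hX : C X ∈ L) (hY : Y ∈ L) :
    L = ⊤ :=
  eq_top_iff.2 fun H _ => ev_self H ▸ ev_mem hX hY H

theorem range_ev (x y : B) : (ev (S := S) x y).range = Algebra.adjoin S {x, y} := by
  have h : Algebra.adjoin S {(C X : S[X][Y]), Y} = ⊤ :=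
    subalgebra_eq_top_of_mem (Algebra.subset_adjoin (by simp)) (Algebra.subset_adjoin (by simp))
  rw [← Algebra.map_top, ← h, AlgHom.map_adjoin]
  simp [Set.image_insert_eq]

theorem mem_adjoin_pair {x y b : B} :
    b ∈ Algebra.adjoin S {x, y} ↔ ∃ H : S[X][Y], ev x y H = b := by
  rw [← range_ev]; rfl

variable {T : Type*} [CommRing T]

/-- Change of coefficients in a bivariate polynomial. -/
noncomputable def mapBivariate (σ : S →+* T) : S[X][Y] →+* T[X][Y] :=
  mapRingHom (mapRingHom σ)

@[simp] theorem mapBivariate_Y (σ : S →+* T) : mapBivariate σ Y = Y := by simp [mapBivariate]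

@[simp] theorem mapBivariate_C (σ : S →+* T) (p : S[X]) :
    mapBivariate σ (C p) = C (p.map σ) := by
  simp [mapBivariate]

theorem coeff_mapBivariate (σ : S →+* T) (H : S[X][Y]) (i j : ℕ) :
    ((mapBivariate σ H).coeff j).coeff i = σ ((H.coeff j).coeff i) := by
  simp [mapBivariate]

theorem mapBivariate_injective {σ : S →+* T} (h : Function.Injective σ) :
    Function.Injective (mapBivariate σ) :=
  Polynomial.map_injective _ (Polynomial.map_injective _ h)

theorem mapBivariate_mapBivariate {U : Type*} [CommRing U] (σ : S →+* T) (τ : T →+* U)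
    (H : S[X][Y]) : mapBivariate τ (mapBivariate σ H) = mapBivariate (τ.comp σ) H := by
  ext; simp [coeff_mapBivariate]

theorem ringHom_ev {B B₂ : Type*} [CommRing B] [Algebra S B] [CommRing B₂] [Algebra T B₂]
    (σ : S →+* T) (φ : B →+* B₂) (h : ∀ s, φ (algebraMap S B s) = algebraMap T B₂ (σ s))
    (x y : B) (H : S[X][Y]) : φ (ev x y H) = ev (φ x) (φ y) (mapBivariate σ H) := by
  have key : φ.comp (ev x y : S[X][Y] →ₐ[S] B).toRingHom
      = (ev (φ x) (φ y) : T[X][Y] →ₐ[T] B₂).toRingHom.comp (mapBivariate σ) := by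
    ext <;> simp [h]
  exact DFunLike.congr_fun key H

theorem ev_mapBivariate {B : Type*} [CommRing B] [Algebra S T] [Algebra S B] [Algebra T B]
    [IsScalarTower S T B] (x y : B) (H : S[X][Y]) :
    ev x y (mapBivariate (algebraMap S T) H) = ev x y H :=
  (ringHom_ev (algebraMap S T) (RingHom.id B) (IsScalarTower.algebraMap_apply S T B) x y H).symm

theorem mapBivariate_ev (σ : S →+* T) (P Q H : S[X][Y]) :
    mapBivariate σ (ev P Q H)
      = ev (mapBivariate σ P) (mapBivariate σ Q) (mapBivariate σ H) :=
  ringHom_ev σ (mapBivariate σ) (fun s => by simp [Polynomial.algebraMap_apply]) _ _ _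

end Evaluation

/-! ### Tameness of the automorphisms of the plane -/

section BivariateLemmas

theorem coeff_coeff_swap {S : Type*} [CommRing S] (H : S[X][Y]) (i j : ℕ) :
    ((Bivariate.swap H).coeff i).coeff j = (H.coeff j).coeff i := by
  induction H using Polynomial.induction_on' with
  | add p q hp hq => simp only [map_add, coeff_add, hp, hq]
  | monomial n a =>
    induction a using Polynomial.induction_on' with
    | add p q hp hq => simp only [map_add, coeff_add, hp, hq]
    | monomial m r =>
      rw [Bivariate.swap_monomial_monomial]
      simp only [coeff_monomial]
      split_ifs <;> simp_all [coeff_monomial]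

variable {F : Type*} [Field F]

theorem rootMultiplicity_le_natDegree (P : F[X]) (c : F) :
    P.rootMultiplicity c ≤ P.natDegree := by
  classical
  rw [← count_roots]
  exact (Multiset.count_le_card _ _).trans P.card_roots'

theorem exists_coeff_comp_ne_zero {H : F[X][Y]}
    (hH : H.map (evalRingHom 0) ≠ 0) (c : F) :
    ∃ j ≤ (H.map (evalRingHom 0)).rootMultiplicity c,
      ((H.comp (Y + C (C c))).coeff j).coeff 0 ≠ 0 := by
  refine ⟨_, le_rfl, ?_⟩
  have hmap : (H.comp (Y + C (C c))).map (evalRingHom 0)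
      = (H.map (evalRingHom 0)).comp (X + C c) := by
    rw [Polynomial.map_comp]; simp
  have hne : (H.map (evalRingHom 0)).comp (X + C c) ≠ 0 := by
    rwa [Ne, comp_X_add_C_eq_zero_iff]
  rw [coeff_zero_eq_eval_zero, ← coe_evalRingHom, ← coeff_map, hmap,
    rootMultiplicity_eq_natTrailingDegree]
  exact trailingCoeff_nonzero_iff_nonzero.2 hne

/-- `H₁` is the strict transform of `H` under the blow-up of the origin. -/
theorem exists_comp_C_X_mul_Y_eq {H : F[X][Y]} {i j : ℕ}
    (hij : (H.coeff j).coeff i ≠ 0) :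
    ∃ m ≤ i + j, ∃ H₁ : F[X][Y], H.comp (C X * Y) = C X ^ m * H₁ ∧
      H₁.map (evalRingHom 0) ≠ 0 ∧ (H₁.map (evalRingHom 0)).natDegree ≤ m := by
  have hcoeff : ∀ l, (H.comp (C X * Y)).coeff l = H.coeff l * X ^ l :=
    fun l => comp_C_mul_X_coeff
  have hne : H.comp (C X * Y) ≠ 0 := fun h => by
    have hj : H.coeff j * X ^ j = 0 := by rw [← hcoeff, h, coeff_zero]
    have hj' : H.coeff j ≠ 0 := fun h => hij (by simp [h])
    exact mul_ne_zero hj' (pow_ne_zero j X_ne_zero) hj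
  obtain ⟨H₁, hH₁, hdvd⟩ :=
    (FiniteMultiplicity.of_prime_left (prime_C_iff.2 prime_X) hne).exists_eq_pow_mul_and_not_dvd
  set m := multiplicity (C X : F[X][Y]) (H.comp (C X * Y))
  have hmul : ∀ l, H.coeff l * X ^ l = X ^ m * H₁.coeff l := fun l => by
    rw [← hcoeff, hH₁, ← C_pow, coeff_C_mul]
  refine ⟨m, ?_, H₁, hH₁, fun h => hdvd ?_, ?_⟩
  · by_contra! hm
    have hX : X ^ m ∣ H.coeff j * X ^ j := ⟨_, hmul j⟩
    exact hij (by simpa using X_pow_dvd_iff.1 hX _ hm)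
  · rw [C_dvd_iff_dvd_coeff]
    intro l
    have hl : (H₁.map (evalRingHom 0)).coeff l = 0 := by rw [h, coeff_zero]
    rwa [X_dvd_iff, coeff_zero_eq_eval_zero, ← coe_evalRingHom, ← coeff_map]
  · rw [natDegree_le_iff_coeff_eq_zero]
    intro l hl
    obtain ⟨e, rfl⟩ := Nat.exists_eq_add_of_lt hl
    have he : H₁.coeff (m + e + 1) = H.coeff (m + e + 1) * X ^ (e + 1) := by
      apply mul_left_cancel₀ (pow_ne_zero m (X_ne_zero (R := F)))
      rw [← hmul]; ring
    rw [coeff_map, he]; simp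

end BivariateLemmas

theorem le_map_aeval {F M : Type*} [CommRing F] [Field M] [Algebra F M]
    {v : AddValuation M (WithTop ℤ)} (hv : ∀ c : F, 0 ≤ v (algebraMap F M c)) {a : M}
    (ha : 0 ≤ v a) (h : F[X]) : 0 ≤ v (aeval a h) := by
  rw [aeval_eq_sum_range]
  refine v.map_le_sum fun i _ => ?_
  rw [Algebra.smul_def, v.map_mul, v.map_pow]
  exact add_nonneg (hv _) (nsmul_nonneg ha i)

/-- A valuation on an extension `M` of a field `F`, trivial on `F`, together with two derivations
which are compatible with it in the way `∂/∂x` and `∂/∂y` are with `-deg_y`. Every residue class is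
either represented by a constant or residually transcendental over `F`. -/
structure JacobianValuation (F M : Type*) [Field F] [Field M] [Algebra F M] where
  v : AddValuation M (WithTop ℤ)
  dx : Derivation F M M
  dy : Derivation F M M
  v_algebraMap : ∀ c : F, c ≠ 0 → v (algebraMap F M c) = 0
  le_v_dx : ∀ a, v a ≤ v (dx a)
  le_v_dy : ∀ a, v a + 1 ≤ v (dy a)
  residue : ∀ a, 0 ≤ v a → (∃ c : F, 1 ≤ v (a - algebraMap F M c)) ∨
    ∀ h : F[X], h ≠ 0 → v (aeval a h) = 0

namespace JacobianValuation

variable {F M : Type*} [Field F] [Field M] [Algebra F M] (D : JacobianValuation F M)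

/-- The Jacobian determinant of a pair with respect to the two derivations. -/
def J (a b : M) : M := D.dx a * D.dy b - D.dy a * D.dx b

variable {D}

theorem v_algebraMap_nonneg (c : F) : 0 ≤ D.v (algebraMap F M c) := by
  by_cases h : c = 0
  · simp [h, D.v.map_zero]
  · exact (D.v_algebraMap c h).ge

theorem v_pow_nonneg {a : M} (ha : 0 ≤ D.v a) (n : ℕ) : 0 ≤ D.v (a ^ n) := by
  rw [D.v.map_pow]; exact nsmul_nonneg ha n

theorem v_aeval_nonneg {a : M} (ha : 0 ≤ D.v a) (h : F[X]) : 0 ≤ D.v (aeval a h) :=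
  le_map_aeval v_algebraMap_nonneg ha h

theorem J_swap (a b : M) : D.J b a = - D.J a b := by
  simp only [J]; ring

theorem J_sub_algebraMap (a b : M) (c : F) : D.J a (b - algebraMap F M c) = D.J a b := by
  simp [J]

theorem J_div {a b : M} (ha : a ≠ 0) : D.J a (b / a) = D.J a b / a := by
  simp only [J, Derivation.leibniz_div, smul_eq_mul]
  field_simp
  ring

theorem le_v_J (a b : M) : D.v a + D.v b + 1 ≤ D.v (D.J a b) := by
  refine D.v.map_le_sub ?_ ?_ <;> rw [D.v.map_mul]
  · rw [add_assoc]
    exact add_le_add (D.le_v_dx a) (D.le_v_dy b)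
  · rw [add_right_comm]
    exact add_le_add (D.le_v_dy a) (D.le_v_dx b)

theorem le_v_ev_sub {z w : M} (hz : 1 ≤ D.v z) (hw : 0 ≤ D.v w) (H : F[X][Y]) :
    1 ≤ D.v (ev z w H - aeval w (H.map (evalRingHom 0))) := by
  induction H using Polynomial.induction_on' with
  | add p q hp hq =>
    rw [Polynomial.map_add, map_add, map_add, add_sub_add_comm]
    exact D.v.map_le_add hp hq
  | monomial n c =>
    obtain ⟨q, hq⟩ : X ∣ c - C (eval 0 c) := by
      rw [X_dvd_iff]; simp [coeff_zero_eq_eval_zero]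
    have hc : aeval z c - algebraMap F M (eval 0 c) = z * aeval z q := by
      rw [← aeval_C (x := z), ← map_sub, hq]; simp
    have key : ev z w (monomial n c) - aeval w ((monomial n c).map (evalRingHom 0))
        = z * (aeval z q * w ^ n) := by
      rw [← mul_assoc, ← hc, ← C_mul_X_pow_eq_monomial]
      simp [sub_mul]
    rw [key, D.v.map_mul, D.v.map_mul]
    exact le_add_of_le_of_nonneg hz
      (add_nonneg (v_aeval_nonneg (zero_le_one.trans hz) q) (v_pow_nonneg hw n))

theorem v_ev_eq_zero {z w : M} (hz : 1 ≤ D.v z) (hw : 0 ≤ D.v w)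
    (ht : ∀ h : F[X], h ≠ 0 → D.v (aeval w h) = 0) {H : F[X][Y]}
    (hH : H.map (evalRingHom 0) ≠ 0) : D.v (ev z w H) = 0 := by
  rw [← ht _ hH]
  refine D.v.map_eq_of_lt_sub ?_
  rw [ht _ hH]
  exact zero_lt_one.trans_le (le_v_ev_sub hz hw H)

theorem ne_top_of_v_J_ne_top {a b : M} (h : D.v (D.J a b) ≠ ⊤) : D.v a ≠ ⊤ ∧ D.v b ≠ ⊤ := by
  constructor <;> rintro h0 <;> refine h (top_unique (le_trans ?_ (le_v_J a b))) <;> simp [h0]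

theorem v_div_nonneg {z w : M} (hz : z ≠ 0) (h : D.v z ≤ D.v w) : 0 ≤ D.v (w / z) := by
  lift D.v z to ℤ using D.v.ne_top_iff.2 hz with a ha
  have hw : D.v w = a + D.v (w / z) := by rw [ha, ← D.v.map_mul, mul_div_cancel₀ _ hz]
  rw [hw] at h
  by_contra! hlt
  exact absurd h (not_le_of_gt ((WithTop.add_lt_add_left WithTop.coe_ne_top hlt).trans_eq
    (add_zero _)))

theorem v_J_div {z w : M} (hz : z ≠ 0) : D.v (D.J z w) = D.v z + D.v (D.J z (w / z)) := by
  rw [J_div hz, ← D.v.map_mul, mul_div_cancel₀ _ hz]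

theorem v_ev_le_of_comp_eq {z w : M} {H H₁ : F[X][Y]} {a : ℤ} {d m n : ℕ} (hz : D.v z = a)
    (h : H.comp (C X * Y) = C X ^ m * H₁) (hmd : m ≤ d)
    (hv : D.v (ev z (w / z) H₁) ≤ ((m * (n - a) : ℤ) : WithTop ℤ)) :
    D.v (ev z w H) ≤ ((d * n : ℤ) : WithTop ℤ) := by
  have hz0 : z ≠ 0 := D.v.ne_top_iff.1 (hz ▸ WithTop.coe_ne_top)
  have hev : ev z w H = z ^ m * ev z (w / z) H₁ := by
    simpa [ev_comp, mul_div_cancel₀ _ hz0] using congrArg (ev z (w / z)) h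
  have hmn : m * a + m * (n - a) ≤ (d * n : ℤ) := by
    rw [← mul_add, add_sub_cancel]
    exact_mod_cast Nat.mul_le_mul_right n hmd
  calc D.v (ev z w H) = m • (a : WithTop ℤ) + D.v (ev z (w / z) H₁) := by
        rw [hev, D.v.map_mul, D.v.map_pow, hz]
    _ ≤ m • (a : WithTop ℤ) + ((m * (n - a) : ℤ) : WithTop ℤ) := by gcongr
    _ = ((m * a + m * (n - a) : ℤ) : WithTop ℤ) := by
        rw [← WithTop.coe_nsmul, ← WithTop.coe_add, nsmul_eq_mul]
    _ ≤ ((d * n : ℤ) : WithTop ℤ) := WithTop.coe_le_coe.2 hmn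

-- The proof blows up: it replaces `(z, w)` by `(z, w / z - c)`, where `c` is the residue of
-- `w / z`. This lowers the value of the Jacobian by `v z`.
theorem v_ev_le (n : ℕ) {z w : M} {d i j : ℕ} {H : F[X][Y]} (hz : 1 ≤ D.v z) (hw : 1 ≤ D.v w)
    (hJ : D.v (D.J z w) ≤ ((n + 2 : ℤ) : WithTop ℤ)) (hij : (H.coeff j).coeff i ≠ 0)
    (hd : i + j ≤ d) : D.v (ev z w H) ≤ ((d * n : ℤ) : WithTop ℤ) := by
  induction n using Nat.strong_induction_on generalizing z w d i j H with | _ n ih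
  wlog hzw : D.v z ≤ D.v w generalizing z w i j H with key
  · rw [← ev_swap]
    exact key hw hz (by rwa [J_swap, D.v.map_neg]) ((coeff_coeff_swap H i j).symm ▸ hij)
      (by omega) (le_of_not_ge hzw)
  have hJtop : D.v (D.J z w) ≠ ⊤ := ne_top_of_le_ne_top WithTop.coe_ne_top hJ
  have hz0 : z ≠ 0 := D.v.ne_top_iff.1 (ne_top_of_v_J_ne_top hJtop).1
  obtain ⟨m, hm, H₁, hH₁, hP, hPm⟩ := exists_comp_C_X_mul_Y_eq hij
  have hw₁ : 0 ≤ D.v (w / z) := v_div_nonneg hz0 hzw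
  have hJ₁ := le_v_J (D := D) z (w / z)
  rw [v_J_div hz0] at hJ hJtop
  lift D.v (D.J z (w / z)) to ℤ using (WithTop.add_ne_top.1 hJtop).2 with e he
  lift D.v z to ℤ using D.v.ne_top_iff.2 hz0 with a ha
  have ha1 : 1 ≤ a := by exact_mod_cast hz
  have hae : a + e ≤ n + 2 := by
    rw [← WithTop.coe_add] at hJ; exact WithTop.coe_le_coe.1 hJ
  have hea : a + 1 ≤ e := by
    have : ((a + 1 : ℤ) : WithTop ℤ) ≤ e :=
      le_trans (by push_cast; gcongr; exact le_add_of_nonneg_right hw₁) hJ₁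
    exact_mod_cast this
  refine v_ev_le_of_comp_eq ha.symm hH₁ (hm.trans hd) ?_
  rcases D.residue _ hw₁ with ⟨c, hc⟩ | ht
  · obtain ⟨l, hl, hlc⟩ := exists_coeff_comp_ne_zero hP c
    have hev : ev z (w / z - algebraMap F M c) (H₁.comp (Y + C (C c))) = ev z (w / z) H₁ := by
      simp [ev_comp]
    have hlm : 0 + l ≤ m := by
      rw [zero_add]
      exact (hl.trans (rootMultiplicity_le_natDegree _ _)).trans hPm
    have hJc : D.v (D.J z (w / z - algebraMap F M c)) ≤ (((e - 2).toNat + 2 : ℤ) : WithTop ℤ) := by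
      rw [J_sub_algebraMap, ← he]
      exact WithTop.coe_le_coe.2 (by omega)
    have hle := ih (e - 2).toNat (by omega) (ha ▸ hz) hc hJc hlc hlm
    rw [hev] at hle
    exact hle.trans (WithTop.coe_le_coe.2 (mul_le_mul_of_nonneg_left (by omega) (by positivity)))
  · rw [v_ev_eq_zero (ha ▸ hz) hw₁ ht hP]
    exact WithTop.coe_le_coe.2 (mul_nonneg (by positivity) (by omega))

end JacobianValuation

/-! ### The valuation `-deg_y` on `F(x, y)` -/

theorem exists_derivation_extend {F B K : Type*} [CommRing F] [CommRing B]
    [Algebra F B] [Field K] [Algebra F K] [Algebra B K] [IsScalarTower F B K] [IsFractionRing B K]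
    (d : Derivation F B B) :
    ∃ d' : Derivation F K K, ∀ b, d' (algebraMap B K b) = algebraMap B K (d b) := by
  have : Algebra.FormallyEtale B K := .of_isLocalization (nonZeroDivisors B)
  let l : Ω[K⁄F] →ₗ[K] K :=
    ((Algebra.linearMap B K) ∘ₗ d.liftKaehlerDifferential).liftBaseChange K ∘ₗ
      (KaehlerDifferential.tensorKaehlerEquivOfFormallyEtale F B K).symm.toLinearMap
  refine ⟨l.compDer (KaehlerDifferential.D F K), fun b => ?_⟩
  simp [l, KaehlerDifferential.tensorKaehlerEquivOfFormallyEtale_symm_D_algebraMap]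

theorem le_map_derivation {F B K : Type*} [CommRing F] [CommRing B] [IsDomain B]
    [Field K] [Algebra F K] [Algebra B K] [IsFractionRing B K]
    {v : AddValuation K (WithTop ℤ)} {d : Derivation F K K} {e : WithTop ℤ}
    (h : ∀ b, v (algebraMap B K b) + e ≤ v (d (algebraMap B K b))) (a : K) :
    v a + e ≤ v (d a) := by
  obtain ⟨p, q, hq, rfl⟩ := IsFractionRing.div_surjective (A := B) a
  have hq0 : algebraMap B K q ≠ 0 := by simpa using nonZeroDivisors.ne_zero hq
  set p' := algebraMap B K p
  set q' := algebraMap B K q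
  have hd : q' ^ 2 * d (p' / q') = q' * d p' - p' * d q' := by
    rw [Derivation.leibniz_div, smul_eq_mul, smul_eq_mul, smul_eq_mul]
    field_simp
  have key : v (q' ^ 2) + (v (p' / q') + e) ≤ v (q' ^ 2) + v (d (p' / q')) := by
    rw [← v.map_mul, hd, ← add_assoc, ← v.map_mul, show q' ^ 2 * (p' / q') = p' * q' by field_simp,
      v.map_mul]
    refine v.map_le_sub ?_ ?_ <;> rw [v.map_mul]
    · rw [add_comm (v p'), add_assoc]
      exact add_le_add_right (h p) _
    · rw [add_assoc]
      exact add_le_add_right (h q) _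
  exact (WithTop.add_le_add_iff_left (v.ne_top_iff.2 (pow_ne_zero 2 hq0))).1 key

section RatFunc

variable (L : Type*) [Field L]

open Classical in
/-- The valuation of `L(y)` at infinity, in additive form. -/
noncomputable def valuationAtInfty : AddValuation (RatFunc L) (WithTop ℤ) :=
  AddValuation.of (fun a => if a = 0 then ⊤ else ((-a.intDegree : ℤ) : WithTop ℤ)) (by simp)
    (by simp)
    (fun a b => by
      by_cases ha : a = 0
      · simp [ha]
      by_cases hb : b = 0
      · simp [hb]
      by_cases hab : a + b = 0
      · simp [hab]
      simp only [ha, hb, hab, if_false]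
      have := RatFunc.intDegree_add_le hb hab
      rw [← WithTop.coe_min]
      exact WithTop.coe_le_coe.2 (by omega))
    (fun a b => by
      by_cases ha : a = 0
      · simp [ha]
      by_cases hb : b = 0
      · simp [hb]
      simp only [ha, hb, mul_eq_zero, or_self, if_false, RatFunc.intDegree_mul ha hb]
      rw [← WithTop.coe_add, neg_add])

variable {L}

theorem valuationAtInfty_algebraMap {p : L[X]} (hp : p ≠ 0) :
    valuationAtInfty L (algebraMap L[X] (RatFunc L) p) = ((-p.natDegree : ℤ) : WithTop ℤ) := by
  have h : algebraMap L[X] (RatFunc L) p ≠ 0 := by simpa using hp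
  simp only [valuationAtInfty, AddValuation.of_apply, if_neg h, RatFunc.intDegree_polynomial]

theorem le_valuationAtInfty_of_degree_lt {p : L[X]} {n : ℕ} (h : p.degree < n) :
    ((1 - n : ℤ) : WithTop ℤ) ≤ valuationAtInfty L (algebraMap L[X] (RatFunc L) p) := by
  by_cases hp : p = 0
  · simp [hp, AddValuation.map_zero]
  · rw [valuationAtInfty_algebraMap hp, WithTop.coe_le_coe]
    rw [degree_eq_natDegree hp, Nat.cast_lt] at h
    omega

theorem valuationAtInfty_C {c : L} (hc : c ≠ 0) : valuationAtInfty L (RatFunc.C c) = 0 := by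
  rw [← RatFunc.algebraMap_C, valuationAtInfty_algebraMap (by simpa using hc)]
  simp

theorem valuationAtInfty_C_nonneg (c : L) : 0 ≤ valuationAtInfty L (RatFunc.C c) := by
  by_cases hc : c = 0
  · simp [hc, AddValuation.map_zero]
  · exact (valuationAtInfty_C hc).ge

theorem exists_one_le_valuationAtInfty_sub {a : RatFunc L} (ha : 0 ≤ valuationAtInfty L a) :
    ∃ ρ : L, 1 ≤ valuationAtInfty L (a - RatFunc.C ρ) := by
  obtain ⟨p, q, hq, rfl⟩ := IsFractionRing.div_surjective (A := L[X]) a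
  have hq0 : q ≠ 0 := nonZeroDivisors.ne_zero hq
  have hq' : algebraMap L[X] (RatFunc L) q ≠ 0 := by simpa using hq0
  let ρ : L := p.coeff q.natDegree / q.leadingCoeff
  have hmul : algebraMap L[X] (RatFunc L) q * (algebraMap L[X] (RatFunc L) p /
      algebraMap L[X] (RatFunc L) q - RatFunc.C ρ) = algebraMap L[X] (RatFunc L) (p - C ρ * q) := by
    rw [map_sub, map_mul, RatFunc.algebraMap_C]; field_simp
  have hpq : p.natDegree ≤ q.natDegree := by
    by_cases hp0 : p = 0
    · simp [hp0]
    have h := add_le_add_right ha (valuationAtInfty L (algebraMap L[X] (RatFunc L) q))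
    rw [← AddValuation.map_mul, mul_div_cancel₀ _ hq', add_zero, valuationAtInfty_algebraMap hp0,
      valuationAtInfty_algebraMap hq0] at h
    have := WithTop.coe_le_coe.1 h
    omega
  have hlt : (p - C ρ * q).degree < q.natDegree := by
    refine degree_lt_iff_coeff_zero _ _ |>.2 fun m hm => ?_
    rcases hm.eq_or_lt with rfl | hm
    · simp [ρ, div_mul_cancel₀ _ (leadingCoeff_ne_zero.2 hq0)]
    · simp [coeff_eq_zero_of_natDegree_lt hm, coeff_eq_zero_of_natDegree_lt (hpq.trans_lt hm)]
  refine ⟨ρ, (WithTop.add_le_add_iff_left ((valuationAtInfty L).ne_top_iff.2 hq')).1 ?_⟩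
  rw [← AddValuation.map_mul, hmul, valuationAtInfty_algebraMap hq0]
  refine le_trans (le_of_eq ?_) (le_valuationAtInfty_of_degree_lt hlt)
  exact congrArg WithTop.some (by ring : -(q.natDegree : ℤ) + 1 = 1 - q.natDegree)

theorem valuationAtInfty_aeval_eq_zero {F : Type*} [Field F] [Algebra F L] {a : RatFunc L} {ρ : L}
    (hρ : 1 ≤ valuationAtInfty L (a - RatFunc.C ρ)) {h : F[X]} (hh : aeval ρ h ≠ 0) :
    valuationAtInfty L (aeval a h) = 0 := by
  have ha : 0 ≤ valuationAtInfty L a := by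
    rw [← sub_add_cancel a (RatFunc.C ρ)]
    exact AddValuation.map_le_add _ (zero_le_one.trans hρ) (valuationAtInfty_C_nonneg ρ)
  obtain ⟨g, hg⟩ := X_sub_C_dvd_sub_C_eval (a := ρ) (p := h.map (algebraMap F L))
  have hsub : aeval a h - RatFunc.C (aeval ρ h) = (a - RatFunc.C ρ) * aeval a g := by
    simpa [← RatFunc.algebraMap_eq_C] using congrArg (aeval a) hg
  rw [← valuationAtInfty_C hh]
  refine AddValuation.map_eq_of_lt_sub _ ?_
  rw [valuationAtInfty_C hh, hsub, AddValuation.map_mul]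
  exact zero_lt_one.trans_le
    (le_add_of_le_of_nonneg hρ (le_map_aeval valuationAtInfty_C_nonneg ha g))

theorem valuationAtInfty_add_one_le_derivative (p : L[X]) :
    valuationAtInfty L (algebraMap L[X] (RatFunc L) p) + 1
      ≤ valuationAtInfty L (algebraMap L[X] (RatFunc L) (derivative p)) := by
  by_cases hp : p = 0
  · simp [hp, AddValuation.map_zero]
  · refine le_trans (le_of_eq ?_)
      (le_valuationAtInfty_of_degree_lt ((degree_derivative_lt hp).trans_le degree_le_natDegree))
    rw [valuationAtInfty_algebraMap hp]
    exact congrArg WithTop.some (by ring : -(p.natDegree : ℤ) + 1 = 1 - p.natDegree)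

theorem valuationAtInfty_le_mapCoeffs {F : Type*} [CommRing F] [Algebra F L] (d : Derivation F L L)
    (p : L[X]) : valuationAtInfty L (algebraMap L[X] (RatFunc L) p)
      ≤ valuationAtInfty L (algebraMap L[X] (RatFunc L)
        (PolynomialModule.equivPolynomialSelf (d.mapCoeffs p))) := by
  by_cases hp : p = 0
  · simp [hp, AddValuation.map_zero]
  · have hdeg : (PolynomialModule.equivPolynomialSelf (d.mapCoeffs p)).degree
        < (p.natDegree + 1 : ℕ) := by
      refine degree_lt_iff_coeff_zero _ _ |>.2 fun m hm => ?_
      change d (p.coeff m) = 0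
      rw [coeff_eq_zero_of_natDegree_lt hm, map_zero]
    refine le_trans (le_of_eq ?_) (le_valuationAtInfty_of_degree_lt hdeg)
    rw [valuationAtInfty_algebraMap hp]
    exact congrArg WithTop.some (by push_cast; ring)

end RatFunc

/-- The embedding of `F[x, y]` into `F(x)(y)`. -/
noncomputable def toRatFunc (F : Type*) [Field F] : F[X][Y] →ₐ[F] RatFunc (RatFunc F) :=
  (IsScalarTower.toAlgHom F (RatFunc F)[X] (RatFunc (RatFunc F))).comp
    (mapAlgHom (IsScalarTower.toAlgHom F F[X] (RatFunc F)))

theorem toRatFunc_apply {F : Type*} [Field F] (f : F[X][Y]) :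
    toRatFunc F f = algebraMap (RatFunc F)[X] (RatFunc (RatFunc F))
      (f.map (algebraMap F[X] (RatFunc F))) := rfl

theorem toRatFunc_injective (F : Type*) [Field F] : Function.Injective (toRatFunc F) :=
  (IsFractionRing.injective (RatFunc F)[X] (RatFunc (RatFunc F))).comp
    (Polynomial.map_injective _ (IsFractionRing.injective F[X] (RatFunc F)))

theorem algebraMap_ratFunc_ratFunc {F : Type*} [Field F] (c : F) :
    algebraMap F (RatFunc (RatFunc F)) c = RatFunc.C (RatFunc.C c) := by
  rw [IsScalarTower.algebraMap_apply F (RatFunc F), RatFunc.algebraMap_eq_C,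
    RatFunc.algebraMap_eq_C]

theorem exists_one_le_valuationAtInfty_sub_algebraMap {F : Type*} [Field F]
    {a : RatFunc (RatFunc F)} (ha : 0 ≤ valuationAtInfty (RatFunc F) a) :
    (∃ c : F, 1 ≤ valuationAtInfty (RatFunc F) (a - algebraMap F _ c)) ∨
      ∀ h : F[X], h ≠ 0 → valuationAtInfty (RatFunc F) (aeval a h) = 0 := by
  obtain ⟨ρ, hρ⟩ := exists_one_le_valuationAtInfty_sub ha
  by_cases hc : ∃ c, ρ = RatFunc.C c
  · obtain ⟨c, rfl⟩ := hc
    exact Or.inl ⟨c, by rwa [algebraMap_ratFunc_ratFunc]⟩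
  · exact Or.inr fun h hh => valuationAtInfty_aeval_eq_zero hρ
      fun h0 => hh (transcendental_iff.1 (RatFunc.transcendental_of_ne_C ρ hc) h h0)

theorem exists_jacobianValuation (F : Type*) [Field F] :
    ∃ D : JacobianValuation F (RatFunc (RatFunc F)),
      (∀ f, f ≠ 0 → D.v (toRatFunc F f) = ((-f.natDegree : ℤ) : WithTop ℤ)) ∧
      D.J (toRatFunc F (C X)) (toRatFunc F Y) = 1 := by
  let L := RatFunc F
  let M := RatFunc L
  obtain ⟨d₀, hd₀⟩ := exists_derivation_extend (K := L) (derivative' (R := F))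
  let d₁ : Derivation F L[X] L[X] := PolynomialModule.equivPolynomialSelf.compDer d₀.mapCoeffs
  obtain ⟨dx, hdx⟩ := exists_derivation_extend (K := M) d₁
  obtain ⟨dy, hdy⟩ := exists_derivation_extend (K := M)
    ((derivative' (R := L)).restrictScalars F)
  replace hdy : ∀ b : L[X], dy (algebraMap L[X] M b) = algebraMap L[X] M (derivative b) := hdy
  refine ⟨
    { v := valuationAtInfty L
      dx := dx
      dy := dy
      v_algebraMap := fun c hc =>
        algebraMap_ratFunc_ratFunc c ▸ valuationAtInfty_C (by simpa using hc)
      le_v_dx := fun a => ?_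
      le_v_dy := fun a => ?_
      residue := fun _ => exists_one_le_valuationAtInfty_sub_algebraMap }, fun f hf => ?_, ?_⟩
  · simpa using le_map_derivation (B := L[X]) (v := valuationAtInfty L) (d := dx) (e := 0)
      (fun b => by rw [add_zero, hdx]; exact valuationAtInfty_le_mapCoeffs d₀ b) a
  · exact le_map_derivation (B := L[X])
      (fun b => by rw [hdy]; exact valuationAtInfty_add_one_le_derivative b) a
  · have hinj := IsFractionRing.injective F[X] L
    rw [toRatFunc_apply, valuationAtInfty_algebraMap ((Polynomial.map_ne_zero_iff hinj).2 hf),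
      natDegree_map_eq_of_injective hinj]
  · have hX : d₁ (C (algebraMap F[X] L X)) = 1 := by
      ext n
      change d₀ ((C (algebraMap F[X] L X)).coeff n) = _
      rw [coeff_C, coeff_one]
      split_ifs <;> simp [hd₀, derivative']
    have hCX : toRatFunc F (C X) = algebraMap L[X] M (C (algebraMap F[X] L X)) := by
      rw [toRatFunc_apply, map_C]
    have hY : toRatFunc F Y = algebraMap L[X] M X := by rw [toRatFunc_apply, map_X]
    rw [JacobianValuation.J, hCX, hY, hdx, hdy, hdy, hX, derivative_X, derivative_C, map_zero,
      zero_mul, sub_zero, map_one, one_mul]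

/-! ### Degree reduction for generators of `F[x, y]` -/

theorem exists_derivation_ev_eq {S B : Type*} [CommRing S] [CommRing B] [Algebra S B] (x y : B)
    (H : S[X][Y]) : ∃ P Q : S[X][Y], ∀ δ : Derivation S B B,
      δ (ev x y H) = ev x y P * δ x + ev x y Q * δ y := by
  induction H using Polynomial.induction_on' with
  | add H₁ H₂ h₁ h₂ =>
    obtain ⟨P₁, Q₁, h₁⟩ := h₁
    obtain ⟨P₂, Q₂, h₂⟩ := h₂
    refine ⟨P₁ + P₂, Q₁ + Q₂, fun δ => ?_⟩
    simp only [map_add, h₁, h₂]; ring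
  | monomial n p =>
    refine ⟨C (derivative p) * Y ^ n, C p * ((n : S[X][Y]) * Y ^ (n - 1)), fun δ => ?_⟩
    simp only [← C_mul_X_pow_eq_monomial, map_mul, map_pow, map_natCast, ev_C, ev_Y,
      Derivation.leibniz, Derivation.leibniz_pow, Derivation.map_aeval, smul_eq_mul,
      nsmul_eq_mul]
    ring

namespace JacobianValuation

variable {F M : Type*} [Field F] [Field M] [Algebra F M] {D : JacobianValuation F M}

theorem exists_J_ev_eq (x y : M) (A B : F[X][Y]) :
    ∃ P : F[X][Y], D.J (ev x y A) (ev x y B) = ev x y P * D.J x y := by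
  obtain ⟨P₁, Q₁, h₁⟩ := exists_derivation_ev_eq x y A
  obtain ⟨P₂, Q₂, h₂⟩ := exists_derivation_ev_eq x y B
  refine ⟨P₁ * Q₂ - Q₁ * P₂, ?_⟩
  simp only [J, h₁, h₂, map_sub, map_mul]
  ring

-- The Jacobian is a unit of `F[x, y]` by the chain rule, hence a constant.
theorem v_J_toRatFunc_eq_zero {D : JacobianValuation F (RatFunc (RatFunc F))}
    (hv : ∀ f, f ≠ 0 → D.v (toRatFunc F f) = ((-f.natDegree : ℤ) : WithTop ℤ))
    (hJ : D.J (toRatFunc F (C X)) (toRatFunc F Y) = 1) {f g : F[X][Y]}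
    (h : Algebra.adjoin F {f, g} = ⊤) : D.v (D.J (toRatFunc F f) (toRatFunc F g)) = 0 := by
  have hmem : ∀ b, ∃ H : F[X][Y], ev f g H = b := fun b =>
    mem_adjoin_pair.1 (h ▸ Algebra.mem_top)
  obtain ⟨A, hA⟩ := hmem (C X)
  obtain ⟨B, hB⟩ := hmem Y
  obtain ⟨P, hP⟩ := exists_J_ev_eq (D := D) (toRatFunc F f) (toRatFunc F g) A B
  obtain ⟨Q, hQ⟩ := exists_J_ev_eq (D := D) (toRatFunc F (C X)) (toRatFunc F Y) f g
  rw [← map_ev, ← map_ev, ← map_ev, hA, hB, hJ] at hP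
  rw [← map_ev, ← map_ev, ← map_ev, ev_self, ev_self, ev_self, hJ, mul_one] at hQ
  have hPQ : ev f g P * Q = 1 := toRatFunc_injective F (by rw [map_mul, map_one, ← hQ, ← hP])
  have hQ0 : Q ≠ 0 := right_ne_zero_of_mul_eq_one hPQ
  rw [hQ, hv Q hQ0, natDegree_eq_zero_of_isUnit (IsUnit.of_mul_eq_one_right _ hPQ)]
  simp

end JacobianValuation

theorem exists_mul_eq_mul_add_one {p q : ℕ} (hp : 0 < p) (hq : 0 < q) (h : p.Coprime q) :
    ∃ r s : ℕ, r * p = s * q + 1 := by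
  rcases eq_or_lt_of_le (Nat.succ_le_of_lt hq) with rfl | hq1
  · exact ⟨1, p - 1, by omega⟩
  · obtain ⟨m, -, hm⟩ := Nat.exists_mul_mod_eq_one_of_coprime h hq1
    refine ⟨m, p * m / q, ?_⟩
    have := Nat.div_add_mod (p * m) q
    rw [hm] at this
    rw [mul_comm m p, mul_comm _ q]; exact this.symm

theorem eq_one_or_eq_one_of_mul_le {d n p q N m : ℕ} (hpq : p.Coprime q) (hN : 0 < N)
    (hm : m * (p * q) ≤ N) (hn : n + 2 = d + d * p + d * q) (h : N * d ≤ m * n) :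
    p = 1 ∨ q = 1 := by
  have hd : 0 < d := Nat.pos_of_ne_zero fun h => by simp [h] at hn
  have hm0 : 0 < m := Nat.pos_of_ne_zero fun h0 => by
    have := Nat.mul_pos hN hd
    rw [h0, zero_mul] at h
    omega
  have hpqd : p * q * d ≤ n := by
    refine Nat.le_of_mul_le_mul_left (le_trans ?_ h) hm0
    rw [← mul_assoc]
    exact Nat.mul_le_mul_right d hm
  have hlt : p * q < 1 + p + q := by
    refine Nat.lt_of_mul_lt_mul_left (a := d) ?_
    linarith
  by_contra! hne
  have hp0 : p ≠ 0 := fun h => hne.2 (by simpa [h] using hpq)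
  have hq0 : q ≠ 0 := fun h => hne.1 (by simpa [h] using hpq)
  obtain ⟨a, rfl⟩ := Nat.exists_eq_add_of_le (show 2 ≤ p by omega)
  obtain ⟨b, rfl⟩ := Nat.exists_eq_add_of_le (show 2 ≤ q by omega)
  obtain ⟨rfl, rfl⟩ : a = 0 ∧ b = 0 := by constructor <;> nlinarith [Nat.zero_le (a * b)]
  exact absurd hpq (by decide)

section MonomialTransform

variable {S : Type*} [CommRing S]

theorem sum_monomial_eq (a : S[X][Y]) :
    ∑ t ∈ a.support.sigma fun j => (a.coeff j).support,
      C (monomial t.2 ((a.coeff t.1).coeff t.2)) * Y ^ t.1 = a := by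
  rw [Finset.sum_sigma]
  conv_rhs => rw [a.as_sum_support_C_mul_X_pow]
  refine Finset.sum_congr rfl fun j _ => ?_
  change ∑ i ∈ (a.coeff j).support, C (monomial i ((a.coeff j).coeff i)) * Y ^ j = _
  rw [← Finset.sum_mul, ← map_sum, ← as_sum_support]

theorem mem_sigma_support {a : S[X][Y]} {t : (_ : ℕ) × ℕ} :
    t ∈ (a.support.sigma fun j => (a.coeff j).support) ↔ (a.coeff t.1).coeff t.2 ≠ 0 := by
  simp only [Finset.mem_sigma, mem_support_iff, and_iff_right_iff_imp]
  rintro h h0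
  simp [h0] at h

theorem exists_coeff_ne_zero_forall_le {a : S[X][Y]} (ha : a ≠ 0) (κ : ℕ → ℕ → ℕ) :
    ∃ i j, (a.coeff j).coeff i ≠ 0 ∧ ∀ i' j', (a.coeff j').coeff i' ≠ 0 → κ i' j' ≤ κ i j := by
  have hne : (a.support.sigma fun j => (a.coeff j).support).Nonempty := by
    rw [Finset.nonempty_iff_ne_empty]
    intro h
    exact ha (by rw [← sum_monomial_eq a, h, Finset.sum_empty])
  obtain ⟨t, ht, hmax⟩ := Finset.exists_max_image _ (fun t => κ t.2 t.1) hne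
  exact ⟨t.2, t.1, mem_sigma_support.1 ht, fun i j h => hmax ⟨j, i⟩ (mem_sigma_support.2 h)⟩

theorem exists_coeff_ne_zero_of_forall_ne_C {a : S[X][Y]} (ha : ∀ c, a ≠ C (C c)) :
    ∃ i j, (a.coeff j).coeff i ≠ 0 ∧ 0 < i + j := by
  by_contra! h
  refine ha ((a.coeff 0).coeff 0) (Polynomial.ext fun j => Polynomial.ext fun i => ?_)
  have h0 : (a.coeff j).coeff i ≠ 0 → i = 0 ∧ j = 0 := fun hne => by simpa using h i j hne
  rw [coeff_C]
  split_ifs with hj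
  · subst hj
    rw [coeff_C]
    split_ifs with hi
    · rw [hi]
    · exact by_contra fun hne => hi (h0 hne).1
  · rw [coeff_zero]
    exact by_contra fun hne => hj (h0 hne).2

/-- The polynomial `z ^ N * w ^ L * a (1 / (z ^ p * w ^ s), 1 / (z ^ q * w ^ r))`, where `N` and `L`
are assumed to be so large that the subtractions of natural numbers below are not truncated. -/
noncomputable def monomialTransform (a : S[X][Y]) (p q r s N L : ℕ) : S[X][Y] :=
  ∑ t ∈ a.support.sigma fun j => (a.coeff j).support,
    C (monomial (N - (p * t.2 + q * t.1)) ((a.coeff t.1).coeff t.2)) * Y ^ (L - (s * t.2 + r * t.1))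

variable {a : S[X][Y]} {p q r s N L : ℕ}

theorem ev_monomialTransform {M : Type*} [CommRing M] [Algebra S M]
    (hN : ∀ i j, (a.coeff j).coeff i ≠ 0 → p * i + q * j ≤ N)
    (hL : ∀ i j, (a.coeff j).coeff i ≠ 0 → s * i + r * j ≤ L) {z w φ γ : M}
    (hφ : φ * (z ^ p * w ^ s) = 1) (hγ : γ * (z ^ q * w ^ r) = 1) :
    ev z w (monomialTransform a p q r s N L) = z ^ N * w ^ L * ev φ γ a := by
  conv_rhs => rw [← sum_monomial_eq a]
  rw [monomialTransform, map_sum, map_sum, Finset.mul_sum]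
  refine Finset.sum_congr rfl fun t ht => ?_
  obtain ⟨j, i⟩ := t
  obtain ⟨n, rfl⟩ := Nat.exists_eq_add_of_le (hN i j (mem_sigma_support.1 ht))
  obtain ⟨l, rfl⟩ := Nat.exists_eq_add_of_le (hL i j (mem_sigma_support.1 ht))
  have hij : φ ^ i * γ ^ j * (z ^ (p * i + q * j) * w ^ (s * i + r * j)) = 1 := by
    calc _ = (φ * (z ^ p * w ^ s)) ^ i * (γ * (z ^ q * w ^ r)) ^ j := by ring
      _ = 1 := by rw [hφ, hγ, one_pow, one_pow, one_mul]
  simp only [map_mul, ev_C, aeval_monomial, map_pow, ev_Y, Nat.add_sub_cancel_left]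
  rw [pow_add z, pow_add w]
  linear_combination (-(algebraMap S M) ((a.coeff j).coeff i) * z ^ n * w ^ l) * hij

theorem coeff_map_monomialTransform (hN : ∀ i j, (a.coeff j).coeff i ≠ 0 → p * i + q * j ≤ N)
    (l : ℕ) : ((monomialTransform a p q r s N L).map (evalRingHom 0)).coeff l =
      ∑ t ∈ a.support.sigma fun j => (a.coeff j).support,
        if p * t.2 + q * t.1 = N ∧ l = L - (s * t.2 + r * t.1) then (a.coeff t.1).coeff t.2
        else 0 := by
  rw [monomialTransform, Polynomial.map_sum, finsetSum_coeff]
  refine Finset.sum_congr rfl fun t ht => ?_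
  have hle := hN t.2 t.1 (mem_sigma_support.1 ht)
  rw [Polynomial.map_mul, Polynomial.map_pow, map_X, map_C, coeff_C_mul, coeff_X_pow,
    coe_evalRingHom, eval_monomial]
  rcases hle.eq_or_lt with h | h
  · simp [h]
  · simp [h.ne, zero_pow (Nat.sub_ne_zero_of_lt h)]

theorem exists_of_coeff_map_monomialTransform_ne_zero
    (hN : ∀ i j, (a.coeff j).coeff i ≠ 0 → p * i + q * j ≤ N)
    (hL : ∀ i j, (a.coeff j).coeff i ≠ 0 → s * i + r * j ≤ L) {l : ℕ}
    (hl : ((monomialTransform a p q r s N L).map (evalRingHom 0)).coeff l ≠ 0) :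
    ∃ i j, p * i + q * j = N ∧ l + (s * i + r * j) = L := by
  rw [coeff_map_monomialTransform hN] at hl
  obtain ⟨t, ht, hne⟩ := Finset.exists_ne_zero_of_sum_ne_zero hl
  obtain ⟨h, hl⟩ := (ite_ne_right_iff.1 hne).1
  have := hL t.2 t.1 (mem_sigma_support.1 ht)
  exact ⟨t.2, t.1, h, by omega⟩

theorem sub_eq_mul_sub_of_add_eq_add {i j i' j' : ℤ} {p q r s : ℕ} (hrs : r * p = s * q + 1)
    (h : p * i + q * j = p * i' + q * j') :
    i - i' = q * ((s * i' + r * j') - (s * i + r * j)) ∧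
      j' - j = p * ((s * i' + r * j') - (s * i + r * j)) := by
  have hrs' : (r * p : ℤ) = s * q + 1 := by exact_mod_cast hrs
  constructor
  · linear_combination (r : ℤ) * h - (i - i') * hrs'
  · linear_combination (s : ℤ) * h - (j' - j) * hrs'

theorem map_monomialTransform_ne_zero (hrs : r * p = s * q + 1)
    (hN : ∀ i j, (a.coeff j).coeff i ≠ 0 → p * i + q * j ≤ N)
    (hL : ∀ i j, (a.coeff j).coeff i ≠ 0 → s * i + r * j ≤ L) {i j : ℕ}
    (hij : (a.coeff j).coeff i ≠ 0) (hijN : p * i + q * j = N) :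
    (monomialTransform a p q r s N L).map (evalRingHom 0) ≠ 0 := by
  intro h
  have hl := coeff_map_monomialTransform (r := r) (s := s) (L := L) hN (L - (s * i + r * j))
  rw [h, coeff_zero, Finset.sum_eq_single ⟨j, i⟩] at hl
  · exact hij (by simpa [hijN] using hl.symm)
  · rintro ⟨j', i'⟩ ht hne
    refine if_neg fun ⟨h₁, h₂⟩ => hne ?_
    have hle := hL i j hij
    have hle' := hL i' j' (mem_sigma_support.1 ht)
    obtain ⟨hi, hj⟩ := sub_eq_mul_sub_of_add_eq_add (i := i) (j := j) (i' := i') (j' := j') hrs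
      (by exact_mod_cast hijN.trans h₁.symm)
    have h₃ : (s * i' + r * j' : ℤ) - (s * i + r * j) = 0 := by
      simp only at h₂
      omega
    rw [h₃, mul_zero] at hi hj
    obtain rfl : i = i' := by omega
    obtain rfl : j = j' := by omega
    rfl
  · exact fun h0 => absurd (mem_sigma_support.2 hij) h0

theorem rootMultiplicity_add_natTrailingDegree_le {F : Type*} [Field F] {P : F[X]} (hP : P ≠ 0)
    {c : F} (hc : c ≠ 0) : P.rootMultiplicity c + P.natTrailingDegree ≤ P.natDegree := by
  have hcop : IsCoprime ((X - C c) ^ P.rootMultiplicity c) (X ^ P.natTrailingDegree) := by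
    have := isCoprime_X_sub_C_of_isUnit_sub (a := c) (b := 0) (by simpa using hc)
    rw [C_0, sub_zero] at this
    exact this.pow
  have hdvd := hcop.mul_dvd (pow_rootMultiplicity_dvd P c)
    (X_pow_dvd_iff.2 fun _ => coeff_eq_zero_of_lt_natTrailingDegree)
  simpa [natDegree_mul, pow_ne_zero, X_sub_C_ne_zero] using natDegree_le_of_dvd hdvd hP

theorem rootMultiplicity_map_monomialTransform_le {F : Type*} [Field F] {a : F[X][Y]}
    (hrs : r * p = s * q + 1) (hN : ∀ i j, (a.coeff j).coeff i ≠ 0 → p * i + q * j ≤ N)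
    (hL : ∀ i j, (a.coeff j).coeff i ≠ 0 → s * i + r * j ≤ L) {c : F} (hc : c ≠ 0) :
    ((monomialTransform a p q r s N L).map (evalRingHom 0)).rootMultiplicity c * (p * q) ≤ N := by
  set P := (monomialTransform a p q r s N L).map (evalRingHom 0)
  by_cases hP : P = 0
  · simp [hP]
  obtain ⟨i, j, hN₁, hL₁⟩ := exists_of_coeff_map_monomialTransform_ne_zero hN hL
    (leadingCoeff_ne_zero.2 hP)
  obtain ⟨i', j', hN₂, hL₂⟩ := exists_of_coeff_map_monomialTransform_ne_zero hN hL
    (trailingCoeff_nonzero_iff_nonzero.2 hP)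
  have hroot := rootMultiplicity_add_natTrailingDegree_le hP hc
  obtain ⟨hi, -⟩ := sub_eq_mul_sub_of_add_eq_add (i := i) (j := j) (i' := i') (j' := j') hrs
    (by exact_mod_cast hN₁.trans hN₂.symm)
  have hle : (P.rootMultiplicity c : ℤ) ≤ (s * i' + r * j') - (s * i + r * j) := by
    zify at hL₁ hL₂ hroot
    linarith
  have hqi : q * P.rootMultiplicity c ≤ i := by
    have := mul_le_mul_of_nonneg_left hle (Nat.cast_nonneg (α := ℤ) q)
    exact_mod_cast (show (q * P.rootMultiplicity c : ℤ) ≤ i by omega)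
  calc P.rootMultiplicity c * (p * q) = p * (q * P.rootMultiplicity c) := by ring
    _ ≤ p * i := Nat.mul_le_mul_left _ hqi
    _ ≤ N := by omega

end MonomialTransform

theorem map_pow_eq_coe {M : Type*} [Field M] {v : AddValuation M (WithTop ℤ)} {a : M} {m : ℤ}
    (ha : v a = m) (k : ℕ) : v (a ^ k) = ((k * m : ℤ) : WithTop ℤ) := by
  rw [AddValuation.map_pow, ha, ← WithTop.coe_nsmul, nsmul_eq_mul]

theorem map_mul_eq_coe {M : Type*} [Field M] {v : AddValuation M (WithTop ℤ)} {a b : M} {m n : ℤ}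
    (ha : v a = m) (hb : v b = n) : v (a * b) = ((m + n : ℤ) : WithTop ℤ) := by
  rw [AddValuation.map_mul, ha, hb, WithTop.coe_add]

theorem map_div_eq_coe {M : Type*} [Field M] {v : AddValuation M (WithTop ℤ)} {a b : M} {m n : ℤ}
    (ha : v a = m) (hb : v b = n) : v (a / b) = ((m - n : ℤ) : WithTop ℤ) := by
  rw [AddValuation.map_div, ha, hb]
  rfl

theorem derivation_pow_eq {F M : Type*} [CommRing F] [Field M] [Algebra F M]
    (δ : Derivation F M M) {x : M} (hx : x ≠ 0) (n : ℕ) : δ (x ^ n) = n * x ^ n * δ x / x := by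
  rw [Derivation.leibniz_pow, nsmul_eq_mul, smul_eq_mul]
  rcases n with _ | n
  · simp
  · rw [Nat.add_sub_cancel, pow_succ]
    field_simp

theorem monomial_inversion {M : Type*} [Field M] {φ γ : M} (hφ : φ ≠ 0) (hγ : γ ≠ 0)
    {p q r s : ℕ} (hrs : r * p = s * q + 1) :
    φ * ((γ ^ s / φ ^ r) ^ p * (φ ^ q / γ ^ p) ^ s) = 1 ∧
      γ * ((γ ^ s / φ ^ r) ^ q * (φ ^ q / γ ^ p) ^ r) = 1 := by
  simp only [div_pow, ← pow_mul, mul_comm p, mul_comm q, hrs, pow_succ]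
  constructor <;> field_simp

namespace JacobianValuation

variable {F M : Type*} [Field F] [Field M] [Algebra F M] {D : JacobianValuation F M}
  {φ γ : M} {d p q r s : ℕ}

theorem J_monomial (hφ : φ ≠ 0) (hγ : γ ≠ 0) (hrs : r * p = s * q + 1) :
    D.J (γ ^ s / φ ^ r) (φ ^ q / γ ^ p) =
      γ ^ s / φ ^ r * (φ ^ q / γ ^ p) * D.J φ γ / (φ * γ) := by
  have hrs' : (r : M) * p = s * q + 1 := by exact_mod_cast congrArg (Nat.cast : ℕ → M) hrs
  have hφr := pow_ne_zero r hφ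
  have hγp := pow_ne_zero p hγ
  simp only [J, Derivation.leibniz_div, derivation_pow_eq _ hφ, derivation_pow_eq _ hγ, smul_eq_mul]
  field_simp
  linear_combination φ * γ * (D.dx φ * D.dy γ - D.dx γ * D.dy φ) * hrs'

theorem v_monomial (hrs : r * p = s * q + 1) (hφ : D.v φ = ((-(p * d) : ℤ) : WithTop ℤ))
    (hγ : D.v γ = ((-(q * d) : ℤ) : WithTop ℤ)) :
    D.v (γ ^ s / φ ^ r) = ((d : ℤ) : WithTop ℤ) ∧ D.v (φ ^ q / γ ^ p) = 0 := by
  have hrs' : (r * p : ℤ) = s * q + 1 := by exact_mod_cast hrs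
  constructor
  · rw [map_div_eq_coe (map_pow_eq_coe hγ s) (map_pow_eq_coe hφ r), WithTop.coe_eq_coe]
    linear_combination (d : ℤ) * hrs'
  · rw [map_div_eq_coe (map_pow_eq_coe hφ q) (map_pow_eq_coe hγ p), ← WithTop.coe_zero,
      WithTop.coe_eq_coe]
    ring

theorem v_J_monomial (hrs : r * p = s * q + 1) (hφ : D.v φ = ((-(p * d) : ℤ) : WithTop ℤ))
    (hγ : D.v γ = ((-(q * d) : ℤ) : WithTop ℤ)) (hJ : D.v (D.J φ γ) = 0) :
    D.v (D.J (γ ^ s / φ ^ r) (φ ^ q / γ ^ p)) = ((d + d * p + d * q : ℤ) : WithTop ℤ) := by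
  obtain ⟨hz, hw⟩ := v_monomial hrs hφ hγ
  rw [J_monomial (D.v.ne_top_iff.1 (hφ ▸ WithTop.coe_ne_top))
      (D.v.ne_top_iff.1 (hγ ▸ WithTop.coe_ne_top)) hrs,
    map_div_eq_coe (map_mul_eq_coe (map_mul_eq_coe hz hw) hJ) (map_mul_eq_coe hφ hγ),
    WithTop.coe_eq_coe]
  ring

theorem v_ev_monomialTransform {a : F[X][Y]} {N L : ℕ} (hrs : r * p = s * q + 1)
    (hN : ∀ i j, (a.coeff j).coeff i ≠ 0 → p * i + q * j ≤ N)
    (hL : ∀ i j, (a.coeff j).coeff i ≠ 0 → s * i + r * j ≤ L)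
    (hφ : D.v φ = ((-(p * d) : ℤ) : WithTop ℤ)) (hγ : D.v γ = ((-(q * d) : ℤ) : WithTop ℤ))
    (ha : D.v (ev φ γ a) = 0) :
    D.v (ev (γ ^ s / φ ^ r) (φ ^ q / γ ^ p) (monomialTransform a p q r s N L)) =
      ((N * d : ℤ) : WithTop ℤ) := by
  obtain ⟨hz, hw⟩ := v_monomial hrs hφ hγ
  obtain ⟨h₁, h₂⟩ := monomial_inversion (D.v.ne_top_iff.1 (hφ ▸ WithTop.coe_ne_top))
    (D.v.ne_top_iff.1 (hγ ▸ WithTop.coe_ne_top)) hrs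
  rw [ev_monomialTransform hN hL h₁ h₂,
    map_mul_eq_coe (map_mul_eq_coe (map_pow_eq_coe hz N) (map_pow_eq_coe hw L)) ha]
  simp

-- The element `a (φ, γ)` has value `0`, although `φ` and `γ` have large negative values. This
-- forces a cancellation, that is, a large value of the polynomial `H` below, whereas `v_ev_le`
-- bounds that value.
theorem exists_one_le_v_sub (hd : 0 < d) (hp : 0 < p) (hq : 0 < q) (hpq : p.Coprime q)
    (hφ : D.v φ = ((-(p * d) : ℤ) : WithTop ℤ)) (hγ : D.v γ = ((-(q * d) : ℤ) : WithTop ℤ))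
    (hJ : D.v (D.J φ γ) = 0) {a : F[X][Y]} (hac : ∀ c, a ≠ C (C c)) (ha : D.v (ev φ γ a) = 0) :
    (p = 1 ∨ q = 1) ∧ ∃ c : F, c ≠ 0 ∧ 1 ≤ D.v (φ ^ q / γ ^ p - algebraMap F M c) := by
  obtain ⟨r, s, hrs⟩ := exists_mul_eq_mul_add_one hp hq hpq
  have ha0 : a ≠ 0 := by simpa using hac 0
  obtain ⟨i, j, hij, hN⟩ := exists_coeff_ne_zero_forall_le ha0 fun i j => p * i + q * j
  obtain ⟨i', j', -, hL⟩ := exists_coeff_ne_zero_forall_le ha0 fun i j => s * i + r * j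
  set N := p * i + q * j with hNij
  obtain ⟨i₁, j₁, hij₁, hpos⟩ := exists_coeff_ne_zero_of_forall_ne_C hac
  have hN0 : 0 < N := lt_of_lt_of_le (by nlinarith) (hN i₁ j₁ hij₁)
  set H := monomialTransform a p q r s N (s * i' + r * j')
  have hH := map_monomialTransform_ne_zero hrs hN hL hij hNij.symm
  have hvH := v_ev_monomialTransform hrs hN hL hφ hγ ha
  obtain ⟨hz, hw⟩ := v_monomial (D := D) hrs hφ hγ
  have hvJ := v_J_monomial (D := D) hrs hφ hγ hJ
  set z := γ ^ s / φ ^ r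
  set w := φ ^ q / γ ^ p
  have hz1 : 1 ≤ D.v z := by rw [hz]; exact_mod_cast hd
  obtain ⟨c, hc⟩ | ht := D.residue w hw.ge
  · have hc0 : c ≠ 0 := by
      rintro rfl
      rw [map_zero, sub_zero, hw] at hc
      exact absurd hc (by decide)
    refine ⟨?_, c, hc0, hc⟩
    obtain ⟨m, hm, hHm⟩ := exists_coeff_comp_ne_zero hH c
    have hle := v_ev_le (d + d * p + d * q - 2) hz1 hc (H := H.comp (Y + C (C c))) (i := 0)
      (by rw [J_sub_algebraMap, hvJ, WithTop.coe_le_coe]; omega) hHm (zero_add m).le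
    have hev : ev z (w - algebraMap F M c) (H.comp (Y + C (C c))) = ev z w H := by
      simp [ev_comp]
    rw [hev, hvH, WithTop.coe_le_coe] at hle
    have hdpq : 2 ≤ d + d * p + d * q := by nlinarith
    exact eq_one_or_eq_one_of_mul_le hpq hN0
      ((Nat.mul_le_mul_right _ hm).trans (rootMultiplicity_map_monomialTransform_le hrs hN hL hc0))
      (Nat.sub_add_cancel hdpq) (by exact_mod_cast hle)
  · rw [v_ev_eq_zero hz1 hw.ge ht hH] at hvH
    have : ((N * d : ℕ) : ℤ) = 0 := by exact_mod_cast hvH.symm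
    exact absurd this (by exact_mod_cast (Nat.mul_pos hN0 hd).ne')

end JacobianValuation

variable {F : Type*} [Field F]

theorem JacobianValuation.natDegree_sub_smul_lt {D : JacobianValuation F (RatFunc (RatFunc F))}
    (hv : ∀ f, f ≠ 0 → D.v (toRatFunc F f) = ((-f.natDegree : ℤ) : WithTop ℤ)) {a b : F[X][Y]}
    {c : F} (hb : 0 < b.natDegree)
    (h : 1 ≤ D.v (toRatFunc F a / toRatFunc F b - algebraMap F _ c)) :
    (a - c • b).natDegree < b.natDegree := by
  have hb0 : b ≠ 0 := ne_zero_of_natDegree_gt hb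
  have hιb : toRatFunc F b ≠ 0 := (map_ne_zero_iff _ (toRatFunc_injective F)).2 hb0
  by_cases hab : a - c • b = 0
  · rwa [hab, natDegree_zero]
  have heq : toRatFunc F (a - c • b) =
      (toRatFunc F a / toRatFunc F b - algebraMap F _ c) * toRatFunc F b := by
    rw [map_sub, map_smul, Algebra.smul_def, sub_mul, div_mul_cancel₀ _ hιb]
  have hle := add_le_add_left h (D.v (toRatFunc F b))
  rw [← D.v.map_mul, ← heq, hv _ hab, hv _ hb0] at hle
  have : (1 + -b.natDegree : ℤ) ≤ -(a - c • b).natDegree := by exact_mod_cast hle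
  omega

/-- The basic step of the theorem of Jung and van der Kulk. -/
theorem exists_natDegree_sub_smul_pow_lt {f g : F[X][Y]} (h : Algebra.adjoin F {f, g} = ⊤)
    (hf : 0 < f.natDegree) (hg : 0 < g.natDegree) : ∃ (n : ℕ) (c : F), 0 < n ∧ c ≠ 0 ∧
      ((g.natDegree = n * f.natDegree ∧ (g - c • f ^ n).natDegree < g.natDegree) ∨
       (f.natDegree = n * g.natDegree ∧ (f - c • g ^ n).natDegree < f.natDegree)) := by
  obtain ⟨D, hv, hJ⟩ := exists_jacobianValuation F
  have hf0 : f ≠ 0 := ne_zero_of_natDegree_gt hf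
  have hg0 : g ≠ 0 := ne_zero_of_natDegree_gt hg
  obtain ⟨d, p, q, hd, hpq, hfd, hgd⟩ :=
    Nat.exists_coprime' (Nat.gcd_pos_of_pos_left g.natDegree hf)
  have hp : 0 < p := Nat.pos_of_mul_pos_right (hfd ▸ hf)
  have hq : 0 < q := Nat.pos_of_mul_pos_right (hgd ▸ hg)
  obtain ⟨a, ha⟩ := mem_adjoin_pair.1 (h ▸ Algebra.mem_top : C X ∈ Algebra.adjoin F {f, g})
  have hac : ∀ c, a ≠ C (C c) := by
    rintro c rfl
    have := congrArg natDegree (C_injective ((by simpa using ha) : C (C c) = C X))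
    simp at this
  have hva : D.v (ev (toRatFunc F f) (toRatFunc F g) a) = 0 := by
    rw [← map_ev, ha, hv _ (by simp)]
    simp
  obtain ⟨hpq1, c, hc, hle⟩ := JacobianValuation.exists_one_le_v_sub hd hp hq hpq
    (by rw [hv f hf0, hfd]; simp) (by rw [hv g hg0, hgd]; simp)
    (JacobianValuation.v_J_toRatFunc_eq_zero hv hJ h) hac hva
  rw [← map_pow, ← map_pow] at hle
  have hlt := JacobianValuation.natDegree_sub_smul_lt hv
    (by rw [natDegree_pow]; exact Nat.mul_pos hp hg) hle
  rcases hpq1 with rfl | rfl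
  · rw [pow_one] at hlt
    have heq : g - c⁻¹ • f ^ q = (-c⁻¹) • (f ^ q - c • g) := by
      rw [smul_sub, smul_smul, neg_mul, inv_mul_cancel₀ hc]
      module
    exact ⟨q, c⁻¹, hq, inv_ne_zero hc, Or.inl ⟨by rw [hfd, hgd, one_mul],
      heq ▸ (natDegree_smul_le _ _).trans_lt hlt⟩⟩
  · have hfg : f.natDegree = p * g.natDegree := by rw [hfd, hgd, one_mul]
    rw [pow_one, natDegree_pow, ← hfg] at hlt
    exact ⟨p, c, hp, hc, Or.inr ⟨hfg, hlt⟩⟩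

theorem ev_C_eq_comp (f : F[X]) (g H : F[X][Y]) :
    ev (C f) g H = (H.map (compRingHom f)).comp g := by
  induction H using Polynomial.induction_on' with
  | add p q hp hq => simp [hp, hq]
  | monomial n a =>
    rw [← C_mul_X_pow_eq_monomial]
    simp only [map_mul, ev_C, map_pow, ev_Y, Polynomial.map_mul, map_C, coe_compRingHom_apply,
      Polynomial.map_pow, map_X, mul_comp, C_comp, X_pow_comp]
    rw [← algebraMap_eq, aeval_algebraMap_apply, comp_eq_aeval]

theorem natDegree_eq_one_of_comp_eq_X {S : Type*} [CommRing S] [IsDomain S] {a g : S[X]}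
    (h : a.comp g = X) : a.natDegree = 1 ∧ g.natDegree = 1 := by
  have := congrArg natDegree h
  rwa [natDegree_comp, natDegree_X, mul_eq_one] at this

theorem exists_eq_of_natDegree_eq_zero {f g : F[X][Y]} (h : Algebra.adjoin F {f, g} = ⊤)
    (hf : f.natDegree = 0) : ∃ (α β γ : F) (b : F[X]), α ≠ 0 ∧ γ ≠ 0 ∧
      f = C (C α * X + C β) ∧ g = C (C γ) * Y + C b := by
  obtain ⟨f, rfl⟩ := natDegree_eq_zero.1 hf
  obtain ⟨A, hA⟩ := mem_adjoin_pair.1 (h ▸ Algebra.mem_top : C X ∈ Algebra.adjoin F {C f, g})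
  obtain ⟨B, hB⟩ := mem_adjoin_pair.1 (h ▸ Algebra.mem_top : Y ∈ Algebra.adjoin F {C f, g})
  rw [ev_C_eq_comp] at hA hB
  obtain ⟨hB1, hg1⟩ := natDegree_eq_one_of_comp_eq_X hB
  have hA0 := congrArg natDegree hA
  rw [natDegree_comp, natDegree_C, hg1, mul_one] at hA0
  rw [eq_C_of_natDegree_eq_zero hA0, C_comp, coeff_map, coe_compRingHom_apply] at hA
  obtain ⟨α, hα, β, rfl⟩ := natDegree_eq_one.1
    (natDegree_eq_one_of_comp_eq_X (C_injective hA)).2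
  obtain ⟨g₁, hg₁, b, rfl⟩ := natDegree_eq_one.1 hg1
  have hu : IsUnit g₁ := by
    have := congrArg leadingCoeff hB
    rw [leadingCoeff_comp (by omega), hB1, pow_one, leadingCoeff_X, leadingCoeff_linear hg₁] at this
    exact IsUnit.of_mul_eq_one_right _ this
  obtain ⟨γ, hγ, rfl⟩ := Polynomial.isUnit_iff.1 hu
  exact ⟨α, β, γ, b, hα, hγ.ne_zero, rfl, rfl⟩

section Shear

variable {S B : Type*} [CommRing S] [CommRing B] [Algebra S B]

theorem aeval_mem_of_mem {f : B} {L : Subalgebra S B} (hf : f ∈ L) (p : S[X]) : aeval f p ∈ L :=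
  Algebra.adjoin_le (Set.singleton_subset_iff.2 hf) (aeval_mem_adjoin_singleton _ _)

theorem adjoin_pair_add_aeval (f g : B) (p : S[X]) :
    Algebra.adjoin S {f, g + aeval f p} = Algebra.adjoin S {f, g} := by
  have key : ∀ g (p : S[X]), Algebra.adjoin S {f, g + aeval f p} ≤ Algebra.adjoin S {f, g} := by
    intro g p
    have hf : f ∈ Algebra.adjoin S {f, g} := Algebra.subset_adjoin (by simp)
    have hg : g ∈ Algebra.adjoin S {f, g} := Algebra.subset_adjoin (by simp)
    rw [Algebra.adjoin_le_iff]
    rintro _ (rfl | rfl)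
    · exact hf
    · exact add_mem hg (aeval_mem_of_mem hf p)
  exact le_antisymm (key g p) (by simpa using key (g + aeval f p) (-p))

theorem adjoin_pair_sub_smul_pow (f g : B) (c : S) (n : ℕ) :
    Algebra.adjoin S {f, g - c • f ^ n} = Algebra.adjoin S {f, g} := by
  rw [← adjoin_pair_add_aeval f g (-(C c * X ^ n))]
  congr 3
  simp [sub_eq_add_neg, Algebra.smul_def]

end Shear

section Tame

variable {F : Type*} [Field F]

theorem natDegree_induction (P : F[X][Y] → F[X][Y] → Prop)
    (base : ∀ f g, Algebra.adjoin F {f, g} = ⊤ → f.natDegree = 0 → P f g)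
    (swap : ∀ f g, P f g → P g f)
    (step : ∀ (f g : F[X][Y]) (n : ℕ) (c : F), Algebra.adjoin F {f, g} = ⊤ → 0 < f.natDegree →
      c ≠ 0 → g.natDegree = n * f.natDegree → (g - c • f ^ n).natDegree < g.natDegree →
      P f (g - c • f ^ n) → P f g) {f g : F[X][Y]} (h : Algebra.adjoin F {f, g} = ⊤) : P f g := by
  induction hn : f.natDegree + g.natDegree using Nat.strong_induction_on generalizing f g with
  | _ n ih =>
    have h' : Algebra.adjoin F {g, f} = ⊤ := by rwa [Set.pair_comm]
    rcases Nat.eq_zero_or_pos f.natDegree with hf | hf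
    · exact base _ _ h hf
    rcases Nat.eq_zero_or_pos g.natDegree with hg | hg
    · exact swap _ _ (base _ _ h' hg)
    obtain ⟨m, c, -, hc, ⟨hd, hlt⟩ | ⟨hd, hlt⟩⟩ := exists_natDegree_sub_smul_pow_lt h hf hg
    · exact step _ _ m c h hf hc hd hlt (ih _ (by omega) (by rwa [adjoin_pair_sub_smul_pow]) rfl)
    · exact swap _ _ (step _ _ m c h' hg hc hd hlt
        (ih _ (by omega) (by rwa [adjoin_pair_sub_smul_pow]) rfl))

theorem aeval_C_eq_C_comp (p q : F[X]) : aeval (C p : F[X][Y]) q = C (q.comp p) := by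
  simpa using ev_C_eq_comp p 0 (C q)

/-- **Theorem of Jung and van der Kulk**, as an induction principle. -/
theorem tame_induction (P : F[X][Y] → F[X][Y] → Prop)
    (base : P (C X) Y) (swap : ∀ f g, P f g → P g f)
    (shear : ∀ f g (p : F[X]), P f g → P f (g + aeval f p))
    (scale : ∀ f g (c : F), c ≠ 0 → P f g → P f (c • g))
    {f g : F[X][Y]} (h : Algebra.adjoin F {f, g} = ⊤) : P f g := by
  refine natDegree_induction P (fun f g h hf => ?_) swap (fun f g n c _ _ _ _ _ hP => ?_) h
  · obtain ⟨α, β, γ, b, hα, hγ, rfl, rfl⟩ := exists_eq_of_natDegree_eq_zero h hf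
    have hf : P (C (C α * X + C β)) Y := by
      simpa [Algebra.smul_def] using swap _ _ (shear _ _ (C β) (scale _ _ α hα (swap _ _ base)))
    have hb : (b.comp (C α⁻¹ * (X - C β))).comp (C α * X + C β) = b := by
      rw [comp_assoc, mul_comp, sub_comp, X_comp, C_comp, C_comp, add_sub_cancel_right,
        ← mul_assoc, ← C_mul, inv_mul_cancel₀ hα, C_1, one_mul, comp_X]
    have hg := shear _ _ (b.comp (C α⁻¹ * (X - C β))) (scale _ _ γ hγ hf)
    rwa [aeval_C_eq_C_comp, hb, Algebra.smul_def] at hg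
  · have hshear := shear _ _ (C c * X ^ n) hP
    rwa [map_mul, aeval_C, map_pow, aeval_X, ← Algebra.smul_def, sub_add_cancel] at hshear

theorem leadingCoeff_eq_of_natDegree_sub_lt {f g : F[X][Y]} {n : ℕ} {c : F}
    (hlt : (g - c • f ^ n).natDegree < g.natDegree) (hd : g.natDegree = n * f.natDegree) :
    g.leadingCoeff = C c * f.leadingCoeff ^ n := by
  have h := coeff_eq_zero_of_natDegree_lt hlt
  rw [coeff_sub, coeff_smul, sub_eq_zero, hd, coeff_pow_mul_natDegree, ← hd, smul_eq_C_mul] at h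
  exact h

theorem exists_leadingCoeff_eq_C {f g : F[X][Y]} (h : Algebra.adjoin F {f, g} = ⊤)
    (hf : 0 < f.natDegree) : ∃ c : F, c ≠ 0 ∧ f.leadingCoeff = C c := by
  refine (natDegree_induction (fun f g =>
    (0 < f.natDegree → ∃ c : F, c ≠ 0 ∧ f.leadingCoeff = C c) ∧
      (0 < g.natDegree → ∃ c : F, c ≠ 0 ∧ g.leadingCoeff = C c))
    (fun f g h hf => ?_) (fun f g => And.symm) (fun f g n c _ hf hc hd hlt hP => ?_) h).1 hf
  · obtain ⟨α, β, γ, b, -, hγ, rfl, rfl⟩ := exists_eq_of_natDegree_eq_zero h hf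
    exact ⟨fun h => absurd hf h.ne', fun _ =>
      ⟨γ, hγ, leadingCoeff_linear (C_ne_zero.2 hγ)⟩⟩
  · obtain ⟨e, he, hfe⟩ := hP.1 hf
    exact ⟨hP.1, fun _ => ⟨c * e ^ n, mul_ne_zero hc (pow_ne_zero _ he), by
      rw [leadingCoeff_eq_of_natDegree_sub_lt hlt hd, hfe, C_mul, C_pow]⟩⟩

end Tame

section Reduction

variable {O k : Type*} [CommRing O] [CommRing k]

theorem mapBivariate_eq_zero_iff {σ : O →+* k} {π : O} (hσ : ∀ r, σ r = 0 ↔ π ∣ r)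
    (H : O[X][Y]) : mapBivariate σ H = 0 ↔ ∃ G, H = π • G := by
  have hdvd : (∃ G, H = π • G) ↔ C (C π) ∣ H := by
    simp only [Dvd.dvd, Algebra.smul_def]
    rfl
  rw [hdvd, C_dvd_iff_dvd_coeff]
  simp only [C_dvd_iff_dvd_coeff, ← hσ, ← coeff_mapBivariate, Polynomial.ext_iff, coeff_zero]

theorem exists_eq_C_C_of_aeval_eq_zero [IsDomain k] {H : k[X][Y]} {p : k[X]} (hp : p ≠ 0)
    (h : aeval H p = 0) : ∃ c, H = C (C c) := by
  have hcomp : (p.map (algebraMap k k[X])).comp H = 0 := by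
    rw [comp, eval₂_map, ← h, aeval_def]
    rfl
  rcases comp_eq_zero_iff.1 hcomp with h | ⟨h, hH⟩
  · exact absurd ((Polynomial.map_eq_zero_iff C_injective).1 h) hp
  · rw [eval_map_algebraMap] at h
    rcases comp_eq_zero_iff.1 h with h | ⟨-, h⟩
    · exact absurd h hp
    · exact ⟨_, by rw [hH, h]⟩

theorem injective_of_surjective_of_isNoetherianRing {B : Type*} [CommRing B] [IsNoetherianRing B]
    (f : B →+* B) (hf : Function.Surjective f) : Function.Injective f := by
  let I : ℕ →o Ideal B := ⟨fun n => RingHom.ker (f ^ n), by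
    refine monotone_nat_of_le_succ fun n x hx => ?_
    rw [RingHom.mem_ker] at hx ⊢
    rw [pow_succ', RingHom.mul_def, RingHom.comp_apply, hx, map_zero]⟩
  obtain ⟨n, hn⟩ := monotone_stabilizes_iff_noetherian.2 ‹IsNoetherianRing B› I
  rw [injective_iff_map_eq_zero]
  intro x hx
  obtain ⟨y, rfl⟩ : ∃ y, (f ^ n) y = x := by
    rw [RingHom.coe_pow]
    exact hf.iterate n x
  have hy : y ∈ I (n + 1) := by
    change (f ^ (n + 1)) y = 0
    rw [pow_succ', RingHom.mul_def, RingHom.comp_apply, hx]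
  rw [← hn (n + 1) (by omega)] at hy
  exact hy

end Reduction

section ConstMod

variable {O A : Type*} [CommRing O] [CommRing A] [Algebra O A] (π : O)

/-- The subalgebra `O + π M` of the elements that are constant modulo `π M`. -/
def constMod (M : Subalgebra O A) : Subalgebra O A where
  carrier := {c | ∃ μ : O, ∃ m ∈ M, c = algebraMap O A μ + π • m}
  mul_mem' := by
    rintro _ _ ⟨μ, m, hm, rfl⟩ ⟨ν, n, hn, rfl⟩
    refine ⟨μ * ν, μ • n + ν • m + π • (m * n), add_mem (add_mem (Subalgebra.smul_mem _ hn _)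
      (Subalgebra.smul_mem _ hm _)) (Subalgebra.smul_mem _ (mul_mem hm hn) _), ?_⟩
    simp only [Algebra.smul_def, map_mul]
    ring
  add_mem' := by
    rintro _ _ ⟨μ, m, hm, rfl⟩ ⟨ν, n, hn, rfl⟩
    refine ⟨μ + ν, m + n, add_mem hm hn, ?_⟩
    rw [map_add, smul_add]
    ring
  algebraMap_mem' r := ⟨r, 0, zero_mem _, by simp⟩

variable {π}

theorem smul_mem_constMod {M : Subalgebra O A} {m : A} (hm : m ∈ M) : π • m ∈ constMod π M :=
  ⟨0, m, hm, by simp⟩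

end ConstMod

section Lattice

variable {O K : Type*} [CommRing O] [Field K] [Algebra O K]

/-- The `O`-lattice `O[a, b]` in `K[x, y]`. -/
noncomputable def lattice (O : Type*) {K : Type*} [CommRing O] [Field K] [Algebra O K]
    (a b : K[X][Y]) : Subalgebra O K[X][Y] := Algebra.adjoin O {a, b}

/-- A pair of generators of `K[x, y]`, that is, the image of `x, y` under an automorphism. -/
def IsCoordinatePair {K : Type*} [Field K] (a b : K[X][Y]) : Prop := Algebra.adjoin K {a, b} = ⊤

theorem mem_lattice {a b c : K[X][Y]} : c ∈ lattice O a b ↔ ∃ H : O[X][Y], ev a b H = c :=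
  mem_adjoin_pair

theorem left_mem_lattice (a b : K[X][Y]) : a ∈ lattice O a b := Algebra.subset_adjoin (by simp)

theorem right_mem_lattice (a b : K[X][Y]) : b ∈ lattice O a b := Algebra.subset_adjoin (by simp)

theorem lattice_le {a b : K[X][Y]} {L : Subalgebra O K[X][Y]} (ha : a ∈ L) (hb : b ∈ L) :
    lattice O a b ≤ L :=
  Algebra.adjoin_le (by rintro _ (rfl | rfl) <;> assumption)

theorem lattice_swap (a b : K[X][Y]) : lattice O a b = lattice O b a := by
  rw [lattice, lattice, Set.pair_comm]

theorem lattice_smul_left_le (c : O) (a b : K[X][Y]) : lattice O (c • a) b ≤ lattice O a b :=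
  lattice_le (Subalgebra.smul_mem _ (left_mem_lattice _ _) _) (right_mem_lattice _ _)

theorem lattice_units_smul_left (u : Oˣ) (a b : K[X][Y]) :
    lattice O ((u : O) • a) b = lattice O a b := by
  refine le_antisymm (lattice_smul_left_le _ a b) ?_
  have h := lattice_smul_left_le (↑u⁻¹ : O) ((u : O) • a) b
  rwa [smul_smul, Units.inv_mul, one_smul] at h

theorem isCoordinatePair_X_Y : IsCoordinatePair (C X : K[X][Y]) Y :=
  subalgebra_eq_top_of_mem (left_mem_lattice _ _) (right_mem_lattice _ _)

namespace IsCoordinatePair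

variable {a b : K[X][Y]}

theorem swap (h : IsCoordinatePair a b) : IsCoordinatePair b a := by
  rw [IsCoordinatePair, Set.pair_comm]
  exact h

theorem smul_left (h : IsCoordinatePair a b) {c : K} (hc : c ≠ 0) :
    IsCoordinatePair (c • a) b := by
  refine eq_top_iff.2 (h.ge.trans (lattice_le ?_ (right_mem_lattice _ _)))
  have hmem := Subalgebra.smul_mem _ (left_mem_lattice (O := K) (c • a) b) c⁻¹
  rwa [smul_smul, inv_mul_cancel₀ hc, one_smul] at hmem

theorem add_aeval (h : IsCoordinatePair a b) (p : K[X]) : IsCoordinatePair a (b + aeval a p) := by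
  rw [IsCoordinatePair, adjoin_pair_add_aeval]
  exact h

theorem of_algebraMap_add_smul {μ π : O} (h : IsCoordinatePair a (algebraMap O _ μ + π • b)) :
    IsCoordinatePair b a := by
  refine eq_top_iff.2 (h.ge.trans (lattice_le (right_mem_lattice _ _) (add_mem ?_ ?_)))
  · rw [IsScalarTower.algebraMap_apply O K]
    exact Subalgebra.algebraMap_mem _ _
  · rw [← algebraMap_smul K]
    exact Subalgebra.smul_mem _ (left_mem_lattice _ _) _

theorem ev_injective (h : IsCoordinatePair a b) [FaithfulSMul O K] :
    Function.Injective (ev a b : O[X][Y] →ₐ[O] K[X][Y]) := by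
  have hK : Function.Injective (ev a b : K[X][Y] →ₐ[K] K[X][Y]) := by
    refine injective_of_surjective_of_isNoetherianRing (ev a b : K[X][Y] →ₐ[K] _).toRingHom ?_
    exact fun c => mem_adjoin_pair.1 (h ▸ Algebra.mem_top)
  intro G H hGH
  rw [← ev_mapBivariate (T := K) _ _ G, ← ev_mapBivariate (T := K) _ _ H] at hGH
  exact mapBivariate_injective (FaithfulSMul.algebraMap_injective O K) (hK hGH)

theorem exists_ev_eq [FaithfulSMul O K] (h : IsCoordinatePair a b) {f g : K[X][Y]}
    (hL : lattice O f g = lattice O a b) :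
    ∃ α β : O[X][Y], Algebra.adjoin O {α, β} = ⊤ ∧ ev a b α = f ∧ ev a b β = g := by
  obtain ⟨α, rfl⟩ := mem_lattice.1 (hL ▸ left_mem_lattice f g)
  obtain ⟨β, rfl⟩ := mem_lattice.1 (hL ▸ right_mem_lattice _ g)
  refine ⟨α, β, Subalgebra.map_injective h.ev_injective ?_, rfl, rfl⟩
  rw [Algebra.map_top, range_ev, AlgHom.map_adjoin, Set.image_pair]
  exact hL

variable {π : O} [FaithfulSMul O K]

theorem pow_smul (hπ : Prime π) (h : IsCoordinatePair a b) (m n : ℕ) :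
    IsCoordinatePair (π ^ m • a) (π ^ n • b) := by
  have hK : ∀ n : ℕ, algebraMap O K (π ^ n) ≠ 0 := fun n => by
    rw [map_pow]
    exact pow_ne_zero n ((map_ne_zero_iff _ (FaithfulSMul.algebraMap_injective O K)).2 hπ.ne_zero)
  rw [← algebraMap_smul K (π ^ m), ← algebraMap_smul K (π ^ n)]
  exact ((h.smul_left (hK m)).swap.smul_left (hK n)).swap

theorem dvd_of_algebraMap_eq_smul (h : IsCoordinatePair a b) {m : K[X][Y]}
    (hm : m ∈ lattice O a b) {μ : O} (hμ : algebraMap O K[X][Y] μ = π • m) : π ∣ μ := by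
  obtain ⟨H, rfl⟩ := mem_lattice.1 hm
  have hH : C (C μ) = π • H := h.ev_injective (by rw [map_smul, ← hμ, ev_C, aeval_C])
  exact ⟨(H.coeff 0).coeff 0, by simpa using congrArg (fun H => (H.coeff 0).coeff 0) hH⟩

-- `L / π L` is a polynomial ring over the domain `O / π`, hence only constants are algebraic.
theorem mem_constMod_of_aeval_eq_smul (hπ : Prime π) (h : IsCoordinatePair a b) {c m : K[X][Y]}
    (hc : c ∈ lattice O a b) (hm : m ∈ lattice O a b) {p : O[X]} (hp : ¬ C π ∣ p)
    (hpm : aeval c p = π • m) : c ∈ constMod π (lattice O a b) := by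
  let σ := Ideal.Quotient.mk (Ideal.span {π})
  have hσ : ∀ r, σ r = 0 ↔ π ∣ r := fun r => by
    rw [Ideal.Quotient.eq_zero_iff_mem, Ideal.mem_span_singleton]
  have : (Ideal.span {π}).IsPrime := (Ideal.span_singleton_prime hπ.ne_zero).2 hπ
  obtain ⟨H, rfl⟩ := mem_lattice.1 hc
  obtain ⟨M, rfl⟩ := mem_lattice.1 hm
  have hHM : aeval H p = π • M := h.ev_injective (by rw [map_smul, ← hpm, aeval_algHom_apply])
  have hzero : aeval (mapBivariate σ H) (p.map σ) = 0 := by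
    rw [← (mapBivariate_eq_zero_iff hσ (π • M)).2 ⟨M, rfl⟩, ← hHM, ← ev_C _ 0, ← ev_C H 0,
      mapBivariate_ev, mapBivariate_C, map_zero]
  have hpσ : p.map σ ≠ 0 := fun h0 => hp <| (C_dvd_iff_dvd_coeff _ _).2 fun i => by
    rw [← hσ, ← coeff_map, h0, coeff_zero]
  obtain ⟨c, hc⟩ := exists_eq_C_C_of_aeval_eq_zero hpσ hzero
  obtain ⟨μ, rfl⟩ := Ideal.Quotient.mk_surjective c
  obtain ⟨G, hG⟩ := (mapBivariate_eq_zero_iff hσ (H - C (C μ))).1 (by simp [hc, σ])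
  refine ⟨μ, ev a b G, mem_lattice.2 ⟨G, rfl⟩, ?_⟩
  rw [← map_smul, ← hG, map_sub, ev_C, aeval_C, add_sub_cancel]

theorem right_notMem_constMod (hπ : Prime π) (h : IsCoordinatePair a b) :
    b ∉ constMod π (lattice O a b) := by
  rintro ⟨μ, m, hm, hb⟩
  obtain ⟨M, rfl⟩ := mem_lattice.1 hm
  have hY : Y = C (C μ) + π • M := h.ev_injective (by simpa using hb)
  exact hπ.not_isUnit (.of_mul_eq_one ((M.coeff 1).coeff 0)
    (by simpa [coeff_C] using congrArg (fun H => (H.coeff 1).coeff 0) hY.symm))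

end IsCoordinatePair

theorem exists_eq_aeval_add_smul {π : O} {a b c : K[X][Y]} (hc : c ∈ lattice O (π • a) b) :
    ∃ p : O[X], ∃ s ∈ lattice O a b, c = aeval b p + π • s := by
  obtain ⟨G, rfl⟩ := mem_lattice.1 hc
  refine ⟨(Bivariate.swap G).coeff 0, ev b (π • a) (Bivariate.swap G).divX * a,
    mul_mem ?_ (left_mem_lattice _ _), ?_⟩
  · rw [← ev_swap]
    exact lattice_smul_left_le _ _ _ (mem_lattice.2 ⟨_, rfl⟩)
  · rw [← ev_swap, ← ev_C b (π • a)]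
    conv_lhs => rw [← divX_mul_X_add (Bivariate.swap G), map_add, map_mul, ev_Y]
    rw [add_comm, mul_smul_comm]

variable {π : O} [FaithfulSMul O K]

theorem IsCoordinatePair.left_notMem_lattice_smul (hπ : Prime π) {a b : K[X][Y]}
    (h : IsCoordinatePair a b) : a ∉ lattice O (π • a) b := by
  intro ha
  obtain ⟨p, s, hs, hps⟩ := exists_eq_aeval_add_smul ha
  obtain ⟨M, rfl⟩ := mem_lattice.1 hs
  have hX : C X = p.map C + π • M := h.ev_injective (by
    rwa [map_add, map_smul, ev_C, aeval_X, ← Bivariate.swap_C, ev_swap, ev_C])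
  exact hπ.not_isUnit (.of_mul_eq_one ((M.coeff 0).coeff 1)
    (by simpa [coeff_C] using congrArg (fun H => (H.coeff 0).coeff 1) hX.symm))

end Lattice

section Reachable

variable {O K : Type*} [CommRing O] [Field K] [Algebra O K]

/-- `L` is an elementary contraction of `L₁` if `L₁ = O[a, b]` and `L = O[π a, b]` for some
generators `a, b` of `K[x, y]`. -/
def IsElementaryContraction (π : O) (L L₁ : Subalgebra O K[X][Y]) : Prop :=
  ∃ a b : K[X][Y], IsCoordinatePair a b ∧ L₁ = lattice O a b ∧ L = lattice O (π • a) b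

/-- A lattice is reachable if it is obtained from the standard lattice `O[x, y]` by finitely many
elementary contractions. -/
inductive IsReachable (π : O) : Subalgebra O K[X][Y] → Prop
  | base : IsReachable π (lattice O (C X) Y)
  | step {L L₁ : Subalgebra O K[X][Y]} :
      IsElementaryContraction π L L₁ → IsReachable π L₁ → IsReachable π L

theorem IsReachable.le {π : O} {L : Subalgebra O K[X][Y]} (h : IsReachable π L) :
    L ≤ lattice O (C X) Y := by
  induction h with
  | base => exact le_rfl
  | step h _ ih =>
    obtain ⟨a, b, -, rfl, rfl⟩ := h
    exact (lattice_smul_left_le π a b).trans ih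

theorem IsCoordinatePair.isElementaryContraction {π μ : O} {x z : K[X][Y]}
    (h : IsCoordinatePair x (algebraMap O _ μ + π • z)) :
    IsElementaryContraction π (lattice O x (algebraMap O _ μ + π • z)) (lattice O x z) := by
  refine ⟨z, x, h.of_algebraMap_add_smul, lattice_swap _ _, le_antisymm ?_ ?_⟩
  · exact lattice_le (right_mem_lattice _ _)
      (add_mem (Subalgebra.algebraMap_mem _ _) (left_mem_lattice _ _))
  · refine lattice_le ?_ (left_mem_lattice _ _)
    have hmem := sub_mem (right_mem_lattice (O := O) x (algebraMap O _ μ + π • z))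
      (Subalgebra.algebraMap_mem _ μ)
    rwa [add_sub_cancel_left] at hmem

variable {π : O} [FaithfulSMul O K]

theorem smul_right_injective_of_prime (hπ : Prime π) :
    Function.Injective (π • · : K[X][Y] → K[X][Y]) := by
  have hK := (map_ne_zero_iff _ (FaithfulSMul.algebraMap_injective O K)).2 hπ.ne_zero
  intro a b h
  simp only [← algebraMap_smul K π] at h
  exact smul_right_injective _ hK h

-- Write `π x' = p(y) + π s`: either `π ∣ p`, or `p` witnesses that `y` is algebraic modulo `π`.
theorem lattice_le_or_mem_constMod (hπ : Prime π) {x y x' y' u v : K[X][Y]}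
    (huv : IsCoordinatePair u v) (hx' : π • x' ∈ lattice O (π • x) y)
    (hy' : y' ∈ lattice O (π • x) y) (hle : lattice O x y ≤ lattice O u v)
    (hx'M : x' ∈ lattice O u v) :
    lattice O x' y' ≤ lattice O x y ∨ y ∈ constMod π (lattice O u v) := by
  obtain ⟨p, s, hs, hps⟩ := exists_eq_aeval_add_smul hx'
  by_cases hp : C π ∣ p
  · obtain ⟨q, rfl⟩ := hp
    left
    have hx' : x' = aeval y q + s := smul_right_injective_of_prime hπ <| by
      simp only [hps, smul_add, map_mul, aeval_C, ← Algebra.smul_def]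
    refine lattice_le ?_ (lattice_smul_left_le _ _ _ hy')
    rw [hx']
    exact add_mem (aeval_mem_of_mem (right_mem_lattice _ _) _) hs
  · right
    refine huv.mem_constMod_of_aeval_eq_smul hπ (hle (right_mem_lattice _ _))
      (sub_mem hx'M (hle hs)) hp ?_
    rw [smul_sub, hps, add_sub_cancel_right]

theorem lattice_le_of_lattice_le (hπ : Prime π) {x y x' y' : K[X][Y]} (h : IsCoordinatePair x y)
    (hx : π • x ∈ lattice O (π • x') y') (hy : y ∈ lattice O (π • x') y')
    (hle : lattice O x' y' ≤ lattice O x y) : lattice O x y ≤ lattice O x' y' := by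
  refine (lattice_le_or_mem_constMod hπ h hx hy hle (left_mem_lattice _ _)).resolve_right
    fun hy' => h.right_notMem_constMod hπ ?_
  exact lattice_le (smul_mem_constMod (hle (left_mem_lattice _ _))) hy' hy

theorem IsCoordinatePair.mem_of_smul_mem_constMod (hπ : Prime π) {u v w : K[X][Y]}
    (h : IsCoordinatePair u v) {M : Subalgebra O K[X][Y]} (hM : M ≤ lattice O u v)
    (hw : w ∈ lattice O u v) (hπw : π • w ∈ constMod π M) : w ∈ M := by
  obtain ⟨ν, m, hm, hν⟩ := hπw
  obtain ⟨ξ, rfl⟩ := h.dvd_of_algebraMap_eq_smul (sub_mem hw (hM hm)) (μ := ν)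
    (by rw [smul_sub, hν, add_sub_cancel_right])
  have hwm : w = algebraMap O _ ξ + m := smul_right_injective_of_prime hπ <| by
    simp only [hν, smul_add, map_mul, Algebra.smul_def π (algebraMap O _ ξ)]
  rw [hwm]
  exact add_mem (Subalgebra.algebraMap_mem _ _) hm

theorem lattice_le_of_mem_constMod (hπ : Prime π) {x z x' z' u v : K[X][Y]} {μ μ' : O}
    (huv : IsCoordinatePair u v) (hle : lattice O x z ≤ lattice O u v)
    (hle' : lattice O x' z' ≤ lattice O u v)
    (hx' : π • x' ∈ lattice O (π • x) (algebraMap O _ μ + π • z))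
    (hy' : algebraMap O _ μ' + π • z' ∈ lattice O (π • x) (algebraMap O _ μ + π • z)) :
    lattice O x' z' ≤ lattice O x z := by
  have hconst : lattice O (π • x) (algebraMap O _ μ + π • z) ≤ constMod π (lattice O x z) :=
    lattice_le (smul_mem_constMod (left_mem_lattice _ _)) ⟨μ, z, right_mem_lattice _ _, rfl⟩
  refine lattice_le
    (huv.mem_of_smul_mem_constMod hπ hle (hle' (left_mem_lattice _ _)) (hconst hx'))
    (huv.mem_of_smul_mem_constMod hπ hle (hle' (right_mem_lattice _ _)) ?_)
  simpa using sub_mem (hconst hy') (Subalgebra.algebraMap_mem _ μ')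

-- Confluence: if `L` is an elementary contraction of the incomparable lattices `O[x, y]` and
-- `O[x', y']`, then `y` and `y'` are constants `μ` and `μ'` modulo `π`, and the lattice
-- `O[x, (y - μ) / π] = O[x', (y' - μ') / π]` enlarges both.
theorem IsReachable.of_isElementaryContraction (hπ : Prime π) {L : Subalgebra O K[X][Y]}
    (h : IsReachable π L) : ∀ L₁ : Subalgebra O K[X][Y], IsElementaryContraction π L L₁ →
      L₁ ≤ lattice O (C X) Y → IsReachable π L₁ := by
  induction h with
  | base =>
    rintro L₁ ⟨a, b, hab, rfl, hL⟩ hle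
    exact absurd (hL ▸ hle (left_mem_lattice _ _)) (hab.left_notMem_lattice_smul hπ)
  | @step L L₂ hE hR ih =>
    rintro L₁ ⟨x, y, hxy, rfl, hL⟩ hle
    obtain ⟨x', y', hxy', rfl, hL'⟩ := id hE
    have hle' := hR.le
    have hx' : π • x' ∈ lattice O (π • x) y := hL ▸ hL' ▸ left_mem_lattice _ _
    have hy' : y' ∈ lattice O (π • x) y := hL ▸ hL' ▸ right_mem_lattice _ _
    have hx : π • x ∈ lattice O (π • x') y' := hL' ▸ hL ▸ left_mem_lattice _ _
    have hy : y ∈ lattice O (π • x') y' := hL' ▸ hL ▸ right_mem_lattice _ _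
    rcases lattice_le_or_mem_constMod hπ isCoordinatePair_X_Y hx' hy' hle
      (hle' (left_mem_lattice _ _)) with hsub | ⟨μ, z, hz, rfl⟩
    · rwa [le_antisymm (lattice_le_of_lattice_le hπ hxy hx hy hsub) hsub]
    rcases lattice_le_or_mem_constMod hπ isCoordinatePair_X_Y hx hy hle'
      (hle (left_mem_lattice _ _)) with hsub | ⟨μ', z', hz', rfl⟩
    · rwa [le_antisymm hsub (lattice_le_of_lattice_le hπ hxy' hx' hy' hsub)]
    have hxz := lattice_le (hle (left_mem_lattice _ _)) hz
    have hxz' := lattice_le (hle' (left_mem_lattice _ _)) hz'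
    have heq : lattice O x z = lattice O x' z' := le_antisymm
      (lattice_le_of_mem_constMod hπ isCoordinatePair_X_Y hxz' hxz hx hy)
      (lattice_le_of_mem_constMod hπ isCoordinatePair_X_Y hxz hxz' hx' hy')
    refine .step hxy.isElementaryContraction ?_
    rw [heq]
    exact ih _ hxy'.isElementaryContraction hxz'

theorem IsReachable.pow_smul_left (hπ : Prime π) {a b : K[X][Y]} (h : IsCoordinatePair a b)
    {m n m' : ℕ} (hm : m ≤ m') (hR : IsReachable π (lattice O (π ^ m • a) (π ^ n • b))) :
    IsReachable π (lattice O (π ^ m' • a) (π ^ n • b)) := by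
  induction m', hm using Nat.le_induction with
  | base => exact hR
  | succ j _ ih =>
    refine .step ⟨π ^ j • a, π ^ n • b, h.pow_smul hπ _ _, rfl, ?_⟩ ih
    rw [smul_smul, ← pow_succ']

theorem IsReachable.pow_smul_right (hπ : Prime π) {a b : K[X][Y]} (h : IsCoordinatePair a b)
    {m n n' : ℕ} (hn : n ≤ n') (hR : IsReachable π (lattice O (π ^ m • a) (π ^ n • b))) :
    IsReachable π (lattice O (π ^ m • a) (π ^ n' • b)) := by
  rw [lattice_swap] at hR ⊢
  exact hR.pow_smul_left hπ h.swap hn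

theorem IsReachable.of_pow_smul_left (hπ : Prime π) {a b : K[X][Y]} (h : IsCoordinatePair a b)
    (hle : lattice O a b ≤ lattice O (C X) Y) {m : ℕ}
    (hR : IsReachable π (lattice O (π ^ m • a) b)) : IsReachable π (lattice O a b) := by
  induction m with
  | zero => simpa using hR
  | succ j ih =>
    have hj := h.pow_smul hπ j 0
    rw [pow_zero, one_smul] at hj
    refine ih (hR.of_isElementaryContraction hπ _ ⟨_, _, hj, rfl, ?_⟩
      ((lattice_smul_left_le _ _ _).trans hle))
    rw [smul_smul, ← pow_succ']

theorem IsReachable.of_pow_smul (hπ : Prime π) {a b : K[X][Y]} (h : IsCoordinatePair a b)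
    (hle : lattice O a b ≤ lattice O (C X) Y) {m n : ℕ}
    (hR : IsReachable π (lattice O (π ^ m • a) (π ^ n • b))) : IsReachable π (lattice O a b) := by
  have hn := h.pow_smul hπ 0 n
  rw [pow_zero, one_smul] at hn
  rw [lattice_swap] at hle ⊢
  refine .of_pow_smul_left hπ h.swap hle (m := n) ?_
  rw [lattice_swap]
  refine hR.of_pow_smul_left hπ hn ?_
  rw [lattice_swap]
  exact (lattice_smul_left_le _ _ _).trans hle

end Reachable

theorem mapBivariate_eq_ev {S T : Type*} [CommRing S] [CommRing T] [Algebra S T] (H : S[X][Y]) :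
    mapBivariate (algebraMap S T) H = ev (C X : T[X][Y]) Y H := by
  rw [← ev_mapBivariate (S := S) (T := T), ev_self]

section DiscreteValuationRing

variable {O K : Type*} [CommRing O] [IsDomain O] [IsDiscreteValuationRing O] [Field K]
  [Algebra O K] [IsFractionRing O K] {π : O}

theorem exists_map_eq_pow_smul (hπ : Irreducible π) (p : K[X]) :
    ∃ n : ℕ, ∃ q : O[X], q.map (algebraMap O K) = π ^ n • p := by
  obtain ⟨b, hb0, hb⟩ := IsLocalization.integerNormalization_spec (nonZeroDivisors O) p
  obtain ⟨n, u, hu⟩ := IsDiscreteValuationRing.associated_pow_irreducible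
    (nonZeroDivisors.ne_zero hb0) hπ
  refine ⟨n, C (u : O) * IsLocalization.integerNormalization (nonZeroDivisors O) p, ?_⟩
  rw [Polynomial.map_mul, hb, map_C, ← hu, mul_comm b, mul_smul, ← smul_eq_C_mul, algebraMap_smul]

theorem exists_mul_pow_eq_units_mul_pow (hπ : Irreducible π) {c : K} (hc : c ≠ 0) :
    ∃ (u : Oˣ) (m n : ℕ), c * algebraMap O K (π ^ n) = algebraMap O K (u * π ^ m) := by
  obtain ⟨a, b, hb, rfl⟩ := IsFractionRing.div_surjective (A := O) c
  have hb0 := nonZeroDivisors.ne_zero hb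
  have hbK : algebraMap O K b ≠ 0 := by simpa using hb0
  obtain ⟨m, u, rfl⟩ := IsDiscreteValuationRing.eq_unit_mul_pow_irreducible
    (x := a) (by rintro rfl; simp at hc) hπ
  obtain ⟨n, w, rfl⟩ := IsDiscreteValuationRing.eq_unit_mul_pow_irreducible hb0 hπ
  refine ⟨u * w⁻¹, m, n, ?_⟩
  rw [div_mul_eq_mul_div, div_eq_iff hbK, ← map_mul, ← map_mul]
  congr 1
  push_cast
  linear_combination (-(u : O) * π ^ m * π ^ n) * (Units.inv_mul w)

theorem exists_aeval_pow_smul_eq (hπ : Irreducible π) (p : K[X]) (N : ℕ) :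
    ∃ n, ∃ q : O[X], ∀ f : K[X][Y], aeval (π ^ N • f) q = π ^ n • aeval f p := by
  have hπK : algebraMap O K (π ^ N) ≠ 0 := by simpa using pow_ne_zero N hπ.ne_zero
  obtain ⟨n, q, hq⟩ := exists_map_eq_pow_smul hπ (p.comp (C (algebraMap O K (π ^ N))⁻¹ * X))
  refine ⟨n, q, fun f => ?_⟩
  rw [← aeval_map_algebraMap K, hq, ← algebraMap_smul K (π ^ n) (p.comp _), map_smul,
    algebraMap_smul, aeval_comp, map_mul, aeval_C, aeval_X, ← algebraMap_smul K (π ^ N) f,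
    ← Algebra.smul_def, inv_smul_smul₀ hπK]

theorem exists_isReachable_add_aeval (hπ : Irreducible π) {f g : K[X][Y]}
    (h : IsCoordinatePair f g) (p : K[X]) {N : ℕ}
    (hN : IsReachable π (lattice O (π ^ N • f) (π ^ N • g))) :
    ∃ N, IsReachable π (lattice O (π ^ N • f) (π ^ N • (g + aeval f p))) := by
  obtain ⟨n, q, hq⟩ := exists_aeval_pow_smul_eq hπ p N
  refine ⟨n + N, .pow_smul_left hπ.prime (h.add_aeval p) (Nat.le_add_left N n) ?_⟩
  have hshear : π ^ (n + N) • (g + aeval f p)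
      = π ^ (n + N) • g + aeval (π ^ N • f) (π ^ N • q) := by
    rw [smul_add, map_smul, hq, pow_add, mul_comm, mul_smul, mul_smul]
  rw [hshear, lattice, adjoin_pair_add_aeval]
  exact .pow_smul_right hπ.prime h (Nat.le_add_left N n) hN

theorem exists_isReachable_smul (hπ : Irreducible π) {f g : K[X][Y]}
    (h : IsCoordinatePair f g) {c : K} (hc : c ≠ 0) {N : ℕ}
    (hN : IsReachable π (lattice O (π ^ N • f) (π ^ N • g))) :
    ∃ N, IsReachable π (lattice O (π ^ N • f) (π ^ N • (c • g))) := by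
  obtain ⟨u, m, n, hu⟩ := exists_mul_pow_eq_units_mul_pow hπ hc
  have hscale : π ^ (N + n) • c • g = (u : O) • π ^ (N + m) • g := by
    rw [← algebraMap_smul K (π ^ (N + n)), ← algebraMap_smul K (u : O),
      ← algebraMap_smul K (π ^ (N + m)), smul_smul, smul_smul]
    congr 1
    rw [map_mul] at hu
    rw [pow_add, pow_add, map_mul, map_mul]
    linear_combination algebraMap O K (π ^ N) * hu
  refine ⟨N + n, ?_⟩
  rw [hscale, lattice_swap, lattice_units_smul_left, lattice_swap]
  exact .pow_smul_left hπ.prime h (Nat.le_add_right N n)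
    (.pow_smul_right hπ.prime h (Nat.le_add_right N m) hN)

theorem IsCoordinatePair.exists_isReachable (hπ : Irreducible π) {a b : K[X][Y]}
    (h : IsCoordinatePair a b) : ∃ N : ℕ, IsReachable π (lattice O (π ^ N • a) (π ^ N • b)) := by
  refine (tame_induction (fun a b => IsCoordinatePair a b ∧
    ∃ N : ℕ, IsReachable π (lattice (K := K) O (π ^ N • a) (π ^ N • b)))
    ⟨isCoordinatePair_X_Y, 0, by simpa using IsReachable.base⟩ ?_ ?_ ?_ h).2
  · rintro f g ⟨h, N, hN⟩
    exact ⟨h.swap, N, by rwa [lattice_swap]⟩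
  · rintro f g p ⟨h, N, hN⟩
    exact ⟨h.add_aeval p, exists_isReachable_add_aeval hπ h p hN⟩
  · rintro f g c hc ⟨h, N, hN⟩
    exact ⟨(h.swap.smul_left hc).swap, exists_isReachable_smul hπ h hc hN⟩

theorem IsCoordinatePair.isReachable (hπ : Irreducible π) {a b : K[X][Y]}
    (h : IsCoordinatePair a b) (hle : lattice O a b ≤ lattice O (C X) Y) :
    IsReachable π (lattice O a b) := by
  obtain ⟨N, hN⟩ := h.exists_isReachable hπ
  exact hN.of_pow_smul hπ.prime h hle

-- In the second case `O[f, g] = O[π x₁, y₁]`, which is the last step of a chain of elementary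
-- contractions leading from `O[x, y]` to `O[f, g]`.
theorem adjoin_eq_top_or_exists_ev_smul (K : Type*) [Field K] [Algebra O K] [IsFractionRing O K]
    (hπ : Irreducible π) {f g : O[X][Y]}
    (h : IsCoordinatePair (mapBivariate (algebraMap O K) f) (mapBivariate (algebraMap O K) g)) :
    Algebra.adjoin O {f, g} = ⊤ ∨ ∃ x₁ y₁ α β : O[X][Y],
      Algebra.adjoin O {α, β} = ⊤ ∧ f = ev (π • x₁) y₁ α ∧ g = ev (π • x₁) y₁ β := by
  have hstd := isCoordinatePair_X_Y (K := K)
  have hinj := hstd.ev_injective (O := O)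
  simp only [mapBivariate_eq_ev] at h
  have hR := h.isReachable hπ (lattice_le (mem_lattice.2 ⟨f, rfl⟩) (mem_lattice.2 ⟨g, rfl⟩))
  generalize hL : lattice O (ev (C X : K[X][Y]) Y f) (ev (C X : K[X][Y]) Y g) = L at hR
  cases hR with
  | base =>
    left
    obtain ⟨α, β, hαβ, hα, hβ⟩ := hstd.exists_ev_eq hL
    rwa [← hinj hα, ← hinj hβ]
  | @step _ L₁ hE hR =>
    right
    obtain ⟨a, b, hab, rfl, rfl⟩ := hE
    obtain ⟨x₁, rfl⟩ := mem_lattice.1 (hR.le (left_mem_lattice _ _))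
    obtain ⟨y₁, rfl⟩ := mem_lattice.1 (hR.le (right_mem_lattice _ _))
    have hab' := hab.pow_smul hπ.prime 1 0
    rw [pow_one, pow_zero, one_smul] at hab'
    obtain ⟨α, β, hαβ, hα, hβ⟩ := hab'.exists_ev_eq hL
    refine ⟨x₁, y₁, α, β, hαβ, hinj ?_, hinj ?_⟩
    · rw [← hα, ev_ev, map_smul]
    · rw [← hβ, ev_ev, map_smul]

end DiscreteValuationRing

section KrullAkizuki

variable {R K₁ Γ : Type*} [CommRing R] [IsPrincipalIdealRing R] [Field K₁]
  [Algebra R K₁] [LinearOrderedCommGroupWithZero Γ] {π : R} {v : Valuation K₁ Γ}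

theorem valuation_algebraMap_eq_one (hπ : Irreducible π)
    (hR : ∀ r, v (algebraMap R K₁ r) ≤ 1) (hv : v (algebraMap R K₁ π) < 1) {r : R}
    (hr : ¬ π ∣ r) : v (algebraMap R K₁ r) = 1 := by
  obtain ⟨a, b, hab⟩ := (hπ.coprime_iff_not_dvd).2 hr
  refine (hR r).antisymm (not_lt.1 fun hlt => ?_)
  have hsum : v (algebraMap R K₁ a * algebraMap R K₁ π + algebraMap R K₁ b * algebraMap R K₁ r)
      < 1 := by
    apply Valuation.map_add_lt <;> rw [map_mul]
    · exact (mul_le_of_le_one_left' (hR a)).trans_lt hv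
    · exact (mul_le_of_le_one_left' (hR b)).trans_lt hlt
  rw [← map_mul, ← map_mul, ← map_add, hab, map_one, map_one] at hsum
  exact lt_irrefl _ hsum

theorem dvd_of_sum_smul_eq_zero (hπ : Irreducible π)
    (hR : ∀ r, v (algebraMap R K₁ r) ≤ 1) (hv : v (algebraMap R K₁ π) < 1)
    (hπ0 : algebraMap R K₁ π ≠ 0) {ι : Type*} {c : ι → K₁}
    (hinj : Function.Injective fun i => v (c i)) (hc : ∀ i, v (algebraMap R K₁ π) ≤ v (c i))
    (hc1 : ∀ i, v (c i) < 1) {s : Finset ι} {g : ι → R} (hg : ∑ i ∈ s, g i • c i = 0) :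
    ∀ i ∈ s, π ∣ g i := by
  classical
  by_contra! hcon
  have hvπ : 0 < v (algebraMap R K₁ π) := zero_lt_iff.2 ((Valuation.ne_zero_iff v).2 hπ0)
  obtain ⟨i, hi, hmax⟩ := (s.filter fun i => ¬ π ∣ g i).exists_max_image (fun i => v (c i))
    (by simpa [Finset.Nonempty] using hcon)
  rw [Finset.mem_filter] at hi
  have hlt : v (∑ j ∈ s.erase i, g j • c j) < v (c i) := by
    refine Valuation.map_sum_lt _ (hvπ.trans_le (hc i)).ne' fun j hj => ?_
    obtain ⟨hji, hjs⟩ := Finset.mem_erase.1 hj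
    rw [Algebra.smul_def, map_mul]
    by_cases hdvd : π ∣ g j
    · obtain ⟨d, hd⟩ := hdvd
      rw [hd, map_mul, map_mul, mul_assoc]
      exact (mul_lt_of_lt_one_right hvπ
        ((mul_le_of_le_one_left' (hR d)).trans_lt (hc1 j))).trans_le (hc i)
    · exact (mul_le_of_le_one_left' (hR _)).trans_lt
        ((hmax j (Finset.mem_filter.2 ⟨hjs, hdvd⟩)).lt_of_ne fun h => hji (hinj h))
  have hsum : ∑ j ∈ s.erase i, g j • c j = -(g i • c i) := by
    rw [← Finset.add_sum_erase _ _ hi.1] at hg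
    linear_combination hg
  rw [hsum, Valuation.map_neg, Algebra.smul_def, map_mul,
    valuation_algebraMap_eq_one hπ hR hv hi.2, one_mul] at hlt
  exact lt_irrefl _ hlt

variable [IsDomain R]

theorem linearIndependent_of_injective_valuation (hπ : Irreducible π)
    (hR : ∀ r, v (algebraMap R K₁ r) ≤ 1) (hv : v (algebraMap R K₁ π) < 1)
    (hπ0 : algebraMap R K₁ π ≠ 0) {ι : Type*} {c : ι → K₁}
    (hinj : Function.Injective fun i => v (c i)) (hc : ∀ i, v (algebraMap R K₁ π) ≤ v (c i))
    (hc1 : ∀ i, v (c i) < 1) : LinearIndependent R c := by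
  rw [linearIndependent_iff']
  intro s g hg
  have hpow : ∀ n : ℕ, ∀ i ∈ s, π ^ n ∣ g i := by
    intro n
    induction n with
    | zero => simp
    | succ n ih =>
      choose! d hd using ih
      have hsum : algebraMap R K₁ (π ^ n) * ∑ i ∈ s, d i • c i = 0 := by
        rw [← hg, Finset.mul_sum]
        refine Finset.sum_congr rfl fun i hi => ?_
        rw [hd i hi, ← Algebra.smul_def, mul_smul]
      rw [map_pow] at hsum
      have hd0 := (mul_eq_zero.1 hsum).resolve_left (pow_ne_zero _ hπ0)
      intro i hi
      rw [pow_succ, hd i hi]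
      exact mul_dvd_mul_left _ (dvd_of_sum_smul_eq_zero hπ hR hv hπ0 hinj hc hc1 hd0 i hi)
  intro i hi
  by_contra h0
  obtain ⟨n, hn⟩ := FiniteMultiplicity.of_not_isUnit hπ.not_isUnit h0
  exact hn (hpow _ i hi)

theorem finite_range_valuation_inter_Ico (K : Type*) [Field K] [Algebra R K]
    [IsFractionRing R K] [Algebra K K₁] [IsScalarTower R K K₁] [FiniteDimensional K K₁]
    (hπ : Irreducible π)
    (hR : ∀ r, v (algebraMap R K₁ r) ≤ 1) (hv : v (algebraMap R K₁ π) < 1)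
    (hπ0 : algebraMap R K₁ π ≠ 0) :
    (Set.range v ∩ Set.Ico (v (algebraMap R K₁ π)) 1).Finite := by
  choose c hc using fun γ : ↥(Set.range v ∩ Set.Ico (v (algebraMap R K₁ π)) 1) => γ.2.1
  have hli : LinearIndependent R c := by
    refine linearIndependent_of_injective_valuation (v := v) hπ hR hv hπ0 ?_ ?_ ?_
    · exact fun γ δ h => Subtype.ext (by simpa only [hc] using h)
    · exact fun γ => (hc γ).symm ▸ γ.2.2.1
    · exact fun γ => (hc γ).symm ▸ γ.2.2.2
  rw [LinearIndependent.iff_fractionRing R K] at hli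
  have := hli.finite
  exact Set.toFinite _

theorem finite_range_valuation_inter_Ico_pow (K : Type*) [Field K] [Algebra R K]
    [IsFractionRing R K] [Algebra K K₁] [IsScalarTower R K K₁] [FiniteDimensional K K₁]
    (hπ : Irreducible π)
    (hR : ∀ r, v (algebraMap R K₁ r) ≤ 1) (hv : v (algebraMap R K₁ π) < 1)
    (hπ0 : algebraMap R K₁ π ≠ 0) (n : ℕ) :
    (Set.range v ∩ Set.Ico (v (algebraMap R K₁ π) ^ n) 1).Finite := by
  have hvπ : v (algebraMap R K₁ π) ≠ 0 := (Valuation.ne_zero_iff v).2 hπ0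
  induction n with
  | zero => simp
  | succ n ih =>
    refine ((finite_range_valuation_inter_Ico K hπ hR hv hπ0).union
      (ih.image (v (algebraMap R K₁ π) * ·))).subset ?_
    rintro _ ⟨⟨x, rfl⟩, hle, hlt⟩
    rcases le_or_gt (v (algebraMap R K₁ π)) (v x) with h | h
    · exact .inl ⟨⟨x, rfl⟩, h, hlt⟩
    · refine .inr ⟨v (x / algebraMap R K₁ π), ⟨⟨_, rfl⟩, ?_, ?_⟩, ?_⟩ <;>
        rw [map_div₀]
      · rwa [le_div_iff₀ (zero_lt_iff.2 hvπ), ← pow_succ]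
      · exact (div_lt_one₀ (zero_lt_iff.2 hvπ)).2 h
      · exact mul_div_cancel₀ _ hvπ

theorem exists_valuation_pow_le (K : Type*) [Field K] [Algebra R K]
    [IsFractionRing R K] [Algebra K K₁] [IsScalarTower R K K₁] [FiniteDimensional K K₁]
    (hπ : Irreducible π) {O : ValuationSubring K₁}
    (hR : ∀ r, algebraMap R K₁ r ∈ O) (hv : O.valuation (algebraMap R K₁ π) < 1) {a : O}
    (ha : a ≠ 0) : ∃ n : ℕ, O.valuation (algebraMap R K₁ π) ^ n ≤ O.valuation a := by
  let : Algebra R O := ((algebraMap R K₁).codRestrict O.toSubring hR).toAlgebra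
  have : IsScalarTower R O K₁ := .of_algebraMap_eq fun _ => rfl
  have halg : IsAlgebraic R a := (isAlgebraic_algebraMap_iff (A := K₁) Subtype.val_injective).1
    ((IsFractionRing.isAlgebraic_iff R K K₁).2 (.of_finite K _))
  obtain ⟨r, hr, s, hs⟩ := halg.exists_nonzero_dvd (mem_nonZeroDivisors_of_ne_zero ha)
  obtain ⟨n, u, hu, rfl⟩ := WfDvdMonoid.max_power_factor hr hπ
  have hval : O.valuation (algebraMap R K₁ (π ^ n * u)) = O.valuation (a * s : O) :=
    congrArg (fun x : O => O.valuation (x : K₁)) hs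
  refine ⟨n, ?_⟩
  rw [map_mul, map_mul, valuation_algebraMap_eq_one hπ
    (fun r => (O.valuation_le_one_iff _).2 (hR r)) hv hu, mul_one, map_pow, map_pow] at hval
  rw [hval, Subring.coe_mul, map_mul]
  exact mul_le_of_le_one_right' ((O.valuation_le_one_iff _).2 s.2)

theorem valuation_lt_of_dvdNotUnit {L : Type*} [Field L] {O : ValuationSubring L} {a b : O}
    (h : DvdNotUnit a b) (hb : b ≠ 0) : O.valuation b < O.valuation a := by
  obtain ⟨ha, x, hx, rfl⟩ := h
  rw [Subring.coe_mul, map_mul]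
  refine mul_lt_of_lt_one_right (zero_lt_iff.2 ?_) ((O.valuation_lt_one_iff x).1 hx)
  exact (Valuation.ne_zero_iff _).2 fun h => ha (Subtype.ext h)

-- In a descending chain for strict divisibility all values lie in an interval `[v π ^ n, 1)`,
-- which contains only finitely many of them.
theorem wfDvdMonoid_of_finiteDimensional (K : Type*) [Field K] [Algebra R K]
    [IsFractionRing R K] [Algebra K K₁] [IsScalarTower R K K₁] [FiniteDimensional K K₁]
    (hπ : Irreducible π) {O : ValuationSubring K₁}
    (hR : ∀ r, algebraMap R K₁ r ∈ O) (hv : O.valuation (algebraMap R K₁ π) < 1)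
    (hπ0 : algebraMap R K₁ π ≠ 0) : WfDvdMonoid O := by
  refine ⟨wellFounded_iff_isEmpty_descending_chain.2 ⟨fun ⟨f, hf⟩ => ?_⟩⟩
  have hmono : StrictMono fun n => O.valuation (f (n + 1)) := by
    refine strictMono_nat_of_lt_succ fun n => ?_
    exact valuation_lt_of_dvdNotUnit (hf (n + 1)) (hf n).1
  obtain ⟨n, hn⟩ := exists_valuation_pow_le K hπ hR hv (hf 0).1
  refine (Set.infinite_range_of_injective hmono.injective).mono ?_
    (finite_range_valuation_inter_Ico_pow K hπ
      (fun r => (O.valuation_le_one_iff _).2 (hR r)) hv hπ0 n)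
  rintro _ ⟨m, rfl⟩
  exact ⟨⟨_, rfl⟩, hn.trans (hmono.monotone (Nat.zero_le m)),
    (hmono m.lt_succ_self).trans_le ((O.valuation_le_one_iff _).2 (f (m + 2)).2)⟩

/-- A case of the Krull–Akizuki theorem, without separability assumption. -/
theorem isDiscreteValuationRing_of_finiteDimensional (K : Type*) [Field K] [Algebra R K]
    [IsFractionRing R K] [Algebra K K₁] [IsScalarTower R K K₁] [FiniteDimensional K K₁]
    (hπ : Irreducible π)
    (O : ValuationSubring K₁) (hR : ∀ r, algebraMap R K₁ r ∈ O)
    (hv : O.valuation (algebraMap R K₁ π) < 1) : IsDiscreteValuationRing O := by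
  have hπ0 : algebraMap R K₁ π ≠ 0 := by
    have := FaithfulSMul.trans R K K₁
    exact (map_ne_zero_iff _ (FaithfulSMul.algebraMap_injective R K₁)).2 hπ.ne_zero
  have hwf := wfDvdMonoid_of_finiteDimensional K hπ hR hv hπ0
  have hpir : IsPrincipalIdealRing O := ((IsBezout.TFAE (R := O)).out 3 1).1 hwf
  refine { hpir, (inferInstance : IsLocalRing O) with not_a_field' := fun hbot => ?_ }
  have hmem : (⟨_, hR π⟩ : O) ∈ IsLocalRing.maximalIdeal O := (O.valuation_lt_one_iff _).2 hv
  rw [hbot, Ideal.mem_bot] at hmem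
  exact hπ0 (congrArg Subtype.val hmem)

end KrullAkizuki

section Descent

theorem mapBivariate_smul {S T : Type*} [CommRing S] [CommRing T] (σ : S →+* T) (s : S)
    (H : S[X][Y]) : mapBivariate σ (s • H) = σ s • mapBivariate σ H := by
  ext
  simp [coeff_mapBivariate]

theorem exists_mapBivariate_eq {S T : Type*} [CommRing S] [CommRing T] (σ : S →+* T) {H : T[X][Y]}
    (h : ∀ i j, ∃ s, σ s = (H.coeff j).coeff i) : ∃ G, mapBivariate σ G = H :=
  (lifts_iff_coeff_lifts H).2 fun j => (lifts_iff_coeff_lifts _).2 fun i => h i j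

theorem finite_range_coeff_coeff {S : Type*} [CommRing S] (H : S[X][Y]) :
    (Set.range fun p : ℕ × ℕ => (H.coeff p.1).coeff p.2).Finite := by
  refine ((H.support.finite_toSet.biUnion fun j _ =>
    (H.coeff j).coeffs.finite_toSet).insert 0).subset ?_
  rintro _ ⟨⟨j, i⟩, rfl⟩
  by_cases h0 : (H.coeff j).coeff i = 0
  · exact .inl h0
  · refine .inr (Set.mem_iUnion₂.2 ⟨j, mem_support_iff.2 fun hj => h0 ?_, coeff_mem_coeffs h0⟩)
    rw [hj, coeff_zero]

theorem mapBivariate_mem_adjoin {S T : Type*} [CommRing S] [CommRing T] (σ : S →+* T)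
    {s : Set S[X][Y]} {H : S[X][Y]} (h : H ∈ Algebra.adjoin S s) :
    mapBivariate σ H ∈ Algebra.adjoin T (mapBivariate σ '' s) := by
  induction h using Algebra.adjoin_induction with
  | mem x hx => exact Algebra.subset_adjoin ⟨x, hx, rfl⟩
  | algebraMap r =>
    have hr : mapBivariate σ (algebraMap S S[X][Y] r) = algebraMap T T[X][Y] (σ r) := by
      simp [Polynomial.algebraMap_apply]
    rw [hr]
    exact Subalgebra.algebraMap_mem _ _
  | add x y _ _ hx hy => exact map_add (mapBivariate σ) x y ▸ add_mem hx hy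
  | mul x y _ _ hx hy => exact map_mul (mapBivariate σ) x y ▸ mul_mem hx hy

theorem adjoin_image_mapBivariate_eq_top {S T : Type*} [CommRing S] [CommRing T] (σ : S →+* T)
    {s : Set S[X][Y]} (h : Algebra.adjoin S s = ⊤) :
    Algebra.adjoin T (mapBivariate σ '' s) = ⊤ := by
  refine subalgebra_eq_top_of_mem ?_ ?_
  · simpa using mapBivariate_mem_adjoin σ (h ▸ Algebra.mem_top : C X ∈ Algebra.adjoin S s)
  · simpa using mapBivariate_mem_adjoin σ (h ▸ Algebra.mem_top : Y ∈ Algebra.adjoin S s)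

theorem adjoin_mapBivariate_eq_top {S T : Type*} [CommRing S] [CommRing T] (σ : S →+* T)
    {a b : S[X][Y]} (h : Algebra.adjoin S {a, b} = ⊤) :
    Algebra.adjoin T {mapBivariate σ a, mapBivariate σ b} = ⊤ := by
  simpa only [Set.image_pair] using adjoin_image_mapBivariate_eq_top σ h

theorem exists_intermediateField_mapBivariate_eq (K : Type*) {L : Type*} [Field K] [Field L]
    [Algebra K L] [Algebra.IsAlgebraic K L] {s : Set L[X][Y]} (hs : s.Finite) :
    ∃ E : IntermediateField K L, FiniteDimensional K E ∧
      ∀ H ∈ s, ∃ G, mapBivariate (algebraMap E L) G = H := by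
  let c : Set L := ⋃ H ∈ s, Set.range fun p : ℕ × ℕ => (H.coeff p.1).coeff p.2
  have : Finite c := hs.biUnion fun H _ => finite_range_coeff_coeff H
  refine ⟨IntermediateField.adjoin K c, IntermediateField.finiteDimensional_adjoin
    fun x _ => (Algebra.IsAlgebraic.isAlgebraic x).isIntegral, fun H hH =>
    exists_mapBivariate_eq _ fun i j => ⟨⟨_, ?_⟩, rfl⟩⟩
  exact IntermediateField.subset_adjoin _ _ (Set.mem_iUnion₂.2 ⟨H, hH, (j, i), rfl⟩)

theorem IsCoordinatePair.exists_intermediateField (K : Type*) {L : Type*} [Field K] [Field L]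
    [Algebra K L] [Algebra.IsAlgebraic K L] {a b : L[X][Y]} (h : IsCoordinatePair a b) :
    ∃ E : IntermediateField K L, FiniteDimensional K E ∧ ∃ a' b' : E[X][Y],
      mapBivariate (algebraMap E L) a' = a ∧ mapBivariate (algebraMap E L) b' = b ∧
        IsCoordinatePair a' b' := by
  obtain ⟨S, hS⟩ := mem_adjoin_pair.1 (h ▸ Algebra.mem_top : C X ∈ Algebra.adjoin L {a, b})
  obtain ⟨T, hT⟩ := mem_adjoin_pair.1 (h ▸ Algebra.mem_top : Y ∈ Algebra.adjoin L {a, b})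
  obtain ⟨E, hE, hlift⟩ := exists_intermediateField_mapBivariate_eq K (Set.toFinite {a, b, S, T})
  obtain ⟨a', rfl⟩ := hlift a (by simp)
  obtain ⟨b', rfl⟩ := hlift b (by simp)
  obtain ⟨S', rfl⟩ := hlift S (by simp)
  obtain ⟨T', rfl⟩ := hlift T (by simp)
  have hinj := mapBivariate_injective (algebraMap E L).injective
  refine ⟨E, hE, a', b', rfl, rfl, subalgebra_eq_top_of_mem (mem_adjoin_pair.2 ⟨S', hinj ?_⟩)
    (mem_adjoin_pair.2 ⟨T', hinj ?_⟩)⟩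
  · simpa [mapBivariate_ev] using hS
  · simpa [mapBivariate_ev] using hT

/-- The homomorphism from the preimage of a valuation ring to that valuation ring. -/
def comapRingHom {E L : Type*} [Field E] [Field L] (V : ValuationSubring L) (f : E →+* L) :
    V.comap f →+* V := f.restrict _ _ fun _ hx => hx

theorem isLocalHom_comapRingHom {E L : Type*} [Field E] [Field L] (V : ValuationSubring L)
    (f : E →+* L) : IsLocalHom (comapRingHom V f) := by
  refine ⟨fun x hx => ?_⟩
  obtain ⟨u, hu⟩ := hx.exists_right_inv
  have hu' : f x * (u : L) = 1 := congrArg Subtype.val hu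
  have hx0 : (x : E) ≠ 0 := fun h => by simp [h] at hu'
  have hinv : (x : E)⁻¹ ∈ V.comap f := by
    rw [ValuationSubring.mem_comap, map_inv₀, inv_eq_of_mul_eq_one_right hu']
    exact u.2
  exact .of_mul_eq_one ⟨_, hinv⟩ (Subtype.ext (mul_inv_cancel₀ hx0))

variable {R L : Type*} (K : Type*) [CommRing R] [IsDomain R] [IsPrincipalIdealRing R] [Field K]
  [Algebra R K] [IsFractionRing R K] [Field L] [Algebra K L] [Algebra R L] [IsScalarTower R K L]
  {π : R}

theorem isDiscreteValuationRing_comap (hπ : Irreducible π) (V : ValuationSubring L)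
    (hR : ∀ r, algebraMap R L r ∈ V) (hv : V.valuation (algebraMap R L π) < 1)
    (E : IntermediateField K L) [FiniteDimensional K E] :
    IsDiscreteValuationRing (V.comap (algebraMap E L)) := by
  have := isLocalHom_comapRingHom V (algebraMap E L)
  have : IsScalarTower R E L := .of_algebraMap_eq fun _ => rfl
  have hE : ∀ r, algebraMap R E r ∈ V.comap (algebraMap E L) := fun r => by
    rw [ValuationSubring.mem_comap, ← IsScalarTower.algebraMap_apply]
    exact hR r
  refine isDiscreteValuationRing_of_finiteDimensional K hπ _ hE
    ((ValuationSubring.valuation_lt_one_iff _ ⟨_, hE π⟩).1 ?_)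
  rw [IsLocalRing.mem_maximalIdeal, ← map_mem_nonunits_iff (comapRingHom V (algebraMap E L)),
    ← IsLocalRing.mem_maximalIdeal, ValuationSubring.valuation_lt_one_iff]
  exact hv

-- The coefficients involved generate a finite extension of `K`, on which `V` induces a discrete
-- valuation ring.
theorem adjoin_eq_top_or_exists_ev_smul_of_isAlgebraic [Algebra.IsAlgebraic K L]
    (hπ : Irreducible π) (V : ValuationSubring L) (hR : ∀ r, algebraMap R L r ∈ V)
    (hv : V.valuation (algebraMap R L π) < 1) {f g : V[X][Y]}
    (h : IsCoordinatePair (mapBivariate (algebraMap V L) f) (mapBivariate (algebraMap V L) g)) :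
    Algebra.adjoin V {f, g} = ⊤ ∨ ∃ ϖ ∈ IsLocalRing.maximalIdeal V, ∃ x₁ y₁ α β : V[X][Y],
      Algebra.adjoin V {α, β} = ⊤ ∧ f = ev (ϖ • x₁) y₁ α ∧ g = ev (ϖ • x₁) y₁ β := by
  obtain ⟨E, hE, a, b, ha, hb, hab⟩ := h.exists_intermediateField K
  let O := V.comap (algebraMap E L)
  let σ : O →+* V := comapRingHom V (algebraMap E L)
  have : IsLocalHom σ := isLocalHom_comapRingHom V (algebraMap E L)
  have : IsDiscreteValuationRing O := isDiscreteValuationRing_comap K hπ V hR hv E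
  have hlift : ∀ {H : V[X][Y]} {c : E[X][Y]},
      mapBivariate (algebraMap E L) c = mapBivariate (algebraMap V L) H →
      ∃ G : O[X][Y], mapBivariate σ G = H ∧ mapBivariate (algebraMap O E) G = c := by
    intro H c hc
    have hcoeff : ∀ i j, algebraMap E L ((c.coeff j).coeff i) ∈ V := fun i j => by
      rw [← coeff_mapBivariate, hc, coeff_mapBivariate]
      exact ((H.coeff j).coeff i).2
    obtain ⟨G, hG⟩ := exists_mapBivariate_eq (algebraMap O E) (H := c) fun i j =>
      ⟨⟨(c.coeff j).coeff i, hcoeff i j⟩, rfl⟩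
    refine ⟨G, mapBivariate_injective (σ := algebraMap V L) Subtype.val_injective ?_, hG⟩
    rw [← hc, ← hG, mapBivariate_mapBivariate, mapBivariate_mapBivariate]
    rfl
  obtain ⟨f, rfl, rfl⟩ := hlift ha
  obtain ⟨g, rfl, rfl⟩ := hlift hb
  obtain ⟨ϖ, hϖ⟩ := IsDiscreteValuationRing.exists_irreducible O
  rcases adjoin_eq_top_or_exists_ev_smul E hϖ hab with h | ⟨x₁, y₁, α, β, hαβ, rfl, rfl⟩
  · exact .inl (adjoin_mapBivariate_eq_top σ h)
  · refine .inr ⟨σ ϖ, (map_mem_nonunits_iff σ ϖ).2 hϖ.not_isUnit, mapBivariate σ x₁,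
      mapBivariate σ y₁, mapBivariate σ α, mapBivariate σ β,
      adjoin_mapBivariate_eq_top σ hαβ, ?_, ?_⟩ <;>
      rw [mapBivariate_ev, mapBivariate_smul]

end Descent

section Reduction

/-- Finitely many steps `w ↦ w - c uⁿ`, and the same with `u` and `w` exchanged, turn one of the
polynomials `u, w` into a constant. -/
inductive ReducesToConst {k : Type*} [Field k] : k[X][Y] → k[X][Y] → Prop
  | const (c : k) (w : k[X][Y]) : ReducesToConst (C (C c)) w
  | swap {u w : k[X][Y]} : ReducesToConst u w → ReducesToConst w u
  | sub {u w : k[X][Y]} (c : k) (n : ℕ) : ReducesToConst u (w - c • u ^ n) → ReducesToConst u w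

variable {k κ : Type*} [Field k] [Field κ]

/-- The leading coefficient of the leading coefficient of a bivariate polynomial. The constants to
be used in `ReducesToConst.sub` are quotients of its values. -/
noncomputable def leadingCoeff₂ {S : Type*} [CommRing S] (H : S[X][Y]) : S :=
  H.leadingCoeff.leadingCoeff

theorem leadingCoeff₂_mapBivariate (σ : k →+* κ) (u : k[X][Y]) :
    leadingCoeff₂ (mapBivariate σ u) = σ (leadingCoeff₂ u) := by
  rw [leadingCoeff₂, leadingCoeff₂, mapBivariate, coe_mapRingHom, leadingCoeff_map_of_injective
    (Polynomial.map_injective σ σ.injective), coe_mapRingHom, leadingCoeff_map]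

theorem leadingCoeff₂_aeval {G : κ[X][Y]} (hG : ∀ c, G ≠ C (C c)) (p : κ[X]) :
    leadingCoeff₂ (aeval G p) = p.leadingCoeff * leadingCoeff₂ G ^ p.natDegree := by
  by_cases hd : G.natDegree = 0
  · obtain ⟨g, rfl⟩ : ∃ g, G = C g := ⟨_, eq_C_of_natDegree_eq_zero hd⟩
    have hg : g.natDegree ≠ 0 := fun h => hG (g.coeff 0) (by rw [← eq_C_of_natDegree_eq_zero h])
    rw [aeval_C_eq_C_comp, leadingCoeff₂, leadingCoeff₂, leadingCoeff_C, leadingCoeff_C,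
      leadingCoeff_comp hg]
  · have hcomp : aeval G p = (p.map (algebraMap κ κ[X])).comp G := by
      rw [comp, eval₂_map, aeval_def]
      rfl
    rw [hcomp, leadingCoeff₂, leadingCoeff_comp hd, leadingCoeff_map, natDegree_map,
      leadingCoeff_mul, leadingCoeff_pow, leadingCoeff₂, algebraMap_eq, leadingCoeff_C]

theorem ev_zero_left (G H : κ[X][Y]) :
    ev (0 : κ[X][Y]) G H = aeval G (H.map (evalRingHom 0)) := by
  have h : (ev (0 : κ[X][Y]) G).toRingHom =
      (aeval G).toRingHom.comp (mapRingHom (evalRingHom (0 : κ))) := by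
    ext <;> simp
  exact DFunLike.congr_fun h H

theorem leadingCoeff₂_ev_zero_left {G α : κ[X][Y]} (hG : ∀ c, G ≠ C (C c)) {a : κ} (ha : a ≠ 0)
    (hα : α.leadingCoeff = C a) :
    leadingCoeff₂ (ev 0 G α) = a * leadingCoeff₂ G ^ α.natDegree := by
  have heval : evalRingHom (0 : κ) α.leadingCoeff = a := by simp [hα]
  have h0 : evalRingHom (0 : κ) α.leadingCoeff ≠ 0 := by rwa [heval]
  rw [ev_zero_left, leadingCoeff₂_aeval hG, leadingCoeff_map_of_leadingCoeff_ne_zero _ h0,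
    natDegree_map_of_leadingCoeff_ne_zero _ h0, heval]

theorem ReducesToConst.of_mapBivariate_eq_C_C (σ : k →+* κ) {u : k[X][Y]} {c : κ}
    (h : mapBivariate σ u = C (C c)) (w : k[X][Y]) : ReducesToConst u w := by
  have hc : c = σ ((u.coeff 0).coeff 0) := by rw [← coeff_mapBivariate, h]; simp
  rw [mapBivariate_injective σ.injective (a₁ := u) (a₂ := C (C ((u.coeff 0).coeff 0)))
    (by rw [h, hc, mapBivariate_C, map_C])]
  exact .const _ _

-- `c` is the quotient of `leadingCoeff₂ w` by `leadingCoeff₂ u ^ n`, hence lies in `k`.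
theorem exists_eq_of_natDegree_sub_smul_pow_lt (σ : k →+* κ) {G α β : κ[X][Y]}
    (hG : ∀ c, G ≠ C (C c)) (h : Algebra.adjoin κ {α, β} = ⊤) {n : ℕ} {c : κ}
    (hα : 0 < α.natDegree) (hc : c ≠ 0) (hd : β.natDegree = n * α.natDegree)
    (hlt : (β - c • α ^ n).natDegree < β.natDegree) {u w : k[X][Y]}
    (hu : mapBivariate σ u = ev 0 G α) (hw : mapBivariate σ w = ev 0 G β) : ∃ d, σ d = c := by
  obtain ⟨a, ha, hla⟩ := exists_leadingCoeff_eq_C h hα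
  have hlb : β.leadingCoeff = C (c * a ^ n) := by
    rw [leadingCoeff_eq_of_natDegree_sub_lt hlt hd, hla, C_mul, C_pow]
  have hlu : σ (leadingCoeff₂ u) = a * leadingCoeff₂ G ^ α.natDegree := by
    rw [← leadingCoeff₂_mapBivariate, hu, leadingCoeff₂_ev_zero_left hG ha hla]
  have hlw : σ (leadingCoeff₂ w) = c * a ^ n * leadingCoeff₂ G ^ β.natDegree := by
    rw [← leadingCoeff₂_mapBivariate, hw,
      leadingCoeff₂_ev_zero_left hG (mul_ne_zero hc (pow_ne_zero n ha)) hlb]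
  have hG0 : leadingCoeff₂ G ≠ 0 := by
    intro h0
    rw [leadingCoeff₂, leadingCoeff_eq_zero, leadingCoeff_eq_zero] at h0
    exact hG 0 (by simpa using h0)
  refine ⟨leadingCoeff₂ w / leadingCoeff₂ u ^ n, ?_⟩
  rw [map_div₀, map_pow, hlu, hlw, hd]
  field_simp
  ring

-- The steps are those of the degree reduction of `(α, β)`, restricted to the line `x = 0`.
theorem ReducesToConst.of_mapBivariate_eq_ev_zero (σ : k →+* κ) {G α β : κ[X][Y]}
    (h : Algebra.adjoin κ {α, β} = ⊤) {u w : k[X][Y]} (hu : mapBivariate σ u = ev 0 G α)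
    (hw : mapBivariate σ w = ev 0 G β) : ReducesToConst u w := by
  by_cases hG : ∃ c, G = C (C c)
  · obtain ⟨c, rfl⟩ := hG
    refine .of_mapBivariate_eq_C_C σ (c := (α.map (evalRingHom 0)).eval c) ?_ w
    rw [hu, ev_zero_left]
    exact Polynomial.aeval_algebraMap_apply_eq_algebraMap_eval c _
  push Not at hG
  refine natDegree_induction (fun α β => ∀ u w : k[X][Y], mapBivariate σ u = ev 0 G α →
    mapBivariate σ w = ev 0 G β → ReducesToConst u w) (fun α β _ hα u w hu _ => ?_)
    (fun α β ih u w hu hw => (ih w u hw hu).swap)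
    (fun α β n c h hα hc hd hlt ih u w hu hw => ?_) h u w hu hw
  · obtain ⟨a, rfl⟩ : ∃ a, α = C a := ⟨_, eq_C_of_natDegree_eq_zero hα⟩
    rw [ev_zero_left, map_C, aeval_C] at hu
    exact .of_mapBivariate_eq_C_C σ hu w
  · obtain ⟨d, rfl⟩ := exists_eq_of_natDegree_sub_smul_pow_lt σ hG h hα hc hd hlt hu hw
    refine .sub d n (ih u _ hu ?_)
    rw [map_sub, mapBivariate_smul, map_pow, hu, hw, map_sub, map_smul, map_pow]

end Reduction

section Fibre

variable {R A S W : Type*} [CommRing R] [CommRing A] [Algebra R A] [CommRing S] [Algebra R S]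
  [CommRing W] [Algebra S W] [Algebra R W] [IsScalarTower R S W]

/-- The homomorphism from an `R`-algebra `A` to its base change `S ⊗[R] A`, where the latter is
identified with `W`. -/
def fibreMap (E : S ⊗[R] A ≃ₐ[S] W) : A →ₐ[R] W :=
  (E.restrictScalars R).toAlgHom.comp Algebra.TensorProduct.includeRight

theorem fibreMap_apply (E : S ⊗[R] A ≃ₐ[S] W) (a : A) : fibreMap E a = E (1 ⊗ₜ a) := rfl

theorem adjoin_range_fibreMap (E : S ⊗[R] A ≃ₐ[S] W) :
    Algebra.adjoin S (Set.range (fibreMap E)) = ⊤ := by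
  have h := Algebra.TensorProduct.adjoin_one_tmul_image_eq_top (A := S) (Set.univ : Set A)
    (Algebra.adjoin_univ R A)
  rw [Set.image_univ] at h
  have hrange : Set.range (fibreMap E) = E.toAlgHom '' Set.range fun a : A => (1 : S) ⊗ₜ[R] a := by
    rw [← Set.range_comp]
    rfl
  rw [hrange, ← AlgHom.map_adjoin, h, Algebra.map_top]
  exact AlgHom.range_eq_top _ |>.2 E.surjective

theorem exists_ringHom_fibreMap {T : Type*} [CommRing T] (E : S ⊗[R] A ≃ₐ[S] W) (f : S →+* T)
    (g : A →+* T) (hfg : ∀ r, f (algebraMap R S r) = g (algebraMap R A r)) :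
    ∃ ρ : W →+* T, (∀ s, ρ (algebraMap S W s) = f s) ∧ ∀ a, ρ (fibreMap E a) = g a := by
  let : Algebra R T := (g.comp (algebraMap R A)).toAlgebra
  let f' : S →ₐ[R] T := { f with commutes' := hfg }
  let g' : A →ₐ[R] T := { g with commutes' := fun _ => rfl }
  let h : S ⊗[R] A →ₐ[R] T := Algebra.TensorProduct.lift f' g' fun _ _ => Commute.all _ _
  refine ⟨h.toRingHom.comp E.symm.toAlgHom.toRingHom, fun s => ?_, fun a => ?_⟩
  · change h (E.symm (algebraMap S W s)) = f s
    rw [AlgEquiv.commutes, Algebra.TensorProduct.algebraMap_apply,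
      Algebra.TensorProduct.lift_tmul, map_one, mul_one]
    rfl
  · change h (E.symm (E (1 ⊗ₜ a))) = g a
    rw [AlgEquiv.symm_apply_apply, Algebra.TensorProduct.lift_tmul, map_one, one_mul]
    rfl

theorem fibreMap_injective [FaithfulSMul R S] [Module.Flat R A] (E : S ⊗[R] A ≃ₐ[S] W) :
    Function.Injective (fibreMap E) :=
  E.injective.comp (Algebra.TensorProduct.includeRight_injective
    (FaithfulSMul.algebraMap_injective R S))

theorem exists_smul_mem_range_fibreMap [IsDomain R] [IsFractionRing R S] (E : S ⊗[R] A ≃ₐ[S] W)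
    (w : W) : ∃ r : R, r ≠ 0 ∧ r • w ∈ (fibreMap E).range := by
  have : IsLocalizedModule (nonZeroDivisors R) (TensorProduct.mk R S A 1) :=
    (isLocalizedModule_iff_isBaseChange _ S _).2 (TensorProduct.isBaseChange R A S)
  obtain ⟨⟨a, r⟩, h⟩ := IsLocalizedModule.surj (nonZeroDivisors R) (TensorProduct.mk R S A 1)
    (E.symm w)
  refine ⟨r, nonZeroDivisors.coe_ne_zero r, a, ?_⟩
  have hE := congrArg (E.restrictScalars R) h
  rw [Submonoid.smul_def, map_smul] at hE
  simpa [fibreMap_apply] using hE.symm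

theorem exists_eq_smul_of_fibreMap_eq_zero (hs : Function.Surjective (algebraMap R S)) {π : R}
    (h0 : ∀ r, algebraMap R S r = 0 ↔ π ∣ r) (E : S ⊗[R] A ≃ₐ[S] W) {a : A}
    (ha : fibreMap E a = 0) : ∃ b, a = π • b := by
  have hexact : Function.Exact (π • (LinearMap.id : R →ₗ[R] R)) (Algebra.linearMap R S) :=
    fun r => (h0 r).trans ⟨fun ⟨s, hs⟩ => ⟨s, hs.symm⟩, fun ⟨s, hs⟩ => ⟨s, hs.symm⟩⟩
  have hzero : (Algebra.linearMap R S).rTensor A ((1 : R) ⊗ₜ a) = 0 := by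
    rw [LinearMap.rTensor_tmul, Algebra.linearMap_apply, map_one]
    exact E.injective (ha.trans (map_zero E).symm)
  obtain ⟨x, hx⟩ := (rTensor_exact A hexact hs _).1 hzero
  rw [LinearMap.rTensor_smul, LinearMap.rTensor_id] at hx
  exact ⟨TensorProduct.lid R A x, by simpa using (congrArg (TensorProduct.lid R A) hx).symm⟩

theorem dvd_of_algebraMap_eq_smul [Nontrivial W] {k : Type*} [Field k] [Algebra R k] [Algebra k W]
    [IsScalarTower R k W] {π : R} (h0 : ∀ r, algebraMap R k r = 0 ↔ π ∣ r)
    (E : k ⊗[R] A ≃ₐ[k] W) {r : R} {a : A} (h : algebraMap R A r = π • a) : π ∣ r := by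
  have hE := congrArg (fibreMap E) h
  rw [AlgHom.commutes, map_smul, IsScalarTower.algebraMap_apply R k W, Algebra.smul_def,
    IsScalarTower.algebraMap_apply R k W, (h0 π).2 dvd_rfl, map_zero, zero_mul] at hE
  exact (h0 r).1 ((map_eq_zero _).1 hE)

end Fibre

section Biderivation

variable {R W : Type*} [CommRing R] [CommRing W] [Algebra R W]

theorem biderivation_swap {D : W →ₗ[R] Derivation R W W} (hD : ∀ a, D a a = 0) (a b : W) :
    D a b = -D b a := by
  have h := hD (a + b)
  simp only [map_add, Derivation.add_apply, hD, zero_add, add_zero] at h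
  exact eq_neg_of_add_eq_zero_right h

theorem biderivation_sub_smul_pow {D : W →ₗ[R] Derivation R W W} (hD : ∀ a, D a a = 0) (a b : W)
    (c : R) (n : ℕ) : D a (b - c • a ^ n) = D a b := by
  rw [map_sub, Derivation.map_smul, Derivation.leibniz_pow, hD]
  simp

theorem biderivation_algebraMap_add_smul {D : W →ₗ[R] Derivation R W W} (hD : ∀ a, D a a = 0)
    (r c : R) (a b : W) : D (algebraMap R W r + c • a) b = c • D a b := by
  rw [biderivation_swap hD, map_add, Derivation.map_algebraMap, zero_add, Derivation.map_smul,
    biderivation_swap hD b a, smul_neg, neg_neg]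

theorem forall_smul_mem_of_forall_mem_generators {B : Subalgebra R W} {s : Set W}
    (hs : Algebra.adjoin R s = B) (d : Derivation R W W) (r : R) (h : ∀ b ∈ s, r • d b ∈ B)
    {b : W} (hb : b ∈ B) : r • d b ∈ B := by
  subst hs
  induction hb using Algebra.adjoin_induction with
  | mem x hx => exact h x hx
  | algebraMap t =>
    rw [Derivation.map_algebraMap, smul_zero]
    exact zero_mem _
  | add x y _ _ hx hy =>
    rw [map_add, smul_add]
    exact add_mem hx hy
  | mul x y hxB hyB hx hy =>
    rw [Derivation.leibniz, smul_add, smul_eq_mul, smul_eq_mul, ← mul_smul_comm, ← mul_smul_comm]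
    exact add_mem (mul_mem hxB hy) (mul_mem hyB hx)

theorem exists_smul_mem_of_finite [IsDomain R] {B : Subalgebra R W}
    (hden : ∀ w : W, ∃ r : R, r ≠ 0 ∧ r • w ∈ B) {t : Set W} (ht : t.Finite) :
    ∃ r : R, r ≠ 0 ∧ ∀ w ∈ t, r • w ∈ B := by
  induction t, ht using Set.Finite.induction_on with
  | empty => exact ⟨1, one_ne_zero, by simp⟩
  | @insert w t _ _ ih =>
    obtain ⟨r, hr, h⟩ := ih
    obtain ⟨r', hr', h'⟩ := hden w
    refine ⟨r * r', mul_ne_zero hr hr', ?_⟩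
    rintro x (rfl | hx)
    · exact mul_smul r r' x ▸ Subalgebra.smul_mem _ h' _
    · exact mul_comm r r' ▸ mul_smul r' r x ▸ Subalgebra.smul_mem _ (h x hx) _

theorem exists_smul_biderivation_mem [IsDomain R] {B : Subalgebra R W} (hB : B.FG)
    (hden : ∀ w : W, ∃ r : R, r ≠ 0 ∧ r • w ∈ B) {D : W →ₗ[R] Derivation R W W}
    (hD : ∀ a, D a a = 0) : ∃ r : R, r ≠ 0 ∧ ∀ a ∈ B, ∀ b ∈ B, r • D a b ∈ B := by
  obtain ⟨S, hS⟩ := hB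
  obtain ⟨r, hr, h⟩ := exists_smul_mem_of_finite hden
    (S.finite_toSet.image2 (fun a b => D a b) S.finite_toSet)
  refine ⟨r, hr, fun a ha b hb =>
    forall_smul_mem_of_forall_mem_generators hS (D a) r (fun b hb => ?_) hb⟩
  rw [biderivation_swap hD, smul_neg]
  exact neg_mem (forall_smul_mem_of_forall_mem_generators hS (D b) r
    (fun a ha => h _ ⟨b, hb, a, ha, rfl⟩) ha)

/-- The biderivation `d ∧ d'` given by `(a, b) ↦ d a * d' b - d' a * d b`. -/
def wedge (d d' : Derivation R W W) : W →ₗ[R] Derivation R W W where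
  toFun a := d a • d' - d' a • d
  map_add' a b := by
    rw [map_add, map_add, add_smul, add_smul]
    abel
  map_smul' r a := by
    simp only [Derivation.map_smul, smul_assoc, smul_sub, RingHom.id_apply]

theorem wedge_apply (d d' : Derivation R W W) (a b : W) :
    wedge d d' a b = d a * d' b - d' a * d b := rfl

end Biderivation

section Jacobian

variable (R K : Type*) [CommRing R] [CommRing K] [Algebra R K]

/-- The Jacobian determinant `(f, g) ↦ ∂(f, g) / ∂(x, y)` on `K[x, y]`, which is `R`-linear in
both arguments. -/
noncomputable def jacobian : K[X][Y] →ₗ[R] Derivation R K[X][Y] K[X][Y] :=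
  wedge
    (PolynomialModule.equivPolynomialSelf.compDer
      ((derivative' (R := K)).restrictScalars R).mapCoeffs)
    ((derivative' (R := K[X])).restrictScalars R)

theorem jacobian_self (f : K[X][Y]) : jacobian R K f f = 0 := by
  rw [jacobian, wedge_apply, mul_comm, sub_self]

theorem jacobian_X_Y : jacobian R K (C X) Y = 1 := by
  simp [jacobian, wedge_apply]

end Jacobian

section GenericCoordinatePair

variable {R A : Type*} [CommRing R] [CommRing A] [Algebra R A]

/-- A pair that generates the `R`-algebra `A` up to denominators in `R`. -/
def IsGenericCoordinatePair (R : Type*) {A : Type*} [CommRing R] [CommRing A] [Algebra R A]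
    (x y : A) : Prop :=
  ∀ a : A, ∃ r : R, r ≠ 0 ∧ r • a ∈ Algebra.adjoin R {x, y}

namespace IsGenericCoordinatePair

variable {x y : A}

theorem of_adjoin_eq_top [Nontrivial R] (h : Algebra.adjoin R {x, y} = ⊤) :
    IsGenericCoordinatePair R x y :=
  fun _ => ⟨1, one_ne_zero, h ▸ Algebra.mem_top⟩

theorem swap (h : IsGenericCoordinatePair R x y) : IsGenericCoordinatePair R y x := by
  rw [IsGenericCoordinatePair, Set.pair_comm]
  exact h

theorem sub_smul_pow (h : IsGenericCoordinatePair R x y) (c : R) (n : ℕ) :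
    IsGenericCoordinatePair R x (y - c • x ^ n) := by
  rw [IsGenericCoordinatePair, adjoin_pair_sub_smul_pow]
  exact h

theorem of_algebraMap_add_smul {l π : R}
    (h : IsGenericCoordinatePair R (algebraMap R A l + π • x) y) :
    IsGenericCoordinatePair R x y := by
  intro a
  obtain ⟨r, hr, hra⟩ := h a
  refine ⟨r, hr, Algebra.adjoin_le ?_ hra⟩
  rintro _ (rfl | rfl)
  · exact add_mem (Subalgebra.algebraMap_mem _ _)
      (Subalgebra.smul_mem _ (Algebra.subset_adjoin (by simp)) _)
  · exact Algebra.subset_adjoin (by simp)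

theorem isCoordinatePair {L : Type*} [Field L] [Algebra R L] [FaithfulSMul R L]
    (h : IsGenericCoordinatePair R x y) (i : A →ₐ[R] L[X][Y])
    (hi : Algebra.adjoin L (Set.range i) = ⊤) : IsCoordinatePair (i x) (i y) := by
  refine eq_top_iff.2 (hi ▸ Algebra.adjoin_le ?_)
  rintro _ ⟨a, rfl⟩
  obtain ⟨r, hr, hra⟩ := h a
  obtain ⟨H, hH⟩ := mem_adjoin_pair.1 hra
  have hr' : algebraMap R L r ≠ 0 := by simpa using hr
  have hmem : algebraMap R L r • i a ∈ Algebra.adjoin L {i x, i y} := by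
    rw [algebraMap_smul, ← map_smul, ← hH, map_ev, ← ev_mapBivariate (T := L)]
    exact mem_adjoin_pair.2 ⟨_, rfl⟩
  have hinv := Subalgebra.smul_mem _ hmem (algebraMap R L r)⁻¹
  rwa [smul_smul, inv_mul_cancel₀ hr', one_smul] at hinv

end IsGenericCoordinatePair

theorem exists_smul_mem_of_adjoin_eq_top {K W : Type*} [IsDomain R] [Field K] [Algebra R K]
    [IsFractionRing R K] [CommRing W] [Algebra K W] [Algebra R W] [IsScalarTower R K W]
    {B : Subalgebra R W} {s : Set W} (hs : Algebra.adjoin K s = ⊤)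
    (h : ∀ w ∈ s, ∃ r : R, r ≠ 0 ∧ r • w ∈ B) (w : W) : ∃ r : R, r ≠ 0 ∧ r • w ∈ B := by
  have hw : w ∈ Algebra.adjoin K s := hs ▸ Algebra.mem_top
  induction hw using Algebra.adjoin_induction with
  | mem x hx => exact h x hx
  | algebraMap c =>
    obtain ⟨⟨a, r⟩, hc⟩ := IsLocalization.surj (nonZeroDivisors R) c
    refine ⟨r, nonZeroDivisors.coe_ne_zero r, ?_⟩
    rw [Algebra.smul_def, IsScalarTower.algebraMap_apply R K W, ← map_mul, mul_comm, hc,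
      ← IsScalarTower.algebraMap_apply]
    exact Subalgebra.algebraMap_mem _ _
  | add u v _ _ hu hv =>
    obtain ⟨r, hr, hu⟩ := hu
    obtain ⟨t, ht, hv⟩ := hv
    refine ⟨r * t, mul_ne_zero hr ht, ?_⟩
    rw [smul_add, mul_smul r t v, mul_comm r t, mul_smul]
    exact add_mem (Subalgebra.smul_mem _ hu _) (Subalgebra.smul_mem _ hv _)
  | mul u v _ _ hu hv =>
    obtain ⟨r, hr, hu⟩ := hu
    obtain ⟨t, ht, hv⟩ := hv
    exact ⟨r * t, mul_ne_zero hr ht, smul_mul_smul_comm r u t v ▸ mul_mem hu hv⟩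

theorem exists_isGenericCoordinatePair {K : Type*} [IsDomain R] [Field K] [Algebra R K]
    [IsFractionRing R K] (i : A →ₐ[R] K[X][Y]) (hi : Function.Injective i)
    (hden : ∀ H, ∃ r : R, r ≠ 0 ∧ r • H ∈ i.range) :
    ∃ (x y : A) (r : R), r ≠ 0 ∧ IsGenericCoordinatePair R x y ∧
      jacobian R K (i x) (i y) = algebraMap R _ r := by
  obtain ⟨r₁, hr₁, x, hx⟩ := hden (C X)
  obtain ⟨r₂, hr₂, y, hy⟩ := hden Y
  replace hx : i x = r₁ • C X := hx
  replace hy : i y = r₂ • Y := hy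
  refine ⟨x, y, r₁ * r₂, mul_ne_zero hr₁ hr₂, fun a => ?_, ?_⟩
  · obtain ⟨r, hr, h⟩ := exists_smul_mem_of_adjoin_eq_top (R := R)
      (B := Algebra.adjoin R {i x, i y}) (isCoordinatePair_X_Y (K := K)) (by
        rintro _ (rfl | rfl)
        · exact ⟨r₁, hr₁, hx ▸ Algebra.subset_adjoin (by simp)⟩
        · exact ⟨r₂, hr₂, hy ▸ Algebra.subset_adjoin (by simp)⟩) (i a)
    obtain ⟨l, hl⟩ := mem_adjoin_pair.1 h
    exact ⟨r, hr, mem_adjoin_pair.2 ⟨l, hi (by rw [map_ev, hl, map_smul])⟩⟩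
  · rw [hx, hy, Derivation.map_smul, LinearMap.map_smul, Derivation.smul_apply, jacobian_X_Y,
      smul_smul, mul_comm, Algebra.smul_def, mul_one]

end GenericCoordinatePair

section Improvement

variable {R A W k : Type*} [CommRing R] [CommRing A] [Algebra R A] [CommRing W] [Algebra R W]
  [Field k] [Algebra R k] {π : R} {D : W →ₗ[R] Derivation R W W} {x y : A}

theorem exists_biderivation_eq_smul_of_fibreMap_eq_C_C (hD : ∀ a, D a a = 0) (i : A →ₐ[R] W)
    (hs : Function.Surjective (algebraMap R k)) (h0 : ∀ r, algebraMap R k r = 0 ↔ π ∣ r)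
    (E : k ⊗[R] A ≃ₐ[k] k[X][Y]) {c : k} (hx : fibreMap E x = C (C c))
    (h : IsGenericCoordinatePair R x y) :
    ∃ x₁ y₁, IsGenericCoordinatePair R x₁ y₁ ∧ D (i x) (i y) = π • D (i x₁) (i y₁) := by
  obtain ⟨l, rfl⟩ := hs c
  obtain ⟨x₁, hx₁⟩ := exists_eq_smul_of_fibreMap_eq_zero hs h0 E (a := x - algebraMap R A l)
    (by rw [map_sub, AlgHom.commutes, hx]; exact sub_self _)
  obtain rfl : x = algebraMap R A l + π • x₁ := by rw [← hx₁]; ring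
  refine ⟨x₁, y, h.of_algebraMap_add_smul, ?_⟩
  rw [map_add, AlgHom.commutes, map_smul, biderivation_algebraMap_add_smul hD]

theorem exists_biderivation_eq_smul_of_reducesToConst (hD : ∀ a, D a a = 0) (i : A →ₐ[R] W)
    (hs : Function.Surjective (algebraMap R k)) (h0 : ∀ r, algebraMap R k r = 0 ↔ π ∣ r)
    (E : k ⊗[R] A ≃ₐ[k] k[X][Y]) (hred : ReducesToConst (fibreMap E x) (fibreMap E y))
    (h : IsGenericCoordinatePair R x y) :
    ∃ x₁ y₁, IsGenericCoordinatePair R x₁ y₁ ∧ D (i x) (i y) = π • D (i x₁) (i y₁) := by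
  generalize hu : fibreMap E x = u at hred
  generalize hw : fibreMap E y = w at hred
  induction hred generalizing x y with
  | const c w => exact exists_biderivation_eq_smul_of_fibreMap_eq_C_C hD i hs h0 E hu h
  | swap _ ih =>
    obtain ⟨y₁, x₁, h₁, hD₁⟩ := ih h.swap hw hu
    exact ⟨x₁, y₁, h₁.swap, by
      rw [biderivation_swap hD, hD₁, biderivation_swap hD (i x₁), smul_neg]⟩
  | sub c n _ ih =>
    obtain ⟨c, rfl⟩ := hs c
    obtain ⟨x₁, y₁, h₁, hD₁⟩ := ih (h.sub_smul_pow c n) hu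
      (by rw [map_sub, map_smul, map_pow, hu, hw, algebraMap_smul])
    refine ⟨x₁, y₁, h₁, ?_⟩
    rw [← hD₁, map_sub, map_smul, map_pow, biderivation_sub_smul_pow hD]

end Improvement

section ImprovementStep

variable {R A : Type*} [CommRing R] [CommRing A] [Algebra R A] {π : R} {x y : A}

theorem IsGenericCoordinatePair.isCoordinatePair_mapBivariate {V L : Type*} [CommRing V]
    [Algebra R V] [Field L] [Algebra R L] [Algebra V L] [IsScalarTower R V L] [FaithfulSMul R L]
    (h : IsGenericCoordinatePair R x y) (E : V ⊗[R] A ≃ₐ[V] V[X][Y]) :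
    IsCoordinatePair (mapBivariate (algebraMap V L) (fibreMap E x))
      (mapBivariate (algebraMap V L) (fibreMap E y)) := by
  let i : A →ₐ[R] L[X][Y] :=
    { (mapBivariate (algebraMap V L)).comp (fibreMap E).toRingHom with
      commutes' := fun r => by
        simp [IsScalarTower.algebraMap_apply R V L, Polynomial.algebraMap_apply] }
  refine h.isCoordinatePair i ?_
  have hi : Set.range i = mapBivariate (algebraMap V L) '' Set.range (fibreMap E) := by
    rw [← Set.range_comp]
    rfl
  rw [hi]
  exact adjoin_image_mapBivariate_eq_top _ (adjoin_range_fibreMap E)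

theorem exists_eq_smul_of_ev_eq_smul {κ : Type*} [Field κ] {σ : R →+* κ}
    (hσ : ∀ r, σ r = 0 ↔ π ∣ r) (ψ : A →+* κ[X][Y])
    (hψ : ∀ r, ψ (algebraMap R A r) = algebraMap κ κ[X][Y] (σ r))
    (h : IsCoordinatePair (ψ x) (ψ y)) {l : R[X][Y]} {a : A} (hl : ev x y l = π • a) :
    ∃ m, l = π • m := by
  rw [← mapBivariate_eq_zero_iff hσ]
  refine h.ev_injective (O := κ) ?_
  rw [← ringHom_ev σ ψ hψ, hl, Algebra.smul_def, map_mul, hψ, (hσ π).2 dvd_rfl, map_zero,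
    zero_mul, map_zero]

theorem exists_eq_smul_of_adjoin_fibreMap_eq_top {V : Type*} [CommRing V] [IsLocalRing V]
    [Algebra R V] (hV : ∀ r, IsLocalRing.residue V (algebraMap R V r) = 0 ↔ π ∣ r)
    (E : V ⊗[R] A ≃ₐ[V] V[X][Y]) (h : Algebra.adjoin V {fibreMap E x, fibreMap E y} = ⊤)
    {l : R[X][Y]} {a : A} (hl : ev x y l = π • a) : ∃ m, l = π • m := by
  let σ := (IsLocalRing.residue V).comp (algebraMap R V)
  let ψ := (mapBivariate (IsLocalRing.residue V)).comp (fibreMap E).toRingHom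
  refine exists_eq_smul_of_ev_eq_smul (σ := σ) hV ψ (fun r => ?_)
    (adjoin_mapBivariate_eq_top (IsLocalRing.residue V) h) hl
  simp [σ, ψ, IsScalarTower.algebraMap_apply R V V[X][Y], Polynomial.algebraMap_apply]

theorem residue_algebraMap_eq_zero_iff [IsPrincipalIdealRing R] (hπ : Irreducible π) {L : Type*}
    [Field L] [Algebra R L] (V : ValuationSubring L) [Algebra R V] [IsScalarTower R V L]
    (hv : V.valuation (algebraMap R L π) < 1) (r : R) :
    IsLocalRing.residue V (algebraMap R V r) = 0 ↔ π ∣ r := by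
  have hR : ∀ r, V.valuation (algebraMap R L r) ≤ 1 := fun r => by
    rw [IsScalarTower.algebraMap_apply R V L]
    exact V.valuation_le_one _
  rw [IsLocalRing.residue_eq_zero_iff, V.valuation_lt_one_iff]
  change V.valuation (algebraMap V L (algebraMap R V r)) < 1 ↔ _
  rw [← IsScalarTower.algebraMap_apply]
  refine ⟨fun h => by_contra fun hr => h.ne (valuation_algebraMap_eq_one hπ hR hv hr), ?_⟩
  rintro ⟨s, rfl⟩
  rw [map_mul, map_mul]
  exact (mul_le_of_le_one_right' (hR s)).trans_lt hv

variable {k : Type*} [Field k] [Algebra R k]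

theorem reducesToConst_fibreMap {V : Type*} [CommRing V] [IsLocalRing V] [Algebra R V]
    (hs : Function.Surjective (algebraMap R k))
    (hV : ∀ r, algebraMap R k r = 0 → IsLocalRing.residue V (algebraMap R V r) = 0)
    (E : k ⊗[R] A ≃ₐ[k] k[X][Y]) (EV : V ⊗[R] A ≃ₐ[V] V[X][Y]) {ϖ : V}
    (hϖ : ϖ ∈ IsLocalRing.maximalIdeal V) {x₁ y₁ α β : V[X][Y]}
    (hαβ : Algebra.adjoin V {α, β} = ⊤) (hx : fibreMap EV x = ev (ϖ • x₁) y₁ α)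
    (hy : fibreMap EV y = ev (ϖ • x₁) y₁ β) :
    ReducesToConst (fibreMap E x) (fibreMap E y) := by
  let κ := IsLocalRing.ResidueField V
  let σ : k →+* κ := (algebraMap R k).liftOfSurjective hs
    ⟨(IsLocalRing.residue V).comp (algebraMap R V), hV⟩
  have hσ : ∀ r, σ (algebraMap R k r) = IsLocalRing.residue V (algebraMap R V r) :=
    RingHom.liftOfRightInverse_comp_apply _ _ _ _
  obtain ⟨ρ, hρV, hρA⟩ := exists_ringHom_fibreMap EV
    ((algebraMap κ κ[X][Y]).comp (IsLocalRing.residue V))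
    ((mapBivariate σ).comp (fibreMap E).toRingHom) fun r => by
      simp [κ, IsScalarTower.algebraMap_apply R k k[X][Y], Polynomial.algebraMap_apply, hσ]
  have hρx : ρ (ϖ • x₁) = 0 := by
    rw [Algebra.smul_def, map_mul, hρV, RingHom.comp_apply,
      (IsLocalRing.residue_eq_zero_iff ϖ).2 hϖ, map_zero, zero_mul]
  refine .of_mapBivariate_eq_ev_zero σ (G := ρ y₁)
    (adjoin_mapBivariate_eq_top (IsLocalRing.residue V) hαβ) ?_ ?_
  · rw [← hρx, ← ringHom_ev (IsLocalRing.residue V) ρ hρV, ← hx]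
    exact (hρA x).symm
  · rw [← hρx, ← ringHom_ev (IsLocalRing.residue V) ρ hρV, ← hy]
    exact (hρA y).symm

theorem exists_biderivation_eq_smul [IsDomain R] [IsPrincipalIdealRing R] (hπ : Irreducible π)
    {W : Type*} [CommRing W] [Algebra R W] {D : W →ₗ[R] Derivation R W W}
    (hD : ∀ a, D a a = 0) (i : A →ₐ[R] W) (K : Type*) [Field K] [Algebra R K]
    [IsFractionRing R K] {L : Type*} [Field L] [Algebra K L] [Algebra.IsAlgebraic K L]
    [Algebra R L] [IsScalarTower R K L] (V : ValuationSubring L) [Algebra R V]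
    [IsScalarTower R V L] (hv : V.valuation (algebraMap R L π) < 1)
    (EV : V ⊗[R] A ≃ₐ[V] V[X][Y]) (hs : Function.Surjective (algebraMap R k))
    (h0 : ∀ r, algebraMap R k r = 0 ↔ π ∣ r) (E : k ⊗[R] A ≃ₐ[k] k[X][Y])
    (h : IsGenericCoordinatePair R x y) {l : R[X][Y]} {a : A} (hl : ev x y l = π • a)
    (hl' : ¬ ∃ m, l = π • m) :
    ∃ x₁ y₁, IsGenericCoordinatePair R x₁ y₁ ∧ D (i x) (i y) = π • D (i x₁) (i y₁) := by
  have : FaithfulSMul R L := .trans R K L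
  have hR : ∀ r, algebraMap R L r ∈ V := fun r => by
    rw [IsScalarTower.algebraMap_apply R V L]
    exact (algebraMap R V r).2
  have hres := residue_algebraMap_eq_zero_iff hπ V hv
  rcases adjoin_eq_top_or_exists_ev_smul_of_isAlgebraic K hπ V hR hv
    (h.isCoordinatePair_mapBivariate EV) with htop | ⟨ϖ, hϖ, x₁, y₁, α, β, hαβ, hx, hy⟩
  · exact absurd (exists_eq_smul_of_adjoin_fibreMap_eq_top hres EV htop hl) hl'
  · exact exists_biderivation_eq_smul_of_reducesToConst hD i hs h0 E
      (reducesToConst_fibreMap hs (fun r hr => (hres r).2 ((h0 r).1 hr)) E EV hϖ hαβ hx hy) h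

end ImprovementStep

section Termination

variable {R A : Type*} [CommRing R] [IsDomain R] [IsPrincipalIdealRing R] [CommRing A]
  [Algebra R A] [Module.IsTorsionFree R A]

theorem IsGenericCoordinatePair.adjoin_eq_top {x y : A} (h : IsGenericCoordinatePair R x y)
    (hsat : ∀ (π : R) (l : R[X][Y]) (a : A), Irreducible π → ev x y l = π • a →
      ∃ m, l = π • m) : Algebra.adjoin R {x, y} = ⊤ := by
  refine eq_top_iff.2 fun a _ => ?_
  obtain ⟨r, hr, hra⟩ := h a
  induction r using WfDvdMonoid.induction_on_irreducible with
  | zero => exact absurd rfl hr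
  | unit u hu =>
    obtain ⟨u, rfl⟩ := hu
    have hinv := Subalgebra.smul_mem _ hra ((u⁻¹ : Rˣ) : R)
    rwa [smul_smul, Units.inv_mul, one_smul] at hinv
  | mul r π hr0 hπ ih =>
    obtain ⟨l, hl⟩ := mem_adjoin_pair.1 hra
    rw [mul_smul] at hl
    obtain ⟨m, rfl⟩ := hsat π l _ hπ hl
    rw [map_smul] at hl
    exact ih hr0 (mem_adjoin_pair.2 ⟨m, smul_right_injective A hπ.ne_zero hl⟩)

theorem exists_adjoin_eq_top (hdvd : ∀ (π r : R) (a : A), Irreducible π →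
      algebraMap R A r = π • a → π ∣ r) (δ : A → A → A)
    (hδ : ∀ (π : R) (x y : A) (l : R[X][Y]) (a : A), Irreducible π →
      IsGenericCoordinatePair R x y → ev x y l = π • a → (¬ ∃ m, l = π • m) →
      ∃ x₁ y₁, IsGenericCoordinatePair R x₁ y₁ ∧ δ x y = π • δ x₁ y₁)
    {x y : A} (h : IsGenericCoordinatePair R x y) {r : R} (hr : r ≠ 0)
    (hxy : δ x y = algebraMap R A r) : ∃ x y : A, Algebra.adjoin R {x, y} = ⊤ := by
  induction r using WellFounded.induction
    (IsWellFounded.wf : WellFounded (DvdNotUnit (α := R))) generalizing x y with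
  | _ r ih =>
  by_cases hsat : ∀ (π : R) (l : R[X][Y]) (a : A), Irreducible π → ev x y l = π • a →
      ∃ m, l = π • m
  · exact ⟨x, y, h.adjoin_eq_top hsat⟩
  push Not at hsat
  obtain ⟨π, l, a, hπ, hl, hl'⟩ := hsat
  obtain ⟨x₁, y₁, h₁, hδ₁⟩ := hδ π x y l a hπ h hl (by simpa using hl')
  obtain ⟨s, rfl⟩ := hdvd π r _ hπ (hxy ▸ hδ₁)
  refine ih s ⟨right_ne_zero_of_mul hr, π, hπ.not_isUnit, mul_comm _ _⟩ h₁
    (right_ne_zero_of_mul hr) (smul_right_injective A hπ.ne_zero ?_)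
  change π • δ x₁ y₁ = π • algebraMap R A s
  rw [← hδ₁, hxy, map_mul, Algebra.smul_def]

end Termination

section Trivialization

variable {R A : Type*} [CommRing R] [CommRing A] [Algebra R A]

theorem exists_valuationSubring_of_not_isUnit {L : Type*} [Field L] [Algebra R L]
    [FaithfulSMul R L] {π : R} (hπ : ¬ IsUnit π) :
    ∃ V : ValuationSubring L, (∀ r, algebraMap R L r ∈ V) ∧
      V.valuation (algebraMap R L π) < 1 := by
  let I : Ideal (algebraMap R L).range := Ideal.span {(algebraMap R L).rangeRestrict π}
  have hI : I ≠ ⊤ := by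
    rw [Ne, Ideal.span_singleton_eq_top]
    rintro h
    obtain ⟨⟨_, s, rfl⟩, hs⟩ := h.exists_right_inv
    refine hπ (.of_mul_eq_one s (FaithfulSMul.algebraMap_injective R L ?_))
    rw [map_mul, map_one]
    exact congrArg Subtype.val hs
  obtain ⟨V, hV, hIV⟩ := Ideal.image_subset_nonunits_valuationSubring I hI
  exact ⟨V, fun r => hV ⟨r, rfl⟩, hIV ⟨_, Ideal.subset_span rfl, rfl⟩⟩

theorem nonempty_algHom_of_isIntegral [IsDomain R] (B L : Type*) [CommRing B] [Algebra R B]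
    [Algebra.IsIntegral R B] [FaithfulSMul R B] [Field L] [IsAlgClosed L] [Algebra R L]
    [FaithfulSMul R L] : Nonempty (B →ₐ[R] L) := by
  obtain ⟨Q, -, hQ, hQR⟩ := Ideal.exists_ideal_over_prime_of_isIntegral (⊥ : Ideal R) (⊥ : Ideal B)
    (Ideal.comap_bot_of_injective _ (FaithfulSMul.algebraMap_injective R B)).le
  have : Module.IsTorsionFree R (B ⧸ Q) := by
    have hinj : Function.Injective (algebraMap R (B ⧸ Q)) := by
      rw [IsScalarTower.algebraMap_eq R B, RingHom.injective_iff_ker_eq_bot, ← RingHom.comap_ker]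
      simpa using hQR
    have := (faithfulSMul_iff_algebraMap_injective R (B ⧸ Q)).2 hinj
    infer_instance
  exact ⟨(IsAlgClosed.lift : B ⧸ Q →ₐ[R] L).comp (Ideal.Quotient.mkₐ R Q)⟩

theorem nonempty_baseChange_algEquiv_bivariate {B V : Type*} [CommRing B] [CommRing V]
    [Algebra R B] [Algebra B V] [Algebra R V] [IsScalarTower R B V]
    (φ : B ⊗[R] A ≃ₐ[B] MvPolynomial (Fin 2) B) : Nonempty (V ⊗[R] A ≃ₐ[V] V[X][Y]) :=
  ⟨(Algebra.TensorProduct.cancelBaseChange R B V V A).symm.trans <|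
    (Algebra.TensorProduct.congr (AlgEquiv.refl : V ≃ₐ[V] V) φ).trans <|
      (MvPolynomial.algebraTensorAlgEquiv B V).trans (Bivariate.equivMvPolynomial V).symm⟩

-- A valuation ring is integrally closed, so every homomorphism from an integral `R`-algebra to
-- its field of fractions factors through it.
theorem exists_valuationSubring_baseChange_algEquiv [IsDomain R] {B : Type*} [CommRing B]
    [Algebra R B] [Algebra.IsIntegral R B] [FaithfulSMul R B]
    (φ : B ⊗[R] A ≃ₐ[B] MvPolynomial (Fin 2) B) (L : Type*) [Field L] [IsAlgClosed L]
    [Algebra R L] [FaithfulSMul R L] {π : R} (hπ : ¬ IsUnit π) :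
    ∃ (V : ValuationSubring L) (_ : Algebra R V) (_ : IsScalarTower R V L),
      V.valuation (algebraMap R L π) < 1 ∧ Nonempty (V ⊗[R] A ≃ₐ[V] V[X][Y]) := by
  obtain ⟨V, hR, hv⟩ := exists_valuationSubring_of_not_isUnit (L := L) hπ
  obtain ⟨f⟩ := nonempty_algHom_of_isIntegral (R := R) B L
  let : Algebra R V := ((algebraMap R L).codRestrict V.toSubring hR).toAlgebra
  have : IsScalarTower R V L := .of_algebraMap_eq fun _ => rfl
  have hf : ∀ b, f b ∈ V := fun b => by
    have hb : IsIntegral V (f b) := ((Algebra.IsIntegral.isIntegral (R := R) b).map f).tower_top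
    obtain ⟨c, hc⟩ := IsIntegrallyClosed.isIntegral_iff.1 hb
    exact hc ▸ c.2
  let : Algebra B V := ((f : B →+* L).codRestrict V.toSubring hf).toAlgebra
  have : IsScalarTower R B V := .of_algebraMap_eq fun r => Subtype.ext (f.commutes r).symm
  exact ⟨V, inferInstance, inferInstance, hv, nonempty_baseChange_algEquiv_bivariate φ⟩

end Trivialization

section Fibration

universe u

variable {R : Type u} {A : Type*} [CommRing R] [CommRing A] [Algebra R A]

theorem nonempty_residueField_algEquiv (hA : IsA2Fibration R A) (p : Ideal R) [p.IsPrime] :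
    Nonempty (p.ResidueField ⊗[R] A ≃ₐ[p.ResidueField] p.ResidueField[X][Y]) :=
  (hA.2.2 p).map fun φ => φ.trans (Bivariate.equivMvPolynomial _).symm

theorem exists_field_algEquiv_of_irreducible [IsPrincipalIdealRing R]
    (hA : IsA2Fibration R A) {π : R} (hπ : Irreducible π) :
    ∃ (k : Type u) (_ : Field k) (_ : Algebra R k), Function.Surjective (algebraMap R k) ∧
      (∀ r, algebraMap R k r = 0 ↔ π ∣ r) ∧ Nonempty (k ⊗[R] A ≃ₐ[k] k[X][Y]) := by
  have hmax : (Ideal.span {π}).IsMaximal := PrincipalIdealRing.isMaximal_of_irreducible hπ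
  refine ⟨(Ideal.span {π}).ResidueField, inferInstance, inferInstance,
    Ideal.algebraMap_residueField_surjective _, fun r => ?_, nonempty_residueField_algEquiv hA _⟩
  rw [Ideal.algebraMap_residueField_eq_zero, Ideal.mem_span_singleton]

theorem exists_apply_eq_smul_jacobian [IsDomain R] [Algebra.FiniteType R A] {K : Type*}
    [CommRing K] [Algebra R K] (i : A →ₐ[R] K[X][Y])
    (hden : ∀ H, ∃ r : R, r ≠ 0 ∧ r • H ∈ i.range) :
    ∃ s : R, s ≠ 0 ∧ ∃ δ : A → A → A, ∀ x y, i (δ x y) = s • jacobian R K (i x) (i y) := by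
  have hfg : i.range.FG := Algebra.map_top i ▸ Algebra.FiniteType.out.map i
  obtain ⟨s, hs, h⟩ := exists_smul_biderivation_mem hfg hden (jacobian_self R K)
  choose δ hδ using fun x y : A => h (i x) ⟨x, rfl⟩ (i y) ⟨y, rfl⟩
  exact ⟨s, hs, δ, hδ⟩

theorem exists_adjoin_eq_top_of_isA2Fibration [IsDomain R] [IsPrincipalIdealRing R]
    {B : Type*} [CommRing B] [Algebra R B] [Algebra.IsIntegral R B] [FaithfulSMul R B]
    (hA : IsA2Fibration R A) (φ : B ⊗[R] A ≃ₐ[B] MvPolynomial (Fin 2) B) :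
    ∃ x y : A, Algebra.adjoin R {x, y} = ⊤ := by
  have : Algebra.FiniteType R A := hA.1
  have : Module.Flat R A := hA.2.1
  let K := (⊥ : Ideal R).ResidueField
  let L := AlgebraicClosure K
  have : FaithfulSMul R L := .trans R K L
  obtain ⟨E₀⟩ := nonempty_residueField_algEquiv hA ⊥
  have hi := fibreMap_injective E₀
  have hden := exists_smul_mem_range_fibreMap E₀
  obtain ⟨s, hs, δ, hδ⟩ := exists_apply_eq_smul_jacobian (fibreMap E₀) hden
  obtain ⟨x, y, r, hr, hxy, hjac⟩ := exists_isGenericCoordinatePair (fibreMap E₀) hi hden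
  refine exists_adjoin_eq_top (fun π r a hπ h => ?_) δ (fun π x y l a hπ h hl hl' => ?_) hxy
    (mul_ne_zero hs hr) (hi ?_)
  · obtain ⟨k, _, _, -, h0, ⟨E⟩⟩ := exists_field_algEquiv_of_irreducible hA hπ
    exact dvd_of_algebraMap_eq_smul h0 E h
  · obtain ⟨k, _, _, hk, h0, ⟨E⟩⟩ := exists_field_algEquiv_of_irreducible hA hπ
    obtain ⟨V, _, _, hv, ⟨EV⟩⟩ :=
      exists_valuationSubring_baseChange_algEquiv φ L hπ.not_isUnit
    obtain ⟨x₁, y₁, h₁, hD⟩ := exists_biderivation_eq_smul hπ (jacobian_self R K) (fibreMap E₀) K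
      V hv EV hk h0 E h hl hl'
    exact ⟨x₁, y₁, h₁, hi (by rw [map_smul, hδ, hδ, hD, smul_comm])⟩
  · rw [hδ, hjac, AlgHom.commutes, map_mul, Algebra.smul_def]

theorem bijective_ev_of_adjoin_eq_top [Nontrivial R] {L : Type*} [Field L] [Algebra R L]
    [FaithfulSMul R L] (E : L ⊗[R] A ≃ₐ[L] L[X][Y]) {x y : A}
    (h : Algebra.adjoin R {x, y} = ⊤) : Function.Bijective (ev x y : R[X][Y] →ₐ[R] A) := by
  refine ⟨fun G H hGH => ?_, fun a => mem_adjoin_pair.1 (h ▸ Algebra.mem_top)⟩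
  refine ((IsGenericCoordinatePair.of_adjoin_eq_top h).isCoordinatePair (fibreMap E)
    (adjoin_range_fibreMap E)).ev_injective ?_
  rw [← map_ev, ← map_ev, hGH]

end Fibration

end AffinePlane

theorem stmt3_general (R : Type*) [CommRing R] [IsDomain R] [IsPrincipalIdealRing R]
    (B : Type*) [CommRing B] [Algebra R B] [Algebra.IsIntegral R B] [FaithfulSMul R B]
    (A : Type*) [CommRing A] [Algebra R A] (hA : IsA2Fibration R A)
    (hform : Nonempty (B ⊗[R] A ≃ₐ[B] MvPolynomial (Fin 2) B)) :
    Nonempty (A ≃ₐ[R] MvPolynomial (Fin 2) R) := by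
  obtain ⟨φ⟩ := hform
  obtain ⟨E⟩ := AffinePlane.nonempty_residueField_algEquiv hA ⊥
  obtain ⟨x, y, h⟩ := AffinePlane.exists_adjoin_eq_top_of_isA2Fibration hA φ
  exact ⟨(AlgEquiv.ofBijective _ (AffinePlane.bijective_ev_of_adjoin_eq_top E h)).symm.trans
    (Polynomial.Bivariate.equivMvPolynomial R)⟩

/-- **Theorem D.**  Let `k` be a field and `R` a PID containing `k`.  If `A` is an
`𝔸²`-fibration over `R` which is also an `𝔸²`-form over `R` with respect to `k`,
then `A` is a polynomial ring in two variables over `R`. -/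
theorem stmt3 (k : Type*) [Field k]
    (R : Type*) [CommRing R] [IsDomain R] [IsPrincipalIdealRing R] [Algebra k R]
    (A : Type*) [CommRing A] [Algebra R A] (hA : IsA2Fibration R A)
    (hform : Nonempty (((R ⊗[k] AlgebraicClosure k) ⊗[R] A) ≃ₐ[R ⊗[k] AlgebraicClosure k]
      MvPolynomial (Fin 2) (R ⊗[k] AlgebraicClosure k))) :
    Nonempty (A ≃ₐ[R] MvPolynomial (Fin 2) R) := by
  exact stmt3_general R (R ⊗[k] AlgebraicClosure k) A hA hform
end

section
/- Let C ⊆ D be integral domains and let t ∈ C be a nonzero element such that the localizations satisfy D[1/t] = C[1/t] (as subrings of the fraction field of D) and tD ∩ C = tC. Then C = D. -/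
/-!
Multiplication by a high enough power of `t` carries every element of `C[1/t]` into `C`, so each
`d ∈ D ⊆ D[1/t] = C[1/t]` has `t ^ n * d ∈ C` for some `n`. As `t` can be cancelled in `D`, the
condition `tD ∩ C = tC` says that `t` acts injectively on the quotient group `D / C`, so the `n`
factors `t` can be removed one at a time.
-/

set_option synthInstance.maxHeartbeats 1000000
set_option maxHeartbeats 1000000

open scoped Pointwise in
theorem exists_pow_mul_mem_of_mem_closure_union_singleton {R : Type*} [CommRing R] {S : Subring R}
    {t u z : R} (ht : t ∈ S) (htu : t * u ∈ S) (hz : z ∈ Subring.closure ((S : Set R) ∪ {u})) :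
    ∃ n : ℕ, t ^ n * z ∈ S := by
  have hz_adjoin : z ∈ Algebra.adjoin ℤ ((S : Set R) ∪ {u}) :=
    (Subring.closure_le (t := (Algebra.adjoin ℤ _).toSubring)).2 Algebra.subset_adjoin hz
  have hsmul : t • ((S : Set R) ∪ {u}) ⊆ subalgebraOfSubring S := by
    rintro _ ⟨x, hx | rfl, rfl⟩
    exacts [S.mul_mem ht hx, htu]
  obtain ⟨n, hn⟩ := Algebra.pow_smul_mem_of_smul_subset_of_mem_adjoin t _ _ hsmul hz_adjoin ht
  exact ⟨n, hn n le_rfl⟩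

theorem mem_of_mul_mem_of_inter_subset {M : Type*} [Mul M] {s : Set M} {t y : M}
    (ht : IsLeftRegular t) (hs : {x | ∃ y, x = t * y} ∩ s ⊆ {x | ∃ y ∈ s, x = t * y})
    (hy : t * y ∈ s) : y ∈ s := by
  obtain ⟨c, hc, hyc⟩ := hs ⟨⟨y, rfl⟩, hy⟩
  rwa [ht hyc]

theorem mem_of_pow_mul_mem {M : Type*} [Monoid M] {s : Set M} {t : M}
    (hs : ∀ y, t * y ∈ s → y ∈ s) (n : ℕ) {y : M} (hy : t ^ n * y ∈ s) : y ∈ s := by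
  induction n with
  | zero => rwa [pow_zero, one_mul] at hy
  | succ n ih => exact ih (hs _ (by rwa [pow_succ', mul_assoc] at hy))

theorem isLeftRegular_of_map {M N F : Type*} [Mul M] [Mul N] [FunLike F M N] [MulHomClass F M N]
    {f : F} (hf : Function.Injective f) {t : M} (ht : IsLeftRegular (f t)) : IsLeftRegular t :=
  fun x y hxy ↦ hf <| ht <|
    calc f t * f x = f (t * x) := (map_mul f t x).symm
      _ = f (t * y) := congrArg f hxy
      _ = f t * f y := map_mul f t y

theorem stmt6_general {D K : Type*} [CommRing D] [CommRing K] {f : D →+* K}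
    (hf : Function.Injective f) {C : Subring D} {t : D} (htC : t ∈ C) {u : K} (htu : f t * u = 1)
    (hloc : Subring.closure (f '' C ∪ {u}) = Subring.closure (Set.range f ∪ {u}))
    (hcap : {x : D | ∃ y : D, x = t * y} ∩ (C : Set D) = {x : D | ∃ y ∈ C, x = t * y}) :
    C = ⊤ := by
  have ht : IsLeftRegular t :=
    isLeftRegular_of_map hf (isLeftRegular_of_mul_eq_one (mul_comm (f t) u ▸ htu))
  have hcancel (y : D) : t * y ∈ C → y ∈ C := mem_of_mul_mem_of_inter_subset ht hcap.subset
  refine eq_top_iff.2 fun d _ ↦ ?_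
  have hd : f d ∈ Subring.closure ((C.map f : Set K) ∪ {u}) := by
    rw [Subring.coe_map, hloc]
    exact Subring.subset_closure (.inl ⟨d, rfl⟩)
  have hft : f t ∈ C.map f := ⟨t, htC, rfl⟩
  have hftu : f t * u ∈ C.map f := htu ▸ one_mem _
  obtain ⟨n, c, hc, hcd⟩ := exists_pow_mul_mem_of_mem_closure_union_singleton hft hftu hd
  rw [← map_pow, ← map_mul] at hcd
  exact mem_of_pow_mul_mem hcancel n (hf hcd ▸ hc)

/-- **Elementary lemma.**  Let `C ⊆ D` be integral domains and `t ∈ C` a nonzero element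
such that `D[1/t] = C[1/t]` (inside the fraction field of `D`) and `t·D ∩ C = t·C`.
Then `C = D`. -/
theorem stmt6 (D : Type*) [CommRing D] [IsDomain D] (C : Subring D)
    (t : D) (htC : t ∈ C) (ht : t ≠ 0)
    (hloc :
      Subring.closure
          ((algebraMap D (FractionRing D)) '' (C : Set D) ∪
            {(algebraMap D (FractionRing D) t)⁻¹}) =
        Subring.closure
          (Set.range (algebraMap D (FractionRing D)) ∪
            {(algebraMap D (FractionRing D) t)⁻¹}))
    (hcap : {x : D | ∃ y : D, x = t * y} ∩ (C : Set D) = {x : D | ∃ y ∈ C, x = t * y}) :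
    C = ⊤ :=
  stmt6_general (IsFractionRing.injective D (FractionRing D)) htC
    (mul_inv_cancel₀ (IsFractionRing.to_map_ne_zero_of_mem_nonZeroDivisors
      (mem_nonZeroDivisors_of_ne_zero ht))) hloc hcap
end

section
/- Let k be a field, R a ring containing k, and A an R-algebra. Suppose there exists a field extension L of k such that A ⊗_k L is isomorphic as an (R ⊗_k L)-algebra to a polynomial ring in n variables over R ⊗_k L. Then A is a finitely generated R-algebra, and there exists a finitely generated field extension L̃ of k contained in L such that A ⊗_k L̃ is isomorphic as an (R ⊗_k L̃)-algebra to a polynomial ring in n variables over R ⊗_k L̃. -/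
/-!
Polynomial rings being base changes of `R[X₁, …, Xₙ]`, the statement is about two `R`-algebras `A`
and `A'`, with `A'` of finite type, that become isomorphic over `R ⊗[k] L`. Finite type descends
from `A'` to `A` because `R ⊗[k] L` is free and nonzero, hence faithfully flat, over `R`.

For a subalgebra `B` of `L`, a `k`-linear retraction of `B → L` induces one of
`(R ⊗[k] B) ⊗[R] A → (R ⊗[k] L) ⊗[R] A`, so this map is injective although `A` need not be flat over
`R`; likewise for `A'`. The given isomorphism therefore restricts to one over `R ⊗[k] B` as soon as
it and its inverse send finitely many generators into the corresponding subalgebras. A tensor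
involves only finitely many elements of `L`, so this holds once `B` contains a suitable finite set.
-/

set_option synthInstance.maxHeartbeats 4000000
set_option maxHeartbeats 4000000

open TensorProduct

section Adjoin

variable {R P Q C : Type*} [CommSemiring R] [Semiring P] [Semiring Q] [Semiring C]
  [Algebra R P] [Algebra R Q] [Algebra R C]

theorem range_le_of_adjoin_eq_top (f : P →ₐ[R] C) {s : Set P} (hs : Algebra.adjoin R s = ⊤)
    {D : Subalgebra R C} (h : ∀ x ∈ s, f x ∈ D) : f.range ≤ D := by
  rw [← Algebra.map_top, ← hs, AlgHom.map_adjoin, Algebra.adjoin_le_iff]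
  exact Set.image_subset_iff.2 h

theorem nonempty_algEquiv_of_adjoin_eq_top {f : P →ₐ[R] C} {g : Q →ₐ[R] C}
    (hf : Function.Injective f) (hg : Function.Injective g)
    {s : Set P} (hs : Algebra.adjoin R s = ⊤) (hsg : ∀ x ∈ s, f x ∈ g.range)
    {t : Set Q} (ht : Algebra.adjoin R t = ⊤) (htf : ∀ y ∈ t, g y ∈ f.range) :
    Nonempty (P ≃ₐ[R] Q) := by
  have hrange : f.range = g.range :=
    le_antisymm (range_le_of_adjoin_eq_top f hs hsg) (range_le_of_adjoin_eq_top g ht htf)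
  exact ⟨(AlgEquiv.ofInjective f hf).trans
    ((Subalgebra.equivOfEq _ _ hrange).trans (AlgEquiv.ofInjective g hg).symm)⟩

end Adjoin

section ScalarExtension

variable {R : Type*} (S' S A : Type*) {A' : Type*} [CommSemiring R] [CommSemiring S']
  [CommSemiring S] [CommSemiring A] [CommSemiring A'] [Algebra R S'] [Algebra R S] [Algebra S' S]
  [IsScalarTower R S' S] [Algebra R A] [Algebra R A']

/-- The comparison map `S' ⊗[R] A → S ⊗[R] A` between the base changes of an `R`-algebra `A` along
`R → S' → S`. It need not be injective, even if `S' → S` is. -/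
noncomputable def scalarExtension : S' ⊗[R] A →ₐ[S'] S ⊗[R] A :=
  Algebra.TensorProduct.map (Algebra.ofId S' S) (AlgHom.id R A)

@[simp]
theorem scalarExtension_tmul (c : S') (a : A) :
    scalarExtension S' S A (c ⊗ₜ[R] a) = algebraMap S' S c ⊗ₜ a :=
  rfl

variable {S' S A}

theorem nonempty_tensorProduct_algEquiv_of_mem_range (e : S ⊗[R] A ≃ₐ[S] S ⊗[R] A')
    (hA : Function.Injective (scalarExtension (R := R) S' S A))
    (hA' : Function.Injective (scalarExtension (R := R) S' S A'))
    {s : Set A} (hs : Algebra.adjoin R s = ⊤)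
    (hse : ∀ a ∈ s, e (1 ⊗ₜ a) ∈ (scalarExtension S' S A').range)
    {t : Set A'} (ht : Algebra.adjoin R t = ⊤)
    (hte : ∀ a ∈ t, e.symm (1 ⊗ₜ a) ∈ (scalarExtension S' S A).range) :
    Nonempty (S' ⊗[R] A ≃ₐ[S'] S' ⊗[R] A') := by
  let f : S' ⊗[R] A →ₐ[S'] S ⊗[R] A' :=
    (e.restrictScalars S').toAlgHom.comp (scalarExtension S' S A)
  have hf : Function.Injective f := e.injective.comp hA
  refine nonempty_algEquiv_of_adjoin_eq_top hf hA'
    (Algebra.TensorProduct.adjoin_one_tmul_image_eq_top s hs) ?_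
    (Algebra.TensorProduct.adjoin_one_tmul_image_eq_top t ht) ?_
  · rintro _ ⟨a, ha, rfl⟩
    simpa [f] using hse a ha
  · rintro _ ⟨a, ha, rfl⟩
    obtain ⟨x, hx⟩ := hte a ha
    exact ⟨x, (e.eq_symm_apply.1 hx).trans (by simp)⟩

end ScalarExtension

section LargeSubalgebras

variable (k L : Type*) [CommSemiring k] [Semiring L] [Algebra k L]

/-- The filter of sufficiently large subalgebras of `L`: a property holds eventually along it if it
holds for all subalgebras containing some fixed finite subset of `L`. -/
def largeSubalgebras : Filter (Subalgebra k L) :=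
  ⨅ l : L, Filter.principal {B | l ∈ B}

variable {k L}

theorem eventually_largeSubalgebras {p : Subalgebra k L → Prop} :
    (∀ᶠ B in largeSubalgebras k L, p B) ↔
      ∃ T : Finset L, ∀ B : Subalgebra k L, (T : Set L) ⊆ B → p B := by
  refine (Filter.mem_iInf_finite _).trans ?_
  simp only [Filter.iInf_principal_finset, Filter.mem_principal, Set.subset_def, Set.mem_iInter]
  rfl

theorem eventually_mem_largeSubalgebras (l : L) : ∀ᶠ B in largeSubalgebras k L, l ∈ B :=
  Filter.mem_iInf_of_mem l (Filter.mem_principal_self _)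

end LargeSubalgebras

section Subalgebra

variable {k R A L : Type*} [CommRing k] [CommRing R] [CommRing A] [CommRing L]
  [Algebra k R] [Algebra R A] [Algebra k L]

/-- The `R ⊗[k] B`-algebra structure on `R ⊗[k] L` induced by the inclusion of a subalgebra `B` of
`L`. -/
noncomputable local instance tensorSubalgebraAlgebra (B : Subalgebra k L) :
    Algebra (R ⊗[k] B) (R ⊗[k] L) :=
  (Algebra.TensorProduct.map (AlgHom.id R R) B.val).toRingHom.toAlgebra

local instance isScalarTower_tensorSubalgebra (B : Subalgebra k L) :
    IsScalarTower R (R ⊗[k] B) (R ⊗[k] L) :=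
  .of_algebraMap_eq fun r ↦ ((Algebra.TensorProduct.map (AlgHom.id R R) B.val).commutes r).symm

theorem scalarExtension_injective_of_retraction {B : Subalgebra k L} {g : L →ₗ[k] B}
    (hg : g ∘ₗ B.val.toLinearMap = .id) :
    Function.Injective (scalarExtension (R := R) (R ⊗[k] B) (R ⊗[k] L) A) := by
  have hcomp : (g.baseChange R).rTensor A ∘ₗ (B.val.toLinearMap.baseChange R).rTensor A = .id := by
    rw [← LinearMap.rTensor_comp, ← LinearMap.baseChange_comp, hg, LinearMap.baseChange_id,
      LinearMap.rTensor_id]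
  change Function.Injective ((B.val.toLinearMap.baseChange R).rTensor A)
  exact Function.LeftInverse.injective (LinearMap.congr_fun hcomp)

theorem eventually_mem_range_algebraMap (z : R ⊗[k] L) :
    ∀ᶠ B : Subalgebra k L in largeSubalgebras k L,
      z ∈ (algebraMap (R ⊗[k] B) (R ⊗[k] L)).range := by
  induction z with
  | zero => exact .of_forall fun B ↦ zero_mem _
  | add x y hx hy => filter_upwards [hx, hy] with B using add_mem
  | tmul r l =>
    filter_upwards [eventually_mem_largeSubalgebras l] with B hl
    exact ⟨r ⊗ₜ ⟨l, hl⟩, rfl⟩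

theorem eventually_mem_range_scalarExtension (x : (R ⊗[k] L) ⊗[R] A) :
    ∀ᶠ B : Subalgebra k L in largeSubalgebras k L,
      x ∈ (scalarExtension (R ⊗[k] B) (R ⊗[k] L) A).range := by
  induction x with
  | zero => exact .of_forall fun B ↦ zero_mem _
  | add x y hx hy => filter_upwards [hx, hy] with B using add_mem
  | tmul z a =>
    filter_upwards [eventually_mem_range_algebraMap z] with B ⟨c, hc⟩
    exact ⟨c ⊗ₜ a, congrArg (· ⊗ₜ[R] a) hc⟩

end Subalgebra

section Field

variable {k R A A' L : Type*} [Field k] [CommRing R] [CommRing A] [CommRing A'] [CommRing L]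
  [Algebra k R] [Algebra R A] [Algebra R A'] [Algebra k L]

attribute [local instance] tensorSubalgebraAlgebra isScalarTower_tensorSubalgebra

theorem scalarExtension_subalgebra_injective (B : Subalgebra k L) :
    Function.Injective (scalarExtension (R := R) (R ⊗[k] B) (R ⊗[k] L) A) := by
  obtain ⟨g, hg⟩ := B.val.toLinearMap.exists_leftInverse_of_injective
    (LinearMap.ker_eq_bot.2 Subtype.val_injective)
  exact scalarExtension_injective_of_retraction hg

theorem eventually_nonempty_tensorProduct_algEquiv [Algebra.FiniteType R A]
    [Algebra.FiniteType R A'] (e : (R ⊗[k] L) ⊗[R] A ≃ₐ[R ⊗[k] L] (R ⊗[k] L) ⊗[R] A') :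
    ∀ᶠ B : Subalgebra k L in largeSubalgebras k L,
      Nonempty ((R ⊗[k] B) ⊗[R] A ≃ₐ[R ⊗[k] B] (R ⊗[k] B) ⊗[R] A') := by
  obtain ⟨s, hs⟩ := Algebra.FiniteType.out (R := R) (A := A)
  obtain ⟨t, ht⟩ := Algebra.FiniteType.out (R := R) (A := A')
  have hse : ∀ᶠ B : Subalgebra k L in largeSubalgebras k L, ∀ a ∈ s,
      e (1 ⊗ₜ a) ∈ (scalarExtension (R ⊗[k] B) (R ⊗[k] L) A').range :=
    s.eventually_all.2 fun a _ ↦ eventually_mem_range_scalarExtension (e (1 ⊗ₜ a))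
  have hte : ∀ᶠ B : Subalgebra k L in largeSubalgebras k L, ∀ a ∈ t,
      e.symm (1 ⊗ₜ a) ∈ (scalarExtension (R ⊗[k] B) (R ⊗[k] L) A).range :=
    t.eventually_all.2 fun a _ ↦ eventually_mem_range_scalarExtension (e.symm (1 ⊗ₜ a))
  filter_upwards [hse, hte] with B hsB htB
  exact nonempty_tensorProduct_algEquiv_of_mem_range e (scalarExtension_subalgebra_injective B)
    (scalarExtension_subalgebra_injective B) hs hsB ht htB

theorem stmt7_general [Nontrivial L] [Algebra.FiniteType R A']
    (e : (R ⊗[k] L) ⊗[R] A ≃ₐ[R ⊗[k] L] (R ⊗[k] L) ⊗[R] A') :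
    Algebra.FiniteType R A ∧
      ∃ T : Finset L, ∀ B : Subalgebra k L, (T : Set L) ⊆ B →
        Nonempty ((R ⊗[k] B) ⊗[R] A ≃ₐ[R ⊗[k] B] (R ⊗[k] B) ⊗[R] A') := by
  have : Algebra.FiniteType (R ⊗[k] L) ((R ⊗[k] L) ⊗[R] A) := .equiv inferInstance e.symm
  have hA : Algebra.FiniteType R A := .of_finiteType_tensorProduct_of_faithfullyFlat (R ⊗[k] L)
  exact ⟨hA, eventually_largeSubalgebras.1 (eventually_nonempty_tensorProduct_algEquiv e)⟩

end Field

/-- Let `k` be a field, `R` a ring containing `k`, and `A` an `R`-algebra.  Suppose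
`A ⊗_k L` is a polynomial ring in `n` variables over `R ⊗_k L` for some field extension
`L` of `k`.  Then `A` is a finitely generated `R`-algebra, and there is a finitely
generated subextension `L'` of `L/k` such that `A ⊗_k L'` is already a polynomial ring in
`n` variables over `R ⊗_k L'`. -/
theorem stmt7 (k : Type*) [Field k]
    (R : Type*) [CommRing R] [Algebra k R]
    (A : Type*) [CommRing A] [Algebra R A]
    (L : Type*) [Field L] [Algebra k L] (n : ℕ)
    (h : Nonempty (((R ⊗[k] L) ⊗[R] A) ≃ₐ[R ⊗[k] L] MvPolynomial (Fin n) (R ⊗[k] L))) :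
    Algebra.FiniteType R A ∧
      ∃ L' : IntermediateField k L, L'.FG ∧
        Nonempty (((R ⊗[k] L'.toSubalgebra) ⊗[R] A) ≃ₐ[R ⊗[k] L'.toSubalgebra]
          MvPolynomial (Fin n) (R ⊗[k] L'.toSubalgebra)) := by
  obtain ⟨e⟩ := h
  obtain ⟨hA, T, hT⟩ :=
    stmt7_general (e.trans (MvPolynomial.algebraTensorAlgEquiv R (R ⊗[k] L)).symm)
  obtain ⟨e'⟩ := hT (IntermediateField.adjoin k (T : Set L)).toSubalgebra
    (IntermediateField.subset_adjoin k _)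
  exact ⟨hA, _, IntermediateField.fg_adjoin_finset T,
    ⟨e'.trans (MvPolynomial.algebraTensorAlgEquiv R _)⟩⟩
end
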